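/- arXiv:1702.04969 — 3 statements merged into one kernel-verified Lean document; each statement's English description precedes it below -/
import Mathlib

section
/- Let n ≥ 3. There is a constant C = (2/(n-2))² such that for every smooth compactly supported function f : ℝⁿ → ℝ, ∫_{ℝⁿ} |f(x)|²/|x|² dx ≤ (2/(n-2))² ∫_{ℝⁿ} |∇f(x)|² dx. -/
open MeasureTheory

lemma hardy_pointwise (a n f D N r s : ℝ) (ha : 0 < a) (hn : n = 2 * a + 2) (hs : 0 < s)
    (hr : 0 ≤ r) (hrs : r ^ 2 ≤ s) (hN : 0 ≤ N) (hD : |D| ≤ N * r) :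
    a ^ 2 * (f ^ 2 / s) ≤
      N ^ 2 + a * (n * (f ^ 2 / s) + (2 * f * D / s - f ^ 2 * (2 * r ^ 2) / s ^ 2)) := by
  have h1 : D ^ 2 ≤ N ^ 2 * s := by
    have : D ^ 2 ≤ (N * r) ^ 2 := sq_le_sq' (by linarith [neg_abs_le D]) ((le_abs_self D).trans hD)
    nlinarith [sq_nonneg N]
  subst hn
  set t := f / s with ht
  have hf : f = t * s := by rw [ht]; field_simp
  have e1 : f ^ 2 / s = t ^ 2 * s := by rw [hf]; field_simp
  have e2 : 2 * f * D / s = 2 * t * D := by rw [hf]; field_simp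
  have e3 : f ^ 2 * (2 * r ^ 2) / s ^ 2 = 2 * t ^ 2 * r ^ 2 := by rw [hf]; field_simp
  rw [e1, e2, e3]
  have h2 : a * t ^ 2 * r ^ 2 ≤ a * t ^ 2 * s := by gcongr
  have h3 : 0 ≤ N ^ 2 + 2 * a * t * D + a ^ 2 * t ^ 2 * s := by
    have : 0 ≤ s * (N ^ 2 + 2 * a * t * D + a ^ 2 * t ^ 2 * s) := by
      nlinarith [sq_nonneg (D + a * t * s)]
    exact nonneg_of_mul_nonneg_right this hs
  nlinarith

lemma hardy_div {n : ℕ} (g : EuclideanSpace ℝ (Fin n) → ℝ) (hg : ContDiff ℝ 1 g)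
    (hs : HasCompactSupport g) :
    Integrable (fun x => (n : ℝ) * g x + fderiv ℝ g x x) ∧
    ∫ x, ((n : ℝ) * g x + fderiv ℝ g x x) = 0 := by
  let e : Fin n → EuclideanSpace ℝ (Fin n) := fun i => EuclideanSpace.single i 1
  let h : Fin n → EuclideanSpace ℝ (Fin n) → ℝ := fun i x => x i * g x
  have hh : ∀ i, ContDiff ℝ 1 (h i) := fun i => by
    have : ContDiff ℝ 1 (fun x : EuclideanSpace ℝ (Fin n) => x i) := by fun_prop
    exact this.mul hg
  have hhs : ∀ i, HasCompactSupport (h i) := fun i => hs.mul_left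
  have hc : ∀ i, Continuous (fun x => fderiv ℝ (h i) x (e i)) := fun i =>
    ((hh i).continuous_fderiv (by norm_num)).clm_apply continuous_const
  have hi : ∀ i, Integrable (fun x => fderiv ℝ (h i) x (e i)) := fun i =>
    (hc i).integrable_of_hasCompactSupport ((hhs i).fderiv_apply ℝ (e i))
  have hz : ∀ i, ∫ x, fderiv ℝ (h i) x (e i) = 0 := fun i => by
    have := integral_mul_fderiv_eq_neg_fderiv_mul_of_integrable (𝕜 := ℝ)
      (μ := (volume : Measure (EuclideanSpace ℝ (Fin n))))
      (f := fun _ => (1 : ℝ)) (g := h i) (v := e i) (by simp)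
      (by simpa using hi i)
      (by simpa using (hh i).continuous.integrable_of_hasCompactSupport (hhs i))
      (by intro x _; fun_prop) (by intro x _; exact ((hh i).differentiable (by norm_num)) x)
    simpa using this
  have key : (fun x => (n : ℝ) * g x + fderiv ℝ g x x) =
      fun x => ∑ i, fderiv ℝ (h i) x (e i) := by
    ext x
    have hd : ∀ i, fderiv ℝ (h i) x (e i) = x i * fderiv ℝ g x (e i) + g x := fun i => by
      have h1 : HasFDerivAt (fun x : EuclideanSpace ℝ (Fin n) => x i)
          (EuclideanSpace.proj i : EuclideanSpace ℝ (Fin n) →L[ℝ] ℝ) x :=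
        (EuclideanSpace.proj i : EuclideanSpace ℝ (Fin n) →L[ℝ] ℝ).hasFDerivAt
      have h2 := h1.mul ((hg.differentiable (by norm_num)) x).hasFDerivAt
      have h3 : fderiv ℝ (h i) x = _ := h2.fderiv
      rw [h3]
      simp [e]
    have hx : x = ∑ i, x i • e i := by
      ext j
      simp [e, Finset.sum_apply, Pi.single_apply]
    simp only [hd, Finset.sum_add_distrib]
    have : fderiv ℝ g x x = ∑ i, x i * fderiv ℝ g x (e i) := by
      conv_lhs => rw [hx, map_sum]
      simp [← hx]
    rw [this]; simp [add_comm]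
  rw [key]
  refine ⟨integrable_finsetSum _ fun i _ => hi i, ?_⟩
  rw [integral_finsetSum _ fun i _ => hi i]
  simp [hz]

lemma hardy_eps (n : ℕ) (hn : 3 ≤ n)
    (f : EuclideanSpace ℝ (Fin n) → ℝ)
    (hf : ContDiff ℝ 1 f) (hsupp : HasCompactSupport f) (ε : ℝ) (hε : 0 < ε) :
    ∫ x, f x ^ 2 / (‖x‖ ^ 2 + ε) ≤
      (2 / ((n : ℝ) - 2)) ^ 2 * ∫ x, ‖gradient f x‖ ^ 2 := by
  have hn' : (3 : ℝ) ≤ n := by exact_mod_cast hn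
  obtain ⟨a, ha⟩ : ∃ a : ℝ, a = ((n : ℝ) - 2) / 2 := ⟨_, rfl⟩
  have ha0 : 0 < a := by rw [ha]; linarith
  have hpos : ∀ x : EuclideanSpace ℝ (Fin n), 0 < ‖x‖ ^ 2 + ε := fun x => by positivity
  let g : EuclideanSpace ℝ (Fin n) → ℝ := fun x => f x ^ 2 / (‖x‖ ^ 2 + ε)
  have hg : ContDiff ℝ 1 g :=
    (hf.pow 2).div ((contDiff_norm_sq ℝ).add contDiff_const) fun x => (hpos x).ne'
  have hgs : HasCompactSupport g := by
    refine hsupp.mono' ?_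
    intro x hx
    apply subset_tsupport
    intro h0
    apply hx
    simp [g, h0]
  obtain ⟨hGi, hG0⟩ := hardy_div g hg hgs
  have hgi : Integrable g := hg.continuous.integrable_of_hasCompactSupport hgs
  have hng : ∀ x, ‖gradient f x‖ = ‖fderiv ℝ f x‖ := fun x => by simp [gradient]
  have hNi : Integrable (fun x => ‖gradient f x‖ ^ 2) := by
    simp only [hng]
    have hc : Continuous (fun x => ‖fderiv ℝ f x‖ ^ 2) :=
      (hf.continuous_fderiv (by norm_num)).norm.pow 2
    refine hc.integrable_of_hasCompactSupport ?_
    exact (hsupp.fderiv ℝ).comp_left (g := fun L => ‖L‖ ^ 2) (by simp)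
  have hpt : ∀ x, a ^ 2 * g x ≤ ‖gradient f x‖ ^ 2 + a * ((n : ℝ) * g x + fderiv ℝ g x x) := by
    intro x
    have hfd : fderiv ℝ g x x = 2 * f x * fderiv ℝ f x x / (‖x‖ ^ 2 + ε)
        - f x ^ 2 * (2 * ‖x‖ ^ 2) / (‖x‖ ^ 2 + ε) ^ 2 := by
      have h1 := ((hf.differentiable (by norm_num)) x).hasFDerivAt.pow 2
      have h2 := ((hasStrictFDerivAt_norm_sq x).hasFDerivAt).add_const ε
      have h3 := ((hg.differentiable (by norm_num)) x).hasFDerivAt.mul h2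
      have h4 : (g * fun x => ‖x‖ ^ 2 + ε) = fun x => f x ^ 2 := by
        ext y
        have := (hpos y).ne'
        simp only [g, Pi.mul_apply]
        field_simp
      rw [h4] at h3
      have h5 := congrArg (fun L => L x) (h3.unique h1)
      have hx := (hpos x).ne'
      simp [g] at h5
      have h6 : fderiv ℝ g x x = (2 * f x * fderiv ℝ f x x
          - f x ^ 2 / (‖x‖ ^ 2 + ε) * (2 * ‖x‖ ^ 2)) / (‖x‖ ^ 2 + ε) := by
        rw [eq_div_iff hx]
        simp only [g]
        linarith
      rw [h6]
      field_simp
    rw [hfd]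
    refine hardy_pointwise a n (f x) _ _ ‖x‖ _ ha0 (by rw [ha]; ring) (hpos x) (norm_nonneg _)
      (by linarith) (norm_nonneg _) ?_
    rw [hng]
    exact (fderiv ℝ f x).le_opNorm x
  have hint := integral_mono (hgi.const_mul (a ^ 2)) (hNi.add (hGi.const_mul a)) hpt
  simp only [Pi.add_apply] at hint
  rw [integral_add hNi (hGi.const_mul a), integral_const_mul, integral_const_mul, hG0] at hint
  have e : (2 / ((n : ℝ) - 2)) ^ 2 = (a ^ 2)⁻¹ := by
    rw [ha]; have : (n : ℝ) - 2 ≠ 0 := by linarith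
    field_simp
  rw [e, ← div_eq_inv_mul, le_div_iff₀ (by positivity)]
  change (∫ x, g x) * a ^ 2 ≤ _
  linarith

/-- Classical Hardy inequality on ℝⁿ, n ≥ 3, with constant (2/(n-2))². -/
theorem stmt_0 (n : ℕ) (hn : 3 ≤ n)
    (f : EuclideanSpace ℝ (Fin n) → ℝ)
    (hf : ContDiff ℝ (⊤ : ℕ∞) f) (hsupp : HasCompactSupport f) :
    ∫ x, |f x| ^ 2 / ‖x‖ ^ 2 ≤
      (2 / ((n : ℝ) - 2)) ^ 2 * ∫ x, ‖gradient f x‖ ^ 2 := by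
  by_cases hI : Integrable (fun x => |f x| ^ 2 / ‖x‖ ^ 2)
  swap
  · rw [integral_undef hI]
    exact mul_nonneg (sq_nonneg _) (integral_nonneg fun x => sq_nonneg _)
  have hf1 : ContDiff ℝ 1 f := hf.of_le (by exact_mod_cast le_top)
  have : Nonempty (Fin n) := ⟨⟨0, by omega⟩⟩
  have hae : ∀ᵐ x : EuclideanSpace ℝ (Fin n), x ≠ 0 := by
    simp [ae_iff]
  let u : ℕ → ℝ := fun k => 1 / ((k : ℝ) + 1)
  have hu : ∀ k, 0 < u k := fun k => by positivity
  have hlim : Filter.Tendsto (fun k => ∫ x, f x ^ 2 / (‖x‖ ^ 2 + u k)) Filter.atTop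
      (nhds (∫ x, |f x| ^ 2 / ‖x‖ ^ 2)) := by
    refine tendsto_integral_of_dominated_convergence _ (fun k => ?_) hI (fun k => ?_) ?_
    · refine Continuous.aestronglyMeasurable ?_
      have := hf1.continuous
      refine (this.pow 2).div (by fun_prop) fun x => ?_
      have := hu k
      positivity
    · filter_upwards [hae] with x hx
      have := hu k
      have hx' : 0 < ‖x‖ := norm_pos_iff.2 hx
      rw [Real.norm_of_nonneg (by positivity), sq_abs]
      gcongr
      linarith
    · filter_upwards [hae] with x hx
      have hx' : ‖x‖ ^ 2 ≠ 0 := by simpa using hx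
      simp only [sq_abs]
      have h0 : Filter.Tendsto u Filter.atTop (nhds 0) := tendsto_one_div_add_atTop_nhds_zero_nat
      have := (h0.const_add (‖x‖ ^ 2))
      rw [add_zero] at this
      exact tendsto_const_nhds.div this hx'
  exact le_of_tendsto' hlim fun k => hardy_eps n hn f hf1 hsupp (u k) (hu k)
end

section
/- Let n ≥ 3, let 0 ≤ s ≤ 2, and set 2*(s) = 2(n-s)/(n-2). There exists a constant c(n,s) > 0 such that for every smooth compactly supported function f : ℝⁿ → ℝ, (∫_{ℝⁿ} |f(x)|^{2*(s)}/|x|^{s} dx)^{1/2*(s)} ≤ c(n,s) (∫_{ℝⁿ} |∇f(x)|² dx)^{1/2}. -/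
open MeasureTheory

lemma hs_G_deriv {n : ℕ} (ε : ℝ) (hε : 0 < ε) (i : Fin n) (x : EuclideanSpace ℝ (Fin n)) :
    HasFDerivAt (fun y : EuclideanSpace ℝ (Fin n) => y i * (‖y‖ ^ 2 + ε)⁻¹)
      (x i • ((-((‖x‖ ^ 2 + ε) ^ 2)⁻¹) • (2 • innerSL ℝ x)) + (‖x‖ ^ 2 + ε)⁻¹ •
        (EuclideanSpace.proj i : EuclideanSpace ℝ (Fin n) →L[ℝ] ℝ)) x := by
  have hr : ‖x‖ ^ 2 + ε ≠ 0 := by positivity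
  have h1 : HasFDerivAt (fun y : EuclideanSpace ℝ (Fin n) => y i)
    (EuclideanSpace.proj i : EuclideanSpace ℝ (Fin n) →L[ℝ] ℝ) x :=
    (EuclideanSpace.proj i : EuclideanSpace ℝ (Fin n) →L[ℝ] ℝ).hasFDerivAt
  have h2 : HasFDerivAt (fun y : EuclideanSpace ℝ (Fin n) => ‖y‖ ^ 2 + ε) (2 • innerSL ℝ x) x :=
    (hasStrictFDerivAt_norm_sq x).hasFDerivAt.add_const ε
  have h3 := (hasDerivAt_inv hr).comp_hasFDerivAt x h2
  exact h1.mul h3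

lemma hs_hardy_reg {n : ℕ} (hn : 3 ≤ n) (ε : ℝ) (hε : 0 < ε)
    (f : EuclideanSpace ℝ (Fin n) → ℝ) (hf : ContDiff ℝ 1 f) (hc : HasCompactSupport f) :
    ∫ x, f x ^ 2 / (‖x‖ ^ 2 + ε) ≤ 4 * ∫ x, ‖fderiv ℝ f x‖ ^ 2 := by
  have hr : ∀ x : EuclideanSpace ℝ (Fin n), 0 < ‖x‖ ^ 2 + ε := fun x => by positivity
  have hr' : ∀ x : EuclideanSpace ℝ (Fin n), ‖x‖ ^ 2 + ε ≠ 0 := fun x => (hr x).ne'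
  have hfc := hf.continuous
  have hdc : Continuous (fderiv ℝ f) := hf.continuous_fderiv one_ne_zero
  have hcd : HasCompactSupport (fderiv ℝ f) := hc.fderiv ℝ
  have hrc : Continuous fun x : EuclideanSpace ℝ (Fin n) => (‖x‖ ^ 2 + ε)⁻¹ :=
    Continuous.inv₀ (by fun_prop) hr'
  have key : ∀ {h : EuclideanSpace ℝ (Fin n) → ℝ}, Continuous h → (∀ x, f x = 0 → h x = 0) →
      Integrable h := by
    intro h h1 h2
    refine h1.integrable_of_hasCompactSupport (hc.mono ?_)
    intro x hx hfx
    exact hx (h2 x hfx)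
  let D : Fin n → EuclideanSpace ℝ (Fin n) → ℝ := fun i x =>
    (‖x‖ ^ 2 + ε)⁻¹ - 2 * (x i) ^ 2 * ((‖x‖ ^ 2 + ε)⁻¹) ^ 2
  have hDc : ∀ i, Continuous (D i) := fun i => by fun_prop
  have hG : ∀ i x, fderiv ℝ (fun y : EuclideanSpace ℝ (Fin n) => y i * (‖y‖ ^ 2 + ε)⁻¹) x
      (EuclideanSpace.single i 1) = D i x := by
    intro i x
    rw [(hs_G_deriv ε hε i x).fderiv]
    have e : inner ℝ x (EuclideanSpace.single i (1 : ℝ)) = x i := by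
      rw [EuclideanSpace.inner_single_right]; simp
    simp [D, e]
    ring
  have hF : ∀ x (v : EuclideanSpace ℝ (Fin n)), fderiv ℝ (fun y => f y ^ 2) x v
      = 2 * f x * fderiv ℝ f x v := by
    intro x v
    have := ((hf.differentiable one_ne_zero x).hasFDerivAt.pow 2).fderiv
    rw [this]
    simp
  have i1 : ∀ i, Integrable fun x => f x ^ 2 * D i x := fun i => 
    key (by have := hDc i; fun_prop) (by intro x hx; simp [hx])
  have i2 : ∀ i, Integrable fun x => 2 * f x * fderiv ℝ f x (EuclideanSpace.single i 1) *
      (x i * (‖x‖ ^ 2 + ε)⁻¹) := fun i => 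
    key (by fun_prop) (by intro x hx; simp [hx])
  have ibp : ∀ i, ∫ x, (f x ^ 2 * D i x + 2 * f x * fderiv ℝ f x (EuclideanSpace.single i 1) *
      (x i * (‖x‖ ^ 2 + ε)⁻¹)) = 0 := by
    intro i
    have := integral_mul_fderiv_eq_neg_fderiv_mul_of_integrable (μ := volume)
      (f := fun y => f y ^ 2) (g := fun y : EuclideanSpace ℝ (Fin n) => y i * (‖y‖ ^ 2 + ε)⁻¹)
      (v := EuclideanSpace.single i 1)
      (by simpa only [hF] using i2 i) (by simpa only [hG] using i1 i)
      (key (by fun_prop) (by intro x hx; simp [hx]))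
      (fun x _ => (hf.differentiable one_ne_zero x).pow 2)
      (fun x _ => (hs_G_deriv ε hε i x).differentiableAt)
    simp only [hF, hG] at this
    rw [integral_add (i1 i) (i2 i), this]
    ring
  have hsum : ∫ x, ∑ i, (f x ^ 2 * D i x + 2 * f x * fderiv ℝ f x (EuclideanSpace.single i 1) *
      (x i * (‖x‖ ^ 2 + ε)⁻¹)) = 0 := by
    refine (integral_finsetSum _ (fun i _ => (i1 i).add (i2 i))).trans ?_
    exact Finset.sum_eq_zero fun i _ => ibp i
  have isum : Integrable fun x => ∑ i, (f x ^ 2 * D i x + 2 * f x *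
      fderiv ℝ f x (EuclideanSpace.single i 1) * (x i * (‖x‖ ^ 2 + ε)⁻¹)) :=
    integrable_finsetSum _ (fun i _ => (i1 i).add (i2 i))
  have iA : Integrable fun x => f x ^ 2 / (‖x‖ ^ 2 + ε) :=
    key (by simp only [div_eq_mul_inv]; fun_prop) (by intro x hx; simp [hx])
  have iB : Integrable fun x => ‖fderiv ℝ f x‖ ^ 2 := by
    refine Continuous.integrable_of_hasCompactSupport (by fun_prop) (hcd.mono ?_)
    intro x hx h0
    simp only [Function.mem_support] at hx
    exact hx (by rw [h0]; simp)
  have pw : ∀ x, f x ^ 2 / (‖x‖ ^ 2 + ε) * (1 / 2) - 2 * ‖fderiv ℝ f x‖ ^ 2 ≤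
      ∑ i, (f x ^ 2 * D i x + 2 * f x *
      fderiv ℝ f x (EuclideanSpace.single i 1) * (x i * (‖x‖ ^ 2 + ε)⁻¹)) := by
    intro x
    have e1 : ∑ i, (x i) ^ 2 = ‖x‖ ^ 2 := by
      rw [EuclideanSpace.norm_sq_eq]; simp
    have e2 : ∑ i, fderiv ℝ f x (EuclideanSpace.single i 1) * x i = fderiv ℝ f x x := by
      have := congrArg (fderiv ℝ f x) ((EuclideanSpace.basisFun (Fin n) ℝ).sum_repr x)
      rw [← this]
      simp [mul_comm]
    have e3 : ∑ i, (f x ^ 2 * D i x + 2 * f x *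
      fderiv ℝ f x (EuclideanSpace.single i 1) * (x i * (‖x‖ ^ 2 + ε)⁻¹)) =
      f x ^ 2 * (n * (‖x‖ ^ 2 + ε)⁻¹ - 2 * ‖x‖ ^ 2 * ((‖x‖ ^ 2 + ε)⁻¹) ^ 2) +
        2 * f x * (‖x‖ ^ 2 + ε)⁻¹ * fderiv ℝ f x x := by
      have e4 : ∀ i, f x ^ 2 * D i x + 2 * f x *
          fderiv ℝ f x (EuclideanSpace.single i 1) * (x i * (‖x‖ ^ 2 + ε)⁻¹) =
          f x ^ 2 * (‖x‖ ^ 2 + ε)⁻¹ - (f x ^ 2 * 2 * ((‖x‖ ^ 2 + ε)⁻¹) ^ 2) * (x i) ^ 2 +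
          (2 * f x * (‖x‖ ^ 2 + ε)⁻¹) * (fderiv ℝ f x (EuclideanSpace.single i 1) * x i) := by
        intro i
        simp only [D]
        ring
      simp only [e4, Finset.sum_add_distrib, Finset.sum_sub_distrib]
      rw [← Finset.mul_sum, ← Finset.mul_sum, ← Finset.mul_sum, e1, e2]
      simp
      ring
    rw [e3]
    have b1 : |fderiv ℝ f x x| ≤ ‖fderiv ℝ f x‖ * ‖x‖ := (fderiv ℝ f x).le_opNorm x
    set d := ‖fderiv ℝ f x‖
    set r := ‖x‖ ^ 2 + ε with hrdef
    have hrp : 0 < r := hr x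
    set q := r⁻¹ with hq
    have hqp : 0 < q := inv_pos.2 hrp
    have hqr : q * r = 1 := inv_mul_cancel₀ hrp.ne'
    have hx1 : ‖x‖ ^ 2 * q ≤ 1 := by rw [← hqr]; nlinarith
    have hn' : (3 : ℝ) ≤ n := by exact_mod_cast hn
    have c1 : f x ^ 2 * q ≤ f x ^ 2 * (n * q - 2 * ‖x‖ ^ 2 * q ^ 2) := by
      gcongr
      nlinarith
    have c2 : -(2 * |f x| * q * (d * ‖x‖)) ≤ 2 * f x * q * fderiv ℝ f x x := by
      have : |2 * f x * q * fderiv ℝ f x x| ≤ 2 * |f x| * q * (d * ‖x‖) := by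
        rw [abs_mul, abs_mul, abs_mul, abs_of_pos hqp, abs_two]
        gcongr
      exact (abs_le.1 this).1
    have c3 : 2 * |f x| * q * (d * ‖x‖) ≤ f x ^ 2 * q / 2 + 2 * (d ^ 2 * (‖x‖ ^ 2 * q)) := by
      rw [← sq_abs (f x)]
      nlinarith [mul_nonneg hqp.le (sq_nonneg (|f x| - 2 * (d * ‖x‖)))]
    have c4 : d ^ 2 * (‖x‖ ^ 2 * q) ≤ d ^ 2 := mul_le_of_le_one_right (sq_nonneg _) hx1
    rw [div_eq_mul_inv]
    linarith
  have := integral_mono ((iA.mul_const (1 / 2)).sub (iB.const_mul 2)) isum pw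
  rw [hsum] at this
  simp only [Pi.sub_apply] at this
  rw [integral_sub (iA.mul_const (1 / 2)) (iB.const_mul 2), integral_mul_const,
    integral_const_mul] at this
  linarith

lemma hs_hardy {n : ℕ} (hn : 3 ≤ n)
    (f : EuclideanSpace ℝ (Fin n) → ℝ) (hf : ContDiff ℝ 1 f) (hc : HasCompactSupport f) :
    ∫⁻ x, ENNReal.ofReal (f x ^ 2 / ‖x‖ ^ 2) ≤
      ENNReal.ofReal (4 * ∫ x, ‖fderiv ℝ f x‖ ^ 2) := by
  have hfc := hf.continuous
  have hε : ∀ k : ℕ, (0 : ℝ) < 1 / ((k : ℝ) + 1) := fun k => by positivity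
  have hcont : ∀ k : ℕ, Continuous fun x => f x ^ 2 / (‖x‖ ^ 2 + 1 / ((k : ℝ) + 1)) := by
    intro k
    exact Continuous.div (by fun_prop) (by fun_prop) (fun x => by have := hε k; positivity)
  calc ∫⁻ x, ENNReal.ofReal (f x ^ 2 / ‖x‖ ^ 2)
      ≤ ∫⁻ x, Filter.liminf (fun k : ℕ => ENNReal.ofReal
          (f x ^ 2 / (‖x‖ ^ 2 + 1 / ((k : ℝ) + 1)))) Filter.atTop := by
        refine lintegral_mono fun x => ?_
        rcases eq_or_ne x 0 with rfl | hx
        · simp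
        · have hx' : ‖x‖ ^ 2 + 0 ≠ 0 := by simpa using hx
          have t : Filter.Tendsto (fun k : ℕ => ENNReal.ofReal
            (f x ^ 2 / (‖x‖ ^ 2 + 1 / ((k : ℝ) + 1)))) Filter.atTop
              (nhds (ENNReal.ofReal (f x ^ 2 / (‖x‖ ^ 2 + 0)))) :=
            ENNReal.tendsto_ofReal (tendsto_const_nhds.div
              (tendsto_const_nhds.add tendsto_one_div_add_atTop_nhds_zero_nat) hx')
          rw [t.liminf_eq, add_zero]
    _ ≤ Filter.liminf (fun k : ℕ => ∫⁻ x, ENNReal.ofReal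
          (f x ^ 2 / (‖x‖ ^ 2 + 1 / ((k : ℝ) + 1)))) Filter.atTop :=
        lintegral_liminf_le fun k => (hcont k).measurable.ennreal_ofReal
    _ ≤ Filter.liminf (fun _ : ℕ => ENNReal.ofReal (4 * ∫ x, ‖fderiv ℝ f x‖ ^ 2))
          Filter.atTop := by
        refine Filter.liminf_le_liminf (Filter.Eventually.of_forall fun k => ?_)
        rw [← ofReal_integral_eq_lintegral_ofReal]
        · exact ENNReal.ofReal_le_ofReal (hs_hardy_reg hn _ (hε k) f hf hc)
        · refine (hcont k).integrable_of_hasCompactSupport (hc.mono ?_)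
          intro x hx hfx
          exact hx (by simp [hfx])
        · exact Filter.Eventually.of_forall fun x => by have := hε k; positivity
    _ = _ := by simp

lemma hs_sobolev {n : ℕ} (hn : 3 ≤ n) : ∃ C : ℝ, 0 ≤ C ∧
    ∀ (f : EuclideanSpace ℝ (Fin n) → ℝ), ContDiff ℝ 1 f → HasCompactSupport f →
    ∫⁻ x, ENNReal.ofReal (|f x| ^ (2 * (n : ℝ) / ((n : ℝ) - 2))) ≤
      ENNReal.ofReal (C * (∫ x, ‖fderiv ℝ f x‖ ^ 2) ^ ((n : ℝ) / ((n : ℝ) - 2))) := by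
  have hn' : (3 : ℝ) ≤ n := by exact_mod_cast hn
  have hn2 : (0 : ℝ) < (n : ℝ) - 2 := by linarith
  have hp0 : (0 : ℝ) < 2 * (n : ℝ) / ((n : ℝ) - 2) := by positivity
  let p' : NNReal := ⟨2 * (n : ℝ) / ((n : ℝ) - 2), hp0.le⟩
  have hp'0 : p' ≠ 0 := by
    intro h; exact hp0.ne' (congrArg NNReal.toReal h)
  have hp'c : (p' : ℝ) = 2 * (n : ℝ) / ((n : ℝ) - 2) := rfl
  let K := eLpNormLESNormFDerivOfEqInnerConst (volume : Measure (EuclideanSpace ℝ (Fin n))) 2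
  refine ⟨(K : ℝ) ^ (p' : ℝ), by positivity, fun f hf hc => ?_⟩
  have hdc : Continuous (fderiv ℝ f) := hf.continuous_fderiv one_ne_zero
  have hcd : HasCompactSupport (fderiv ℝ f) := hc.fderiv ℝ
  have iB : Integrable fun x => ‖fderiv ℝ f x‖ ^ 2 := by
    refine Continuous.integrable_of_hasCompactSupport (by fun_prop) (hcd.mono ?_)
    intro x hx h0
    simp only [Function.mem_support] at hx
    exact hx (by rw [h0]; simp)
  have hB0 : 0 ≤ ∫ x, ‖fderiv ℝ f x‖ ^ 2 := integral_nonneg fun x => by positivity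
  have S := eLpNorm_le_eLpNorm_fderiv_of_eq_inner (volume : Measure (EuclideanSpace ℝ (Fin n)))
    hf hc (p := 2) (p' := p') (by norm_num) (by simp; omega)
    (by rw [hp'c]; simp; field_simp)
  have S2 := ENNReal.rpow_le_rpow S hp0.le
  rw [← hp'c] at S2
  rw [eLpNorm_nnreal_pow_eq_lintegral hp'0, ENNReal.mul_rpow_of_nonneg _ _ (by positivity)] at S2
  have e1 : ∫⁻ x, ‖f x‖ₑ ^ (p' : ℝ) =
      ∫⁻ x, ENNReal.ofReal (|f x| ^ (2 * (n : ℝ) / ((n : ℝ) - 2))) := by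
    refine lintegral_congr fun x => ?_
    rw [← hp'c, ← ENNReal.ofReal_rpow_of_nonneg (abs_nonneg _) (by positivity),
      ← Real.norm_eq_abs, ofReal_norm]
  rw [e1] at S2
  refine S2.trans (le_of_eq ?_)
  have e2 : eLpNorm (fderiv ℝ f) ((2 : NNReal) : ENNReal) volume =
      ENNReal.ofReal (∫ x, ‖fderiv ℝ f x‖ ^ 2) ^ (1 / 2 : ℝ) := by
    rw [eLpNorm_nnreal_eq_lintegral (by norm_num), ofReal_integral_eq_lintegral_ofReal iB
      (Filter.Eventually.of_forall fun x => by positivity)]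
    congr 1
    refine lintegral_congr fun x => ?_
    rw [ENNReal.ofReal_pow (norm_nonneg _), ofReal_norm]
    simp
  rw [e2, ← ENNReal.rpow_mul, ENNReal.ofReal_mul (by positivity),
    ← ENNReal.ofReal_rpow_of_nonneg (NNReal.coe_nonneg _) (by positivity),
    ← ENNReal.ofReal_rpow_of_nonneg hB0 (by positivity), ENNReal.ofReal_coe_nnreal]
  congr 2
  rw [hp'c]; field_simp

theorem stmt_2 (n : ℕ) (hn : 3 ≤ n) (s : ℝ) (hs0 : 0 ≤ s) (hs2 : s ≤ 2) :
    ∃ c : ℝ, 0 < c ∧ ∀ f : EuclideanSpace ℝ (Fin n) → ℝ,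
      ContDiff ℝ (⊤ : ℕ∞) f → HasCompactSupport f →
      (∫ x, |f x| ^ (2 * ((n : ℝ) - s) / ((n : ℝ) - 2)) / ‖x‖ ^ s) ^
          (((n : ℝ) - 2) / (2 * ((n : ℝ) - s))) ≤
        c * (∫ x, ‖gradient f x‖ ^ 2) ^ ((1 : ℝ) / 2) := by
  obtain ⟨C, hC0, hC⟩ := hs_sobolev hn
  have hn' : (3 : ℝ) ≤ n := by exact_mod_cast hn
  have hn2 : (0 : ℝ) < (n : ℝ) - 2 := by linarith
  have hns : (0 : ℝ) < (n : ℝ) - s := by linarith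
  have hs1 : 0 ≤ 1 - s / 2 := by linarith
  set p := 2 * ((n : ℝ) - s) / ((n : ℝ) - 2) with hp
  have hp0 : 0 < p := by positivity
  have hpi : ((n : ℝ) - 2) / (2 * ((n : ℝ) - s)) = 1 / p := by rw [hp]; field_simp
  let M : ℝ := 4 ^ (s / 2) * C ^ (1 - s / 2)
  have hM : 0 ≤ M := by positivity
  refine ⟨M ^ (1 / p) + 1, by positivity, fun f hf' hc => ?_⟩
  have hf : ContDiff ℝ 1 f := hf'.of_le (by exact_mod_cast le_top)
  have hfc := hf.continuous
  have hg : ∀ x, ‖gradient f x‖ = ‖fderiv ℝ f x‖ := fun x => by simp [gradient]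
  simp only [hg]
  have hB0 : 0 ≤ ∫ x, ‖fderiv ℝ f x‖ ^ 2 := integral_nonneg fun x => by positivity
  have H := hs_hardy hn f hf hc
  have S := hC f hf hc
  set B := ∫ x, ‖fderiv ℝ f x‖ ^ 2
  have main : ∫⁻ x, ENNReal.ofReal (|f x| ^ p / ‖x‖ ^ s) ≤ ENNReal.ofReal (M * B ^ (p / 2)) := by
    calc ∫⁻ x, ENNReal.ofReal (|f x| ^ p / ‖x‖ ^ s)
        = ∫⁻ x, ENNReal.ofReal (f x ^ 2 / ‖x‖ ^ 2) ^ (s / 2) *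
          ENNReal.ofReal (|f x| ^ (2 * (n : ℝ) / ((n : ℝ) - 2))) ^ (1 - s / 2) := by
          refine lintegral_congr fun x => ?_
          rw [ENNReal.ofReal_rpow_of_nonneg (by positivity) (by positivity),
            ENNReal.ofReal_rpow_of_nonneg (by positivity) (by positivity),
            ← ENNReal.ofReal_mul (by positivity)]
          congr 1
          rw [← sq_abs, Real.div_rpow (by positivity) (by positivity),
            ← Real.rpow_natCast, ← Real.rpow_natCast, ← Real.rpow_mul (by positivity),
            ← Real.rpow_mul (by positivity), ← Real.rpow_mul (by positivity), div_mul_eq_mul_div,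
            ← Real.rpow_add_of_nonneg (by positivity) (by positivity) (by positivity)]
          congr 2
          · rw [hp]; push_cast; field_simp; ring
          · push_cast; ring
      _ ≤ (∫⁻ x, ENNReal.ofReal (f x ^ 2 / ‖x‖ ^ 2)) ^ (s / 2) *
          (∫⁻ x, ENNReal.ofReal (|f x| ^ (2 * (n : ℝ) / ((n : ℝ) - 2)))) ^ (1 - s / 2) := by
          refine ENNReal.lintegral_mul_norm_pow_le ?_ ?_ (by positivity) hs1 (by ring)
          · have := hfc.measurable
            fun_prop
          · have := hfc.measurable
            fun_prop
      _ ≤ ENNReal.ofReal (4 * B) ^ (s / 2) *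
          ENNReal.ofReal (C * B ^ ((n : ℝ) / ((n : ℝ) - 2))) ^ (1 - s / 2) := by
          gcongr
      _ = ENNReal.ofReal (M * B ^ (p / 2)) := by
          rw [ENNReal.ofReal_rpow_of_nonneg (by positivity) (by positivity),
            ENNReal.ofReal_rpow_of_nonneg (by positivity) (by positivity),
            ← ENNReal.ofReal_mul (by positivity)]
          congr 1
          rw [Real.mul_rpow (by positivity) hB0, Real.mul_rpow hC0 (by positivity),
            ← Real.rpow_mul hB0, mul_mul_mul_comm,
            ← Real.rpow_add_of_nonneg hB0 (by positivity) (by positivity)]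
          congr 2
          rw [hp]; field_simp; ring
  have hI : ∫ x, |f x| ^ p / ‖x‖ ^ s ≤ M * B ^ (p / 2) := by
    rw [integral_eq_lintegral_of_nonneg_ae]
    · exact ENNReal.toReal_le_of_le_ofReal (by positivity) main
    · exact Filter.Eventually.of_forall fun x => by positivity
    · have := hfc.measurable
      exact Measurable.aestronglyMeasurable (by fun_prop)
  rw [hpi]
  calc _ ≤ (M * B ^ (p / 2)) ^ (1 / p) := by
        refine Real.rpow_le_rpow (integral_nonneg fun x => by positivity) hI (by positivity)
    _ = M ^ (1 / p) * B ^ ((1 : ℝ) / 2) := by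
        rw [Real.mul_rpow hM (by positivity), ← Real.rpow_mul hB0]
        congr 2
        field_simp
    _ ≤ _ := by
        gcongr
        linarith
end

section
/- Let n ≥ 1, let p ≥ 1, q ≥ 1, r > 0, let α, β, γ be real and 0 < a ≤ 1, and assume -γ < n/r, -α < n/p, -β < n/q, and γ + n/r = a(α - 1 + n/p) + (1-a)(β + n/q). Set Δ = -γ + aα + (1-a)β. If Δ ≥ 0, and moreover Δ ≤ a in the case 1/r + γ/n = 1/p + (α-1)/n, then there exists a constant c > 0 such that for all smooth compactly supported f : ℝⁿ → ℝ, (∫_{ℝⁿ} |x|^{γr} |f(x)|^{r} dx)^{1/r} ≤ c (∫_{ℝⁿ} |x|^{αp} |∇f(x)|^{p} dx)^{a/p} (∫_{ℝⁿ} |x|^{βq} |f(x)|^{q} dx)^{(1-a)/q}. -/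
open MeasureTheory


section CKNLemmas

open MeasureTheory Set
open scoped ENNReal NNReal

namespace CKN

abbrev Eu (n : ℕ) := EuclideanSpace ℝ (Fin n)

lemma lintegral_dil {n : ℕ} (F : Eu n → ℝ≥0∞) {c : ℝ} (hc : 0 < c) :
    ∫⁻ x, F (c • x) = ENNReal.ofReal c ^ (-(n : ℝ)) * ∫⁻ x, F x := by
  have h1 : ∫⁻ x, F (c • x) = ∫⁻ x, F x ∂(Measure.map (c • ·) (volume : Measure (Eu n))) := by
    have := lintegral_map_equiv (μ := (volume : Measure (Eu n))) F
      (Homeomorph.smulOfNeZero c hc.ne').toMeasurableEquiv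
    rw [eq_comm]
    exact this
  rw [h1, Measure.map_addHaar_smul _ hc.ne', lintegral_smul_measure]
  congr 1
  rw [abs_of_pos (by positivity), ENNReal.ofReal_rpow_of_pos hc, finrank_euclideanSpace_fin,
    Real.rpow_neg hc.le, Real.rpow_natCast]

lemma ae_ne {n : ℕ} (hn : 1 ≤ n) : ∀ᵐ x : Eu n, x ≠ 0 := by
  haveI : Nonempty (Fin n) := ⟨⟨0, hn⟩⟩
  exact Measure.ae_ne volume 0

lemma e0 {n : ℕ} {x : Eu n} (hx : x ≠ 0) : ‖x‖ₑ ≠ 0 := by simpa using hx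

lemma wadd {n : ℕ} {x : Eu n} (hx : x ≠ 0) (a b : ℝ) : ‖x‖ₑ ^ (a + b) = ‖x‖ₑ ^ a * ‖x‖ₑ ^ b :=
  ENNReal.rpow_add _ _ (e0 hx) enorm_ne_top

/-- local integrability of power weights -/
lemma fin_ball {n : ℕ} (hn : 1 ≤ n) {b R : ℝ} (hb : -(n : ℝ) < b) :
    ∫⁻ x : Eu n in Metric.ball 0 R, ‖x‖ₑ ^ b < ∞ := by
  have h := integrableOn_ball_of_norm_le_rpow (E := Eu n) (F := ℝ) (μ := volume)
    (f := fun x => ‖x‖ ^ b) (C := 1) (α := -b) (r := R) (by simpa using hn)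
    (by simp; linarith) (by
      refine Filter.Eventually.of_forall fun x => ?_
      simp [abs_of_nonneg (Real.rpow_nonneg (norm_nonneg x) b)]) (by
      apply Measurable.aestronglyMeasurable; fun_prop)
  have h2 := h.2
  unfold HasFiniteIntegral at h2
  refine lt_of_le_of_lt (le_of_eq ?_) h2
  refine lintegral_congr_ae ?_
  filter_upwards [ae_restrict_of_ae (ae_ne hn)] with x hx
  rw [Real.enorm_eq_ofReal (Real.rpow_nonneg (norm_nonneg x) b),
    ← ENNReal.ofReal_rpow_of_pos (norm_pos_iff.2 hx), ofReal_norm]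

lemma fin_ext {n : ℕ} (hn : 1 ≤ n) {b : ℝ} (hb : b < -(n : ℝ)) :
    ∫⁻ x : Eu n in (Metric.ball 0 1)ᶜ, ‖x‖ₑ ^ b < ∞ := by
  haveI : Nonempty (Fin n) := ⟨⟨0, hn⟩⟩
  have h : Integrable (fun x : Eu n => (Ici (1:ℝ)).indicator (fun y => y ^ b) ‖x‖) := by
    rw [integrable_fun_norm_addHaar volume (f := (Ici (1:ℝ)).indicator (fun y : ℝ => y ^ b))]
    have h1 : IntegrableOn (fun y : ℝ => y ^ (b + n - 1)) (Ioi (1/2)) :=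
      integrableOn_Ioi_rpow_of_lt (by linarith) (by norm_num)
    have h2 : Integrable ((Ici (1:ℝ)).indicator (fun y : ℝ => y ^ (b + n - 1))) :=
      (h1.mono_set (fun x hx => by
        simp only [mem_Ici, mem_Ioi] at *; linarith)).integrable_indicator measurableSet_Ici
    refine h2.integrableOn.congr_fun ?_ measurableSet_Ioi
    intro y hy
    simp only [mem_Ioi] at hy
    by_cases h1 : y ∈ Ici (1:ℝ)
    · simp only [indicator_of_mem h1, smul_eq_mul, finrank_euclideanSpace_fin]
      rw [← Real.rpow_natCast, ← Real.rpow_add hy]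
      congr 1
      push_cast [hn]; ring
    · simp [indicator_of_notMem h1]
  have h2 := h.2
  unfold HasFiniteIntegral at h2
  refine lt_of_le_of_lt (le_of_eq ?_) h2
  rw [← lintegral_indicator (Metric.isOpen_ball.measurableSet.compl)]
  refine lintegral_congr fun x => ?_
  change _ = ‖(Ici (1:ℝ)).indicator (fun y => y ^ b) ‖x‖‖ₑ
  by_cases h1 : 1 ≤ ‖x‖
  · rw [indicator_of_mem (by simpa using h1), indicator_of_mem (show ‖x‖ ∈ Ici (1:ℝ) from h1),
      Real.enorm_eq_ofReal (Real.rpow_nonneg (norm_nonneg x) b),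
      ← ENNReal.ofReal_rpow_of_pos (by linarith), ofReal_norm]
  · rw [indicator_of_notMem (by simpa using h1),
      indicator_of_notMem (show ¬ ‖x‖ ∈ Ici (1:ℝ) from h1)]
    simp

/-- `Bd τ F T`: the `L^{1/τ}` norm of `F` is at most `T`. -/
def Bd {n : ℕ} (τ : ℝ) (F : Eu n → ℝ≥0∞) (T : ℝ≥0∞) : Prop :=
  (τ = 0 ∧ ∀ᵐ x, F x ≤ T) ∨ (0 < τ ∧ ∫⁻ x, F x ^ (1 / τ) ≤ T ^ (1 / τ))

lemma Bd.nonneg {n : ℕ} {τ : ℝ} {F : Eu n → ℝ≥0∞} {T : ℝ≥0∞} (h : Bd τ F T) : 0 ≤ τ := by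
  rcases h with h | h
  · exact h.1.ge
  · exact h.1.le

lemma Bd.mono {n : ℕ} {τ : ℝ} {F F' : Eu n → ℝ≥0∞} {T T' : ℝ≥0∞} (h : Bd τ F T)
    (hF : ∀ᵐ x, F' x ≤ F x) (hT : T ≤ T') : Bd τ F' T' := by
  rcases h with ⟨h1, h2⟩ | ⟨h1, h2⟩
  · left
    refine ⟨h1, ?_⟩
    filter_upwards [h2, hF] with x a b using b.trans (a.trans hT)
  · right
    refine ⟨h1, ?_⟩
    have h3 : 0 ≤ 1 / τ := by positivity
    calc _ ≤ ∫⁻ x, F x ^ (1 / τ) := lintegral_mono_ae (by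
            filter_upwards [hF] with x hx using ENNReal.rpow_le_rpow hx h3)
      _ ≤ _ := h2
      _ ≤ _ := ENNReal.rpow_le_rpow hT h3

lemma Bd.const_mul {n : ℕ} {τ : ℝ} {F : Eu n → ℝ≥0∞} {T : ℝ≥0∞} (h : Bd τ F T)
    (c : ℝ≥0∞) (hc : c ≠ ∞) : Bd τ (fun x => c * F x) (c * T) := by
  rcases h with ⟨h1, h2⟩ | ⟨h1, h2⟩
  · left
    refine ⟨h1, ?_⟩
    filter_upwards [h2] with x a using mul_le_mul_right a c
  · right
    refine ⟨h1, ?_⟩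
    have h3 : 0 ≤ 1 / τ := by positivity
    simp_rw [ENNReal.mul_rpow_of_nonneg _ _ h3]
    rw [lintegral_const_mul' _ _ (ENNReal.rpow_ne_top_of_nonneg h3 hc)]
    exact mul_le_mul_right h2 _

lemma Bd.holder {n : ℕ} {τ κ : ℝ} {F H : Eu n → ℝ≥0∞} {T : ℝ≥0∞} (h : Bd τ F T)
    (hF : AEMeasurable F) (hH : AEMeasurable H) (hκ : 0 ≤ κ) (hκτ : κ * τ ≤ 1) :
    ∫⁻ x, F x ^ κ * H x ^ (1 - κ * τ) ≤ T ^ κ * (∫⁻ x, H x) ^ (1 - κ * τ) := by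
  rcases h with ⟨h1, h2⟩ | ⟨h1, h2⟩
  · subst h1
    simp only [mul_zero, sub_zero, ENNReal.rpow_one]
    rw [← lintegral_const_mul'' _ hH]
    refine lintegral_mono_ae ?_
    filter_upwards [h2] with x hx
    gcongr
  · have := ENNReal.lintegral_mul_norm_pow_le (μ := volume) (f := fun x => F x ^ (1/τ)) (g := H)
      (hF.pow_const _) hH (p := κ * τ) (q := 1 - κ * τ) (by positivity) (by linarith) (by ring)
    have e : ∀ y : ℝ≥0∞, (y ^ (1/τ)) ^ (κ * τ) = y ^ κ := fun y => by
      rw [← ENNReal.rpow_mul]; congr 1; field_simp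
    simp only [e] at this
    refine this.trans ?_
    gcongr
    calc _ ≤ (T ^ (1/τ)) ^ (κ * τ) := ENNReal.rpow_le_rpow h2 (by positivity)
      _ = _ := e T

lemma Bd.interp {n : ℕ} {τ₀ τ μ : ℝ} {F F₀ F₁ : Eu n → ℝ≥0∞} {T : ℝ≥0∞} (h : Bd τ₀ F₀ T)
    (h1 : ∫⁻ x, F₁ x ≤ T) (hF0 : AEMeasurable F₀) (hF1 : AEMeasurable F₁)
    (hμ : 0 ≤ μ) (hμ1 : μ ≤ 1)
    (hτ : τ = (1 - μ) * τ₀ + μ) (hF : ∀ᵐ x, F x ≤ F₀ x ^ (1 - μ) * F₁ x ^ μ) :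
    Bd τ F T := by
  have h0 := h.nonneg
  rcases eq_or_lt_of_le hμ with h2 | h2
  · subst h2
    have : τ = τ₀ := by linarith
    subst this
    refine h.mono ?_ le_rfl
    filter_upwards [hF] with x hx
    simpa using hx
  · have hτ0 : 0 < τ := by
      have : 0 ≤ (1 - μ) * τ₀ := mul_nonneg (by linarith) h0
      linarith
    right
    refine ⟨hτ0, ?_⟩
    have e1 : μ / τ = 1 - (1 - μ) / τ * τ₀ := by
      field_simp; linarith
    have key := h.holder hF0 hF1 (κ := (1 - μ) / τ) (div_nonneg (by linarith) hτ0.le) (by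
      have : 0 ≤ μ / τ := by positivity
      linarith)
    rw [← e1] at key
    calc ∫⁻ x, F x ^ (1 / τ) ≤ ∫⁻ x, F₀ x ^ ((1 - μ) / τ) * F₁ x ^ (μ / τ) := by
          refine lintegral_mono_ae ?_
          filter_upwards [hF] with x hx
          calc _ ≤ (F₀ x ^ (1 - μ) * F₁ x ^ μ) ^ (1 / τ) :=
                ENNReal.rpow_le_rpow hx (by positivity)
            _ = _ := by
                rw [ENNReal.mul_rpow_of_nonneg _ _ (by positivity), ← ENNReal.rpow_mul,
                  ← ENNReal.rpow_mul]
                congr 2 <;> ring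
      _ ≤ _ := key
      _ ≤ T ^ ((1 - μ) / τ) * T ^ (μ / τ) := by
          gcongr
      _ = T ^ (1 / τ) := by
          rw [← ENNReal.rpow_add_of_nonneg _ _ (div_nonneg (by linarith) hτ0.le) (by positivity)]
          congr 1; field_simp; ring

lemma gns {n : ℕ} (hn : 1 ≤ n) : ∃ C : ℝ≥0∞, C ≠ ∞ ∧ ∀ u : Eu n → ℝ, ContDiff ℝ 1 u →
    HasCompactSupport u → Bd (1 - 1 / (n:ℝ)) (fun x => ‖u x‖ₑ) (C * ∫⁻ x, ‖fderiv ℝ u x‖ₑ) := by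
  rcases eq_or_lt_of_le hn with h | h
  · subst h
    refine ⟨1, by simp, fun u hu hs => Or.inl ⟨by simp, ?_⟩⟩
    refine Filter.Eventually.of_forall fun x => ?_
    have hv : ‖(EuclideanSpace.single (0 : Fin 1) (1:ℝ))‖ = 1 := by simp
    set e := (EuclideanSpace.single (0 : Fin 1) (1:ℝ)) with he
    set L : ℝ ≃ₗᵢ[ℝ] Eu 1 := (LinearIsometry.toSpanSingleton ℝ (Eu 1) hv).toLinearIsometryEquiv
      (by simp) with hL
    have hLa : ∀ t, L t = t • e := fun t => by simp [hL]
    have h1 := HasCompactSupport.enorm_le_lintegral_Ici_deriv (f := fun t => u (L t))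
      (hu.comp L.contDiff) (hs.comp_homeomorph L.toHomeomorph) (L.symm x)
    simp only [LinearIsometryEquiv.apply_symm_apply] at h1
    rw [one_mul]
    refine h1.trans ((lintegral_mono_set (subset_univ _)).trans ?_)
    rw [Measure.restrict_univ, ← L.measurePreserving.lintegral_comp_emb
      L.toHomeomorph.measurableEmbedding]
    refine lintegral_mono fun t => ?_
    have h2 : HasDerivAt (fun t => u (L t)) (fderiv ℝ u (L t) e) t := by
      have h3 := ((hu.differentiable (by norm_num)) (L t)).hasFDerivAt
      have h4 : HasDerivAt (fun t => L t) e t := by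
        simp only [hLa]
        simpa using (hasDerivAt_id t).smul_const e
      exact h3.comp_hasDerivAt t h4
    rw [h2.deriv]
    have h5 := (fderiv ℝ u (L t)).le_opNorm e
    rw [hv, mul_one] at h5
    exact enorm_le_iff_norm_le.2 h5
  · have hn' : (1:ℝ) < n := by exact_mod_cast h
    have hτ : 0 < 1 - 1 / (n:ℝ) := by
      rw [sub_pos, div_lt_one (by linarith)]; exact hn'
    set τ := 1 - 1 / (n:ℝ) with hτd
    have hc : Real.HolderConjugate (Module.finrank ℝ (Eu n)) (1 / τ) := by
      rw [finrank_euclideanSpace_fin, Real.holderConjugate_iff]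
      refine ⟨hn', ?_⟩
      rw [hτd]; field_simp; ring
    set K := lintegralPowLePowLIntegralFDerivConst (volume : Measure (Eu n)) (1/τ) with hK
    refine ⟨(K : ℝ≥0∞) ^ τ, ENNReal.rpow_ne_top_of_nonneg hτ.le (by simp), fun u hu hs =>
      Or.inr ⟨hτ, ?_⟩⟩
    have := lintegral_pow_le_pow_lintegral_fderiv (volume : Measure (Eu n)) hu hs hc
    refine this.trans (le_of_eq ?_)
    rw [ENNReal.mul_rpow_of_nonneg _ _ (by positivity), ← ENNReal.rpow_mul,
      mul_one_div_cancel hτ.ne', ENNReal.rpow_one]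

lemma ray {n : ℕ} {u : Eu n → ℝ} (hu : ContDiff ℝ 1 u) (hs : HasCompactSupport u) {x : Eu n}
    (hx : x ≠ 0) : ‖u x‖ₑ ≤ ∫⁻ t in Ici (1:ℝ), ‖fderiv ℝ u (t • x)‖ₑ * ‖x‖ₑ := by
  have hcl : Topology.IsClosedEmbedding (fun t : ℝ => (-t) • x) := by
    have h1 := (LinearMap.toSpanSingleton ℝ (Eu n) x).isClosedEmbedding_of_injective
      (LinearMap.ker_toSpanSingleton ℝ hx)
    exact h1.comp (Homeomorph.neg ℝ).isClosedEmbedding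
  have h1 := HasCompactSupport.enorm_le_lintegral_Ici_deriv (f := fun t : ℝ => u ((-t) • x))
      (hu.comp (by fun_prop)) (hs.comp_isClosedEmbedding hcl) (-1)
  simp only [neg_neg, one_smul] at h1
  refine h1.trans ?_
  rw [← lintegral_indicator measurableSet_Iic, ← lintegral_indicator measurableSet_Ici,
    ← lintegral_neg_eq_self]
  refine lintegral_mono fun t => ?_
  by_cases ht : 1 ≤ t
  · rw [indicator_of_mem (by simpa using ht), indicator_of_mem (by simpa using ht)]
    have h2 : HasDerivAt (fun t : ℝ => u ((-t) • x)) (fderiv ℝ u (t • x) (-x)) (-t) := by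
      have h3 := ((hu.differentiable (by norm_num)) (t • x)).hasFDerivAt
      have h4 : HasDerivAt (fun t : ℝ => (-t) • x) (-x) (-t) := by
        simpa using ((hasDerivAt_id (-t)).neg).smul_const x
      have h5 : HasFDerivAt u (fderiv ℝ u (t • x)) ((fun t : ℝ => (-t) • x) (-t)) := by
        simpa using h3
      exact h5.comp_hasDerivAt (-t) h4
    rw [h2.deriv]
    have h5 := (fderiv ℝ u (t • x)).le_opNorm (-x)
    rw [norm_neg] at h5
    rw [← enorm_norm (fderiv ℝ u (t • x)), ← enorm_norm x, ← enorm_mul]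
    refine enorm_le_iff_norm_le.2 (h5.trans (le_abs_self _))
  · rw [indicator_of_notMem (by simpa using ht)]
    exact zero_le

lemma int_tail {b c : ℝ} (hb : 0 < b) (hc : 0 < c) :
    ∫⁻ t in Ici c, ENNReal.ofReal t ^ (-b - 1) = ENNReal.ofReal (c ^ (-b) / b) := by
  rw [setLIntegral_congr Ioi_ae_eq_Ici.symm]
  have h1 : IntegrableOn (fun y : ℝ => y ^ (-b-1)) (Ioi c) :=
    integrableOn_Ioi_rpow_of_lt (by linarith) hc
  have h2 := integral_Ioi_rpow_of_lt (a := -b-1) (by linarith) hc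
  have h3 : c ^ (-b) / b = ∫ y in Ioi c, y ^ (-b-1) := by
    rw [h2, show -b - 1 + 1 = -b by ring, neg_div_neg_eq]
  rw [h3, ofReal_integral_eq_lintegral_ofReal h1]
  · refine setLIntegral_congr_fun measurableSet_Ioi fun t ht => ?_
    exact ENNReal.ofReal_rpow_of_pos (hc.trans ht)
  · filter_upwards [ae_restrict_mem measurableSet_Ioi] with t ht
    exact Real.rpow_nonneg (hc.trans ht).le _

/-- general Hardy inequality along rays -/
lemma rayHardy {n : ℕ} (hn : 1 ≤ n) {u : Eu n → ℝ} (hu : ContDiff ℝ 1 u) (hs : HasCompactSupport u)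
    {ω : Eu n → ℝ≥0∞} (hω : Measurable ω) :
    ∫⁻ x, ω x * ‖u x‖ₑ ≤ ∫⁻ z, (‖z‖ₑ * ‖fderiv ℝ u z‖ₑ) *
      ∫⁻ t in Ici (1:ℝ), ENNReal.ofReal t ^ (-(n:ℝ) - 1) * ω (t⁻¹ • z) := by
  have hc : Continuous (fderiv ℝ u) := hu.continuous_fderiv (by norm_num)
  have hm : Measurable (fun x => ‖fderiv ℝ u x‖ₑ) := hc.enorm.measurable
  calc ∫⁻ x, ω x * ‖u x‖ₑ
      ≤ ∫⁻ x, ∫⁻ t in Ici (1:ℝ), ω x * (‖fderiv ℝ u (t • x)‖ₑ * ‖x‖ₑ) := by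
        refine lintegral_mono_ae ?_
        filter_upwards [ae_ne hn] with x hx
        rw [lintegral_const_mul]
        · gcongr
          exact ray hu hs hx
        · apply Measurable.mul_const
          exact hm.comp (by fun_prop)
    _ = ∫⁻ t in Ici (1:ℝ), ∫⁻ x, ω x * (‖fderiv ℝ u (t • x)‖ₑ * ‖x‖ₑ) := by
        rw [lintegral_lintegral_swap]
        apply Measurable.aemeasurable
        have : Measurable (fun z : Eu n × ℝ => ‖fderiv ℝ u (z.2 • z.1)‖ₑ) := hm.comp (by fun_prop)
        have h2 : Measurable (fun z : Eu n × ℝ => ω z.1) := hω.comp measurable_fst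
        simp only [Function.uncurry_def]
        fun_prop
    _ = ∫⁻ t in Ici (1:ℝ), ∫⁻ z, (‖z‖ₑ * ‖fderiv ℝ u z‖ₑ) *
          (ENNReal.ofReal t ^ (-(n:ℝ) - 1) * ω (t⁻¹ • z)) := by
        refine setLIntegral_congr_fun measurableSet_Ici fun t ht => ?_
        have ht0 : (0:ℝ) < t := lt_of_lt_of_le one_pos ht
        have ht1 : ENNReal.ofReal t ≠ 0 := by simpa using ht0
        have := lintegral_dil (fun z : Eu n => ω (t⁻¹ • z) * (‖fderiv ℝ u z‖ₑ * ‖t⁻¹ • z‖ₑ)) ht0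
        simp only [inv_smul_smul₀ ht0.ne'] at this
        refine this.trans ?_
        rw [← lintegral_const_mul' _ _ (ENNReal.rpow_ne_top_of_ne_zero ht1 ENNReal.ofReal_ne_top)]
        refine lintegral_congr fun z => ?_
        rw [enorm_smul, Real.enorm_eq_ofReal (inv_pos.2 ht0).le, sub_eq_add_neg,
          ENNReal.rpow_add _ _ ht1 ENNReal.ofReal_ne_top, ENNReal.rpow_neg_one,
          ENNReal.ofReal_inv_of_pos ht0]
        ring
    _ = ∫⁻ z, ∫⁻ t in Ici (1:ℝ), (‖z‖ₑ * ‖fderiv ℝ u z‖ₑ) *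
          (ENNReal.ofReal t ^ (-(n:ℝ) - 1) * ω (t⁻¹ • z)) := by
        rw [lintegral_lintegral_swap]
        apply Measurable.aemeasurable
        have : Measurable (fun z : ℝ × Eu n => ‖fderiv ℝ u (z.2)‖ₑ) := hm.comp (by fun_prop)
        have h2 : Measurable (fun z : ℝ × Eu n => ω (z.1⁻¹ • z.2)) := hω.comp (by fun_prop)
        simp only [Function.uncurry_def]
        fun_prop
    _ = _ := by
        refine lintegral_congr fun z => ?_
        rw [lintegral_const_mul]
        have h2 : Measurable (fun t : ℝ => ω (t⁻¹ • z)) := hω.comp (by fun_prop)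
        fun_prop

lemma hardy {n : ℕ} (hn : 1 ≤ n) {g : ℝ} (hg : 0 < g) {u : Eu n → ℝ} (hu : ContDiff ℝ 1 u)
    (hs : HasCompactSupport u) :
    ∫⁻ x, ‖x‖ₑ ^ (g - n) * ‖u x‖ₑ ≤
      ENNReal.ofReal (1 / g) * ∫⁻ x, ‖x‖ₑ ^ (g - n + 1) * ‖fderiv ℝ u x‖ₑ := by
  refine (rayHardy hn hu hs (ω := fun x => ‖x‖ₑ ^ (g - n)) (by fun_prop)).trans ?_
  rw [← lintegral_const_mul' _ _ ENNReal.ofReal_ne_top]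
  refine lintegral_mono_ae ?_
  filter_upwards [ae_ne hn] with z hz
  have h1 : ∫⁻ t in Ici (1:ℝ), ENNReal.ofReal t ^ (-(n:ℝ) - 1) * ‖t⁻¹ • z‖ₑ ^ (g - n)
      = ‖z‖ₑ ^ (g - n) * ENNReal.ofReal (1 / g) := by
    have := int_tail hg one_pos
    rw [Real.one_rpow] at this
    rw [← this, ← lintegral_const_mul' _ _ (ENNReal.rpow_ne_top_of_ne_zero (e0 hz) enorm_ne_top)]
    refine setLIntegral_congr_fun measurableSet_Ici fun t ht => ?_
    have ht0 : (0:ℝ) < t := lt_of_lt_of_le one_pos ht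
    have ht1 : ENNReal.ofReal t ≠ 0 := by simpa using ht0
    beta_reduce
    rw [enorm_smul, Real.enorm_eq_ofReal (inv_pos.2 ht0).le, ENNReal.ofReal_inv_of_pos ht0,
      ENNReal.mul_rpow_of_ne_top (by simpa using ht0) enorm_ne_top, ENNReal.inv_rpow,
      ← ENNReal.rpow_neg, ← mul_assoc, ← ENNReal.rpow_add _ _ ht1 ENNReal.ofReal_ne_top, mul_comm]
    congr 2; ring
  rw [h1, wadd hz, ENNReal.rpow_one]
  exact le_of_eq (by ring)

lemma avg {n : ℕ} (hn : 1 ≤ n) {ρ : ℝ} (hρ : 0 < ρ) {u : Eu n → ℝ} (hu : ContDiff ℝ 1 u)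
    (hs : HasCompactSupport u) :
    ∫⁻ x in Metric.closedBall 0 ρ, ‖u x‖ₑ ≤
      ENNReal.ofReal ρ ^ (n:ℝ) * ∫⁻ x, ‖x‖ₑ ^ (1 - (n:ℝ)) * ‖fderiv ℝ u x‖ₑ := by
  have hn' : (1:ℝ) ≤ n := by exact_mod_cast hn
  have h := rayHardy hn hu hs (ω := (Metric.closedBall (0 : Eu n) ρ).indicator 1)
    (measurable_one.indicator Metric.isClosed_closedBall.measurableSet)
  rw [← lintegral_indicator Metric.isClosed_closedBall.measurableSet]
  refine le_trans (le_of_eq ?_) (h.trans ?_)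
  · refine lintegral_congr fun x => ?_
    by_cases hx : x ∈ Metric.closedBall (0 : Eu n) ρ <;> simp [hx]
  rw [← lintegral_const_mul' _ _ (ENNReal.rpow_ne_top_of_nonneg (by linarith)
    ENNReal.ofReal_ne_top)]
  refine lintegral_mono_ae ?_
  filter_upwards [ae_ne hn] with z hz
  have hz0 : 0 < ‖z‖ := norm_pos_iff.2 hz
  have h1 : ∫⁻ t in Ici (1:ℝ), ENNReal.ofReal t ^ (-(n:ℝ) - 1) *
      (Metric.closedBall (0 : Eu n) ρ).indicator 1 (t⁻¹ • z)
      ≤ ENNReal.ofReal ρ ^ (n:ℝ) * ‖z‖ₑ ^ (-(n:ℝ)) := by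
    calc _ ≤ ∫⁻ t in Ici (‖z‖ / ρ), ENNReal.ofReal t ^ (-(n:ℝ) - 1) := by
          rw [← lintegral_indicator measurableSet_Ici, ← lintegral_indicator measurableSet_Ici]
          refine lintegral_mono fun t => ?_
          by_cases ht : t ∈ Ici (1:ℝ)
          · rw [indicator_of_mem ht]
            have ht0 : (0:ℝ) < t := lt_of_lt_of_le one_pos ht
            by_cases hz2 : t⁻¹ • z ∈ Metric.closedBall (0 : Eu n) ρ
            · rw [indicator_of_mem hz2, indicator_of_mem]
              · simp
              · rw [mem_closedBall_zero_iff, norm_smul, norm_inv, Real.norm_of_nonneg ht0.le,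
                  inv_mul_le_iff₀ ht0] at hz2
                rw [mem_Ici, div_le_iff₀ hρ]; exact hz2
            · rw [indicator_of_notMem hz2]; simp
          · rw [indicator_of_notMem ht]; exact zero_le
      _ = ENNReal.ofReal ((‖z‖ / ρ) ^ (-(n:ℝ)) / n) := int_tail (by linarith) (by positivity)
      _ ≤ ENNReal.ofReal ((‖z‖ / ρ) ^ (-(n:ℝ))) :=
          ENNReal.ofReal_le_ofReal (div_le_self (by positivity) hn')
      _ = _ := by
          rw [Real.div_rpow hz0.le hρ.le, Real.rpow_neg hρ.le, div_inv_eq_mul,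
            ENNReal.ofReal_mul (by positivity), ← ENNReal.ofReal_rpow_of_pos hz0,
            ← ENNReal.ofReal_rpow_of_pos hρ, ofReal_norm, mul_comm]
  refine (mul_le_mul_right h1 _).trans (le_of_eq ?_)
  rw [sub_eq_add_neg, wadd hz, ENNReal.rpow_one]
  ring

/-- dyadic shell -/
def K (n : ℕ) (k : ℤ) : Set (Eu n) := {x | ‖x‖ ∈ Ico ((2:ℝ) ^ k) (2 ^ (k + 1))}

/-- enlarged dyadic shell -/
def Kt (n : ℕ) (k : ℤ) : Set (Eu n) := {x | ‖x‖ ∈ Ico ((2:ℝ) ^ (k - 1)) (2 ^ (k + 2))}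

/-- dyadic radius -/
noncomputable def rho (k : ℤ) : ℝ≥0∞ := ENNReal.ofReal ((2:ℝ) ^ k)

lemma rho0 (k : ℤ) : rho k ≠ 0 := by
  have : (0:ℝ) < 2 ^ k := by positivity
  simpa [rho] using this

lemma rhot (k : ℤ) : rho k ≠ ∞ := ENNReal.ofReal_ne_top

lemma measK {n : ℕ} (k : ℤ) : MeasurableSet (K n k) := measurable_norm measurableSet_Ico
lemma measKt {n : ℕ} (k : ℤ) : MeasurableSet (Kt n k) := measurable_norm measurableSet_Ico

lemma K_disj {n : ℕ} : Pairwise (Function.onFun Disjoint (K n)) := by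
  intro i j hij
  have aux : ∀ i j : ℤ, i < j → Disjoint (K n i) (K n j) := by
    intro i j hij
    rw [Set.disjoint_left]
    intro x hx hy
    have h1 : (2:ℝ) ^ (i + 1) ≤ 2 ^ j := zpow_le_zpow_right₀ (by norm_num) (by omega)
    exact absurd (hx.2.trans_le (h1.trans hy.1)) (lt_irrefl _)
  rcases lt_or_gt_of_ne hij with h | h
  · exact aux i j h
  · exact (aux j i h).symm

lemma exists_K {n : ℕ} {x : Eu n} (hx : x ≠ 0) : ∃ k, x ∈ K n k := by
  exact exists_mem_Ico_zpow (norm_pos_iff.2 hx) one_lt_two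

lemma K_sub {n : ℕ} (k : ℤ) : K n k ⊆ Kt n k := by
  intro x hx
  refine ⟨le_trans (zpow_le_zpow_right₀ (by norm_num) (by omega)) hx.1,
    lt_of_lt_of_le hx.2 (zpow_le_zpow_right₀ (by norm_num) (by omega))⟩

lemma Kt_union {n : ℕ} (k : ℤ) : Kt n k = K n (k - 1) ∪ (K n k ∪ K n (k + 1)) := by
  ext x
  have h1 : (2:ℝ) ^ (k-1) ≤ 2 ^ k := zpow_le_zpow_right₀ (by norm_num) (by omega)
  have h2 : (2:ℝ) ^ k ≤ 2 ^ (k+1) := zpow_le_zpow_right₀ (by norm_num) (by omega)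
  have h3 : (2:ℝ) ^ (k+1) ≤ 2 ^ (k+2) := zpow_le_zpow_right₀ (by norm_num) (by omega)
  simp only [K, Kt, mem_ofPred_eq, mem_Ico, mem_union, sub_add_cancel,
    show k + 1 + 1 = k + 2 by ring]
  grind

lemma sum_K {n : ℕ} (hn : 1 ≤ n) (F : Eu n → ℝ≥0∞) : ∑' k, ∫⁻ x in K n k, F x = ∫⁻ x, F x := by
  rw [← lintegral_iUnion (fun k => measK k) K_disj]
  have : (⋃ k, K n k : Set (Eu n)) =ᵐ[volume] univ := by
    filter_upwards [ae_ne hn] with x hx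
    exact propext ⟨fun _ => trivial, fun _ => mem_iUnion.2 (exists_K hx)⟩
  rw [Measure.restrict_congr_set this, Measure.restrict_univ]

lemma sum_Kt {n : ℕ} (hn : 1 ≤ n) (F : Eu n → ℝ≥0∞) :
    ∑' k, ∫⁻ x in Kt n k, F x ≤ 3 * ∫⁻ x, F x := by
  have h : ∀ k, ∫⁻ x in Kt n k, F x ≤ (∫⁻ x in K n (k-1), F x) + ((∫⁻ x in K n k, F x) +
      ∫⁻ x in K n (k+1), F x) := by
    intro k
    rw [Kt_union]
    refine (lintegral_union_le _ _ _).trans ?_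
    gcongr
    exact lintegral_union_le _ _ _
  refine (ENNReal.tsum_le_tsum h).trans ?_
  rw [ENNReal.tsum_add, ENNReal.tsum_add]
  have e1 := (Equiv.subRight (1:ℤ)).tsum_eq (fun k => ∫⁻ x in K n k, F x)
  have e2 := (Equiv.addRight (1:ℤ)).tsum_eq (fun k => ∫⁻ x in K n k, F x)
  simp only [Equiv.subRight_apply, Equiv.coe_addRight] at e1 e2
  rw [e1, e2, sum_K hn]
  exact le_of_eq (by ring)

lemma cmp {a b : ℝ≥0∞} (ha : a ≠ 0) (hb : b ≠ 0) (hb' : b ≠ ∞) (h1 : a ≤ 4 * b)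
    (h2 : b ≤ 4 * a) (δ : ℝ) : a ^ δ ≤ 4 ^ |δ| * b ^ δ := by
  rcases le_or_gt 0 δ with h | h
  · rw [abs_of_nonneg h, ← ENNReal.mul_rpow_of_nonneg _ _ h]
    exact ENNReal.rpow_le_rpow h1 h
  · rw [abs_of_neg h]
    have h3 : b ^ (-δ) ≤ 4 ^ (-δ) * a ^ (-δ) := by
      rw [← ENNReal.mul_rpow_of_nonneg _ _ (by linarith)]
      exact ENNReal.rpow_le_rpow h2 (by linarith)
    have ha' : a ≠ ∞ := ne_top_of_le_ne_top (ENNReal.mul_ne_top (by simp) hb') h1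
    have h4 : b ^ (-δ) * b ^ δ = 1 := by
      rw [← ENNReal.rpow_add _ _ hb hb']; simp
    have h5 : a ^ (-δ) * a ^ δ = 1 := by
      rw [← ENNReal.rpow_add _ _ ha ha']; simp
    calc a ^ δ = (b ^ (-δ) * b ^ δ) * a ^ δ := by rw [h4, one_mul]
      _ ≤ (4 ^ (-δ) * a ^ (-δ) * b ^ δ) * a ^ δ := by gcongr
      _ = 4 ^ (-δ) * b ^ δ * (a ^ (-δ) * a ^ δ) := by ring
      _ = _ := by rw [h5, mul_one]

lemma Kt_ne {n : ℕ} {k : ℤ} {x : Eu n} (hx : x ∈ Kt n k) : x ≠ 0 := by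
  have : (0:ℝ) < 2 ^ (k-1) := by positivity
  exact norm_pos_iff.1 (lt_of_lt_of_le this hx.1)

lemma Kt_b1 {n : ℕ} {k : ℤ} {x : Eu n} (hx : x ∈ Kt n k) : ‖x‖ₑ ≤ 4 * rho k := by
  rw [← ofReal_norm, rho, show (4:ℝ≥0∞) = ENNReal.ofReal 4 by simp,
    ← ENNReal.ofReal_mul (by norm_num)]
  refine ENNReal.ofReal_le_ofReal (hx.2.le.trans (le_of_eq ?_))
  rw [zpow_add₀ (by norm_num)]; norm_num; ring

lemma Kt_b2 {n : ℕ} {k : ℤ} {x : Eu n} (hx : x ∈ Kt n k) : rho k ≤ 4 * ‖x‖ₑ := by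
  rw [← ofReal_norm, rho, show (4:ℝ≥0∞) = ENNReal.ofReal 4 by simp,
    ← ENNReal.ofReal_mul (by norm_num)]
  refine ENNReal.ofReal_le_ofReal ?_
  have := hx.1
  rw [zpow_sub₀ (by norm_num)] at this
  have h2 : (0:ℝ) < 2 ^ k := by positivity
  simp at this
  linarith

lemma cmp1 {n : ℕ} {k : ℤ} {x : Eu n} (hx : x ∈ Kt n k) (δ : ℝ) :
    ‖x‖ₑ ^ δ ≤ 4 ^ |δ| * rho k ^ δ :=
  cmp (e0 (Kt_ne hx)) (rho0 k) (rhot k) (Kt_b1 hx) (Kt_b2 hx) δ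

lemma cmp2 {n : ℕ} {k : ℤ} {x : Eu n} (hx : x ∈ Kt n k) (δ : ℝ) :
    rho k ^ δ ≤ 4 ^ |δ| * ‖x‖ₑ ^ δ :=
  cmp (rho0 k) (e0 (Kt_ne hx)) enorm_ne_top (Kt_b2 hx) (Kt_b1 hx) δ

lemma exists_cut (n : ℕ) : ∃ (ψ : Eu n → ℝ) (M : ℝ≥0), ContDiff ℝ 1 ψ ∧
    (∀ x, ‖x‖ ∈ Ico (1:ℝ) 2 → ψ x = 1) ∧ (∀ x, ‖ψ x‖ₑ ≤ 1) ∧ (∀ x, ‖fderiv ℝ ψ x‖ₑ ≤ M) ∧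
    HasCompactSupport ψ ∧ tsupport ψ ⊆ {x | ‖x‖ ∈ Icc (1/2 : ℝ) 3} := by
  let b₁ : ContDiffBump (0 : Eu n) := ⟨2, 3, by norm_num, by norm_num⟩
  let b₂ : ContDiffBump (0 : Eu n) := ⟨1/2, 1, by norm_num, by norm_num⟩
  have hc : ContDiff ℝ 1 (fun x => b₁ x * (1 - b₂ x)) :=
    b₁.contDiff.mul (contDiff_const.sub b₂.contDiff)
  have hs : HasCompactSupport (fun x => b₁ x * (1 - b₂ x)) := b₁.hasCompactSupport.mul_right
  have hb := (hc.continuous_fderiv (by norm_num)).bounded_above_of_compact_support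
    (hs.fderiv (𝕜 := ℝ))
  obtain ⟨M, hM⟩ := hb
  refine ⟨fun x => b₁ x * (1 - b₂ x), M.toNNReal, hc, ?_, ?_, ?_, hs, ?_⟩
  · rintro x ⟨h1, h2⟩
    have e1 : b₁ x = 1 := b₁.one_of_mem_closedBall (by
      rw [mem_closedBall_zero_iff]; exact h2.le)
    have e2 : b₂ x = 0 := b₂.zero_of_le_dist (by
      rw [dist_zero_right]; exact h1)
    simp [e1, e2]
  · intro x
    have h1 := b₁.nonneg (x := x)
    have h2 := b₁.le_one (x := x)
    have h3 := b₂.nonneg (x := x)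
    have h4 := b₂.le_one (x := x)
    rw [Real.enorm_eq_ofReal (mul_nonneg h1 (by linarith)), ENNReal.ofReal_le_one]
    nlinarith
  · intro x
    rw [← ofReal_norm]
    exact ENNReal.ofReal_le_ofReal (hM x)
  · refine closure_minimal ?_ (isClosed_Icc.preimage continuous_norm)
    intro x hx
    rw [Function.mem_support] at hx
    constructor
    · by_contra! h
      have e2 : b₂ x = 1 := b₂.one_of_mem_closedBall (by
        rw [mem_closedBall_zero_iff]; exact h.le)
      simp [e2] at hx
    · by_contra! h
      have e2 : b₁ x = 0 := b₁.zero_of_le_dist (by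
        rw [dist_zero_right]; exact h.le)
      simp [e2] at hx

lemma shell0 {n : ℕ} (hn : 1 ≤ n) : ∃ C : ℝ≥0∞, C ≠ ∞ ∧ ∀ (k : ℤ) (g : Eu n → ℝ),
    ContDiff ℝ 1 g → Bd (1 - 1 / (n:ℝ)) ((K n k).indicator fun x => ‖g x‖ₑ)
      (C * ∫⁻ x in Kt n k, (‖fderiv ℝ g x‖ₑ + rho k ^ (-1:ℝ) * ‖g x‖ₑ)) := by
  obtain ⟨C, hC, h⟩ := gns hn
  obtain ⟨ψ, M, h1, h2, h3, h4, h5, h6⟩ := exists_cut n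
  refine ⟨C * (1 + M), ENNReal.mul_ne_top hC (by simp), fun k g hg => ?_⟩
  have hk : (0:ℝ) < 2 ^ k := by positivity
  set c : ℝ := ((2:ℝ) ^ k)⁻¹ with hc
  have hc0 : 0 < c := by positivity
  set φ : Eu n → ℝ := fun x => ψ (c • x) with hφ
  have hφc : ContDiff ℝ 1 φ := h1.comp (by fun_prop)
  have hφs : HasCompactSupport φ := h5.comp_smul hc0.ne'
  have hφd : ∀ x, fderiv ℝ φ x = c • fderiv ℝ ψ (c • x) := by
    intro x
    exact fderiv_comp_smul c
  have hcr : ‖c‖ₑ = rho k ^ (-1:ℝ) := by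
    rw [Real.enorm_eq_ofReal hc0.le, hc, ENNReal.ofReal_inv_of_pos hk, ENNReal.rpow_neg_one, rho]
  have hout : ∀ x, x ∉ Kt n k → c • x ∉ tsupport ψ := by
    intro x hx hx2
    apply hx
    have := h6 hx2
    simp only [mem_ofPred_eq, norm_smul, Real.norm_of_nonneg hc0.le, mem_Icc] at this
    obtain ⟨a1, a2⟩ := this
    rw [hc, inv_mul_le_iff₀ hk] at a2
    rw [hc, le_inv_mul_iff₀ hk] at a1
    constructor
    · rw [zpow_sub₀ (by norm_num)]; simpa [div_eq_mul_inv] using a1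
    · rw [zpow_add₀ (by norm_num)]
      refine lt_of_le_of_lt a2 ?_
      norm_num
      nlinarith
  have key := h (fun x => φ x * g x) (hφc.mul hg) hφs.mul_right
  refine key.mono ?_ ?_
  · refine Filter.Eventually.of_forall fun x => ?_
    by_cases hx : x ∈ K n k
    · rw [indicator_of_mem hx]
      have : φ x = 1 := by
        apply h2
        rw [norm_smul, Real.norm_of_nonneg hc0.le, hc]
        constructor
        · rw [le_inv_mul_iff₀ hk]; simpa using hx.1
        · rw [inv_mul_lt_iff₀ hk]
          have := hx.2
          rw [zpow_add₀ (by norm_num)] at this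
          simpa using this
      simp [this]
    · rw [indicator_of_notMem hx]; exact zero_le
  · rw [mul_assoc]
    gcongr
    rw [← lintegral_const_mul' _ _ (by simp), ← lintegral_indicator (measKt k)]
    refine lintegral_mono fun x => ?_
    beta_reduce
    have hd : fderiv ℝ (fun x => φ x * g x) x = φ x • fderiv ℝ g x + g x • fderiv ℝ φ x :=
      fderiv_fun_mul (hφc.differentiable (by norm_num) x) (hg.differentiable (by norm_num) x)
    rw [hd, hφd]
    by_cases hx : x ∈ Kt n k
    · rw [indicator_of_mem hx]
      refine (enorm_add_le (φ x • fderiv ℝ g x) _).trans ?_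
      rw [enorm_smul, enorm_smul, enorm_smul, hcr]
      calc _ ≤ 1 * ‖fderiv ℝ g x‖ₑ + ‖g x‖ₑ * (rho k ^ (-1:ℝ) * M) := by
            gcongr
            · exact h3 _
            · exact h4 _
        _ ≤ 1 * ‖fderiv ℝ g x‖ₑ + ‖g x‖ₑ * (rho k ^ (-1:ℝ) * M)
            + (M * ‖fderiv ℝ g x‖ₑ + rho k ^ (-1:ℝ) * ‖g x‖ₑ) := le_self_add
        _ = _ := by ring
    · have a1 : φ x = 0 := image_eq_zero_of_notMem_tsupport (f := ψ) (hout x hx)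
      have a2 : fderiv ℝ ψ (c • x) = 0 := by
        by_contra h0
        exact hout x hx (support_fderiv_subset ℝ h0)
      rw [a1, a2, zero_smul, smul_zero, smul_zero, add_zero]
      have hz : ‖(0 : Eu n →L[ℝ] ℝ)‖ₑ = 0 := by rw [← ofReal_norm, norm_zero, ENNReal.ofReal_zero]
      exact hz.trans_le zero_le

lemma shell {n : ℕ} (hn : 1 ≤ n) (δ : ℝ) : ∃ C : ℝ≥0∞, C ≠ ∞ ∧ ∀ (k : ℤ) (g : Eu n → ℝ),
    ContDiff ℝ 1 g → Bd (1 - 1 / (n:ℝ)) ((K n k).indicator fun x => ‖x‖ₑ ^ δ * ‖g x‖ₑ)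
      (C * ∫⁻ x in Kt n k, (‖x‖ₑ ^ δ * ‖fderiv ℝ g x‖ₑ + ‖x‖ₑ ^ (δ - 1) * ‖g x‖ₑ)) := by
  obtain ⟨C, hC, h⟩ := shell0 hn
  have f1 : (4:ℝ≥0∞) ^ |δ| ≠ ∞ := ENNReal.rpow_ne_top_of_nonneg (abs_nonneg _) (by simp)
  have f2 : (4:ℝ≥0∞) ^ |δ - 1| ≠ ∞ := ENNReal.rpow_ne_top_of_nonneg (abs_nonneg _) (by simp)
  refine ⟨4 ^ |δ| * C * (4 ^ |δ| + 4 ^ |δ - 1|), ENNReal.mul_ne_top (ENNReal.mul_ne_top f1 hC)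
    (ENNReal.add_ne_top.2 ⟨f1, f2⟩), fun k g hg => ?_⟩
  have f3 : rho k ^ δ ≠ ∞ := ENNReal.rpow_ne_top_of_ne_zero (rho0 k) (rhot k)
  refine ((h k g hg).const_mul (4 ^ |δ| * rho k ^ δ) (ENNReal.mul_ne_top f1 f3)).mono ?_ ?_
  · refine Filter.Eventually.of_forall fun x => ?_
    by_cases hx : x ∈ K n k
    · rw [indicator_of_mem hx, indicator_of_mem hx]
      gcongr
      exact cmp1 (K_sub k hx) δ
    · rw [indicator_of_notMem hx]; exact zero_le
  · calc _ = 4 ^ |δ| * C * (rho k ^ δ *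
          ∫⁻ x in Kt n k, (‖fderiv ℝ g x‖ₑ + rho k ^ (-1:ℝ) * ‖g x‖ₑ)) := by ring
      _ ≤ 4 ^ |δ| * C * ((4 ^ |δ| + 4 ^ |δ - 1|) *
          ∫⁻ x in Kt n k, (‖x‖ₑ ^ δ * ‖fderiv ℝ g x‖ₑ + ‖x‖ₑ ^ (δ - 1) * ‖g x‖ₑ)) := by
        refine mul_le_mul_right ?_ _
        rw [← lintegral_const_mul' _ _ f3,
          ← lintegral_const_mul' _ _ (ENNReal.add_ne_top.2 ⟨f1, f2⟩)]
        refine setLIntegral_mono_ae' (measKt k) (Filter.Eventually.of_forall fun x hx => ?_)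
        have e1 : rho k ^ δ * rho k ^ (-1:ℝ) = rho k ^ (δ - 1) := by
          rw [← ENNReal.rpow_add _ _ (rho0 k) (rhot k)]; rfl
        calc _ = rho k ^ δ * ‖fderiv ℝ g x‖ₑ + rho k ^ (δ - 1) * ‖g x‖ₑ := by
              rw [← e1]; ring
          _ ≤ (4 ^ |δ| * ‖x‖ₑ ^ δ) * ‖fderiv ℝ g x‖ₑ
              + (4 ^ |δ - 1| * ‖x‖ₑ ^ (δ - 1)) * ‖g x‖ₑ := by
              gcongr
              · exact cmp2 hx δ
              · exact cmp2 hx _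
          _ ≤ (4 ^ |δ| * ‖x‖ₑ ^ δ) * ‖fderiv ℝ g x‖ₑ
              + (4 ^ |δ - 1| * ‖x‖ₑ ^ (δ - 1)) * ‖g x‖ₑ
              + ((4 ^ |δ| * ‖x‖ₑ ^ (δ - 1)) * ‖g x‖ₑ
                + (4 ^ |δ - 1| * ‖x‖ₑ ^ δ) * ‖fderiv ℝ g x‖ₑ) := le_self_add
          _ = _ := by ring
      _ = _ := by ring

lemma Bd.sum {n : ℕ} (hn : 1 ≤ n) {τ : ℝ} (hτ1 : τ ≤ 1) {F : Eu n → ℝ≥0∞}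
    {T : ℤ → ℝ≥0∞} (h : ∀ k, Bd τ ((K n k).indicator F) (T k)) : Bd τ F (∑' k, T k) := by
  rcases h 0 with ⟨h1, -⟩ | ⟨h1, -⟩
  · left
    refine ⟨h1, ?_⟩
    have h2 : ∀ k, ∀ᵐ x, (K n k).indicator F x ≤ T k := by
      intro k
      rcases h k with ⟨h3, h4⟩ | ⟨h3, -⟩
      · exact h4
      · linarith
    filter_upwards [ae_all_iff.2 h2, ae_ne hn] with x h3 hx
    obtain ⟨k, hk⟩ := exists_K hx
    have := h3 k
    rw [indicator_of_mem hk] at this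
    exact this.trans (ENNReal.le_tsum k)
  · right
    refine ⟨h1, ?_⟩
    have h2 : ∀ k, ∫⁻ x in K n k, F x ^ (1/τ) ≤ T k ^ (1/τ) := by
      intro k
      rcases h k with ⟨h3, h4⟩ | ⟨h3, h4⟩
      · linarith
      · refine le_trans (le_of_eq ?_) h4
        rw [← lintegral_indicator (measK k)]
        refine lintegral_congr fun x => ?_
        by_cases hx : x ∈ K n k
        · simp [hx]
        · simp [hx, h1]
    rw [← sum_K hn]
    refine (ENNReal.tsum_le_tsum h2).trans ?_
    set S := ∑' k, T k with hS
    have ht : 1 ≤ 1/τ := by rw [le_div_iff₀ h1]; linarith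
    have e : ∀ y : ℝ≥0∞, y ^ (1/τ) = y * y ^ (1/τ - 1) := by
      intro y
      nth_rewrite 2 [← ENNReal.rpow_one y]
      rw [← ENNReal.rpow_add_of_nonneg _ _ (by norm_num) (by linarith)]
      congr 1; ring
    calc ∑' k, T k ^ (1/τ) ≤ ∑' k, T k * S ^ (1/τ - 1) := by
          refine ENNReal.tsum_le_tsum fun k => ?_
          rw [e]
          gcongr
          exact ENNReal.le_tsum k
      _ = S * S ^ (1/τ - 1) := by rw [ENNReal.tsum_mul_right]
      _ = _ := (e S).symm

/-- the weighted Sobolev type inequality with lower order term -/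
lemma sob {n : ℕ} (hn : 1 ≤ n) (δ : ℝ) {τ : ℝ} (h0 : 1 - 1 / (n:ℝ) ≤ τ) (h1 : τ ≤ 1) :
    ∃ C : ℝ≥0∞, C ≠ ∞ ∧ ∀ g : Eu n → ℝ, ContDiff ℝ 1 g →
      Bd τ (fun x => ‖x‖ₑ ^ (δ - 1 + n - n * τ) * ‖g x‖ₑ)
      (C * ∫⁻ x, (‖x‖ₑ ^ δ * ‖fderiv ℝ g x‖ₑ + ‖x‖ₑ ^ (δ - 1) * ‖g x‖ₑ)) := by
  obtain ⟨C, hC, h⟩ := shell hn δ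
  have hn0 : (0:ℝ) < n := by exact_mod_cast hn
  refine ⟨C * 3 + 1, ENNReal.add_ne_top.2 ⟨ENNReal.mul_ne_top hC (by simp), by simp⟩,
    fun g hg => ?_⟩
  have hgc := hg.continuous
  set X := ∫⁻ x, (‖x‖ₑ ^ δ * ‖fderiv ℝ g x‖ₑ + ‖x‖ₑ ^ (δ - 1) * ‖g x‖ₑ) with hX
  have h2 : Bd (1 - 1 / (n:ℝ)) (fun x => ‖x‖ₑ ^ δ * ‖g x‖ₑ) ((C * 3 + 1) * X) := by
    refine (Bd.sum hn (h0.trans h1) (fun k => h k g hg)).mono (Filter.Eventually.of_forall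
      fun x => le_rfl) ?_
    rw [ENNReal.tsum_mul_left]
    calc _ ≤ C * (3 * X) := by gcongr; exact sum_Kt hn _
      _ ≤ C * (3 * X) + X := le_self_add
      _ = _ := by ring
  refine h2.interp (F₁ := fun x => ‖x‖ₑ ^ (δ - 1) * ‖g x‖ₑ) (μ := 1 - n * (1 - τ)) ?_ ?_ ?_ ?_ ?_
    ?_ ?_
  · calc _ ≤ X := lintegral_mono fun x => le_add_self
      _ ≤ C * 3 * X + X := le_add_self
      _ = _ := by ring
  · have : Measurable (fun x => ‖g x‖ₑ) := hgc.enorm.measurable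
    fun_prop
  · have : Measurable (fun x => ‖g x‖ₑ) := hgc.enorm.measurable
    fun_prop
  · rw [sub_le_comm] at h0
    have := mul_le_mul_of_nonneg_left h0 hn0.le
    rw [mul_one_div_cancel hn0.ne'] at this
    linarith
  · have := mul_nonneg hn0.le (sub_nonneg.2 h1)
    linarith
  · field_simp; ring
  · filter_upwards [ae_ne hn] with x hx
    have a0 : 0 ≤ n * (1 - τ) := mul_nonneg hn0.le (sub_nonneg.2 h1)
    have a1 : 0 ≤ 1 - n * (1 - τ) := by
      rw [sub_le_comm] at h0
      have := mul_le_mul_of_nonneg_left h0 hn0.le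
      rw [mul_one_div_cancel hn0.ne'] at this
      linarith
    rw [sub_sub_cancel, ENNReal.mul_rpow_of_nonneg _ _ a0, ENNReal.mul_rpow_of_nonneg _ _ a1,
      ← ENNReal.rpow_mul, ← ENNReal.rpow_mul]
    have e1 : δ - 1 + n - n * τ = δ * (n * (1 - τ)) + (δ - 1) * (1 - n * (1 - τ)) := by ring
    have e2 : ‖g x‖ₑ = ‖g x‖ₑ ^ (n * (1 - τ)) * ‖g x‖ₑ ^ (1 - n * (1 - τ)) := by
      rw [← ENNReal.rpow_add_of_nonneg _ _ a0 a1]; simp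
    rw [e1, wadd hx]
    nth_rewrite 1 [e2]
    exact le_of_eq (by ring)

/-- Hardy inequality for functions with small support in every shell -/
lemma hardy2 {n : ℕ} (hn : 1 ≤ n) (δ : ℝ) : ∃ ε : ℝ≥0∞, ε ≠ 0 ∧ ∀ g : Eu n → ℝ, ContDiff ℝ 1 g →
    ∫⁻ x, ‖x‖ₑ ^ (δ - 1) * ‖g x‖ₑ ≠ ∞ →
    (∀ k, volume ({x | g x ≠ 0} ∩ K n k) ≤ ε * rho k ^ (n:ℝ)) →
    ∫⁻ x, ‖x‖ₑ ^ (δ - 1) * ‖g x‖ₑ ≤ ∫⁻ x, ‖x‖ₑ ^ δ * ‖fderiv ℝ g x‖ₑ := by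
  obtain ⟨C, hC, h⟩ := shell hn δ
  have hn0 : (0:ℝ) < n := by exact_mod_cast hn
  set D : ℝ≥0∞ := 4 * C * 6 + 1 with hD
  have hDt : D ≠ ∞ := ENNReal.add_ne_top.2 ⟨ENNReal.mul_ne_top (ENNReal.mul_ne_top (by simp) hC)
    (by simp), by simp⟩
  refine ⟨(D⁻¹) ^ (n:ℝ), ?_, ?_⟩
  · exact (ENNReal.rpow_pos (by simpa using hDt) (by simp [hD])).ne'
  intro g hg hfin hsup
  have hgm : Measurable (fun x => ‖g x‖ₑ) := hg.continuous.enorm.measurable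
  set Tk : ℤ → ℝ≥0∞ := fun k =>
    ∫⁻ x in Kt n k, (‖x‖ₑ ^ δ * ‖fderiv ℝ g x‖ₑ + ‖x‖ₑ ^ (δ - 1) * ‖g x‖ₑ) with hTk
  have hms : ∀ k, MeasurableSet ({x | g x ≠ 0} ∩ K n k) := fun k =>
    (hg.continuous.measurable (measurableSet_singleton 0).compl).inter (measK k)
  have step : ∀ k, ∫⁻ x in K n k, ‖x‖ₑ ^ (δ - 1) * ‖g x‖ₑ ≤ (4 * C * D⁻¹) * Tk k := by
    intro k
    have h1 := (h k g hg).holder (H := ({x | g x ≠ 0} ∩ K n k).indicator 1) (κ := 1)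
      (by
        apply Measurable.aemeasurable
        refine Measurable.indicator ?_ (measK k)
        fun_prop)
      (measurable_one.indicator (hms k)).aemeasurable (by norm_num) (by
        have : 0 < 1 / (n:ℝ) := by positivity
        linarith)
    have e1 : 1 - 1 * (1 - 1 / (n:ℝ)) = 1 / n := by ring
    rw [e1] at h1
    simp only [ENNReal.rpow_one] at h1
    rw [lintegral_indicator (hms k)] at h1
    simp only [Pi.one_apply, lintegral_one, Measure.restrict_apply_univ] at h1
    have h2 : (volume ({x | g x ≠ 0} ∩ K n k)) ^ (1 / (n:ℝ)) ≤ D⁻¹ * rho k := by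
      calc _ ≤ ((D⁻¹) ^ (n:ℝ) * rho k ^ (n:ℝ)) ^ (1 / (n:ℝ)) :=
            ENNReal.rpow_le_rpow (hsup k) (by positivity)
        _ = _ := by
            rw [← ENNReal.mul_rpow_of_nonneg _ _ hn0.le, ← ENNReal.rpow_mul,
              mul_one_div_cancel hn0.ne', ENNReal.rpow_one]
    calc ∫⁻ x in K n k, ‖x‖ₑ ^ (δ - 1) * ‖g x‖ₑ
        ≤ ∫⁻ x, (4 * rho k ^ (-1:ℝ)) * ((K n k).indicator (fun x => ‖x‖ₑ ^ δ * ‖g x‖ₑ) x *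
          ({x | g x ≠ 0} ∩ K n k).indicator 1 x ^ (1 / (n:ℝ))) := by
          rw [← lintegral_indicator (measK k)]
          refine lintegral_mono fun x => ?_
          by_cases hx : x ∈ K n k
          · rw [indicator_of_mem hx, indicator_of_mem hx]
            by_cases hx2 : g x = 0
            · simp [hx2]
            · have hx3 : x ∈ {x | g x ≠ 0} ∩ K n k := ⟨hx2, hx⟩
              rw [indicator_of_mem hx3]
              simp only [Pi.one_apply, ENNReal.one_rpow, mul_one]
              rw [sub_eq_add_neg, wadd (Kt_ne (K_sub k hx))]
              have := cmp1 (K_sub k hx) (-1)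
              simp only [abs_neg, abs_one, ENNReal.rpow_one] at this
              calc _ ≤ ‖x‖ₑ ^ δ * (4 * rho k ^ (-1:ℝ)) * ‖g x‖ₑ := by gcongr
                _ = _ := by ring
          · rw [indicator_of_notMem hx]; exact zero_le
      _ = (4 * rho k ^ (-1:ℝ)) * ∫⁻ x, ((K n k).indicator (fun x => ‖x‖ₑ ^ δ * ‖g x‖ₑ) x *
          ({x | g x ≠ 0} ∩ K n k).indicator 1 x ^ (1 / (n:ℝ))) :=
          lintegral_const_mul' _ _ (ENNReal.mul_ne_top (by simp)
            (ENNReal.rpow_ne_top_of_ne_zero (rho0 k) (rhot k)))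
      _ ≤ (4 * rho k ^ (-1:ℝ)) * ((C * Tk k) * (D⁻¹ * rho k)) := by
          gcongr
          exact h1.trans (by gcongr)
      _ = 4 * C * D⁻¹ * Tk k * (rho k ^ (-1:ℝ) * rho k) := by ring
      _ = _ := by
          rw [ENNReal.rpow_neg_one, ENNReal.inv_mul_cancel (rho0 k) (rhot k), mul_one]
  set X := ∫⁻ x, ‖x‖ₑ ^ (δ - 1) * ‖g x‖ₑ with hX
  set Y := ∫⁻ x, ‖x‖ₑ ^ δ * ‖fderiv ℝ g x‖ₑ with hY
  have h3 : X ≤ (4 * C * D⁻¹) * (3 * (Y + X)) := by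
    have h5 : X = ∑' k, ∫⁻ x in K n k, ‖x‖ₑ ^ (δ - 1) * ‖g x‖ₑ := (sum_K hn _).symm
    rw [h5]
    refine (ENNReal.tsum_le_tsum step).trans ?_
    rw [ENNReal.tsum_mul_left]
    gcongr
    refine (sum_Kt hn _).trans ?_
    rw [lintegral_add_right _ (by fun_prop), ← h5]
  have h4 : 2 * X ≤ Y + X := by
    calc 2 * X ≤ 2 * ((4 * C * D⁻¹) * (3 * (Y + X))) := by gcongr
      _ = (4 * C * 6) * D⁻¹ * (Y + X) := by ring
      _ ≤ D * D⁻¹ * (Y + X) := by gcongr; exact le_self_add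
      _ = Y + X := by rw [ENNReal.mul_inv_cancel (by simp [hD]) hDt, one_mul]
  rw [two_mul] at h4
  exact (ENNReal.add_le_add_iff_right hfin).1 h4

/-- weighted gradient functional -/
noncomputable def Ip {n : ℕ} (α p : ℝ) (f : Eu n → ℝ) : ℝ≥0∞ :=
  ∫⁻ x, (‖x‖ₑ ^ α * ‖fderiv ℝ f x‖ₑ) ^ p

/-- weighted Lebesgue functional -/
noncomputable def Iq {n : ℕ} (β q : ℝ) (f : Eu n → ℝ) : ℝ≥0∞ :=
  ∫⁻ x, (‖x‖ₑ ^ β * ‖f x‖ₑ) ^ q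

lemma cont_fin {n : ℕ} (hn : 1 ≤ n) {β q : ℝ} (hq : 0 < q) (h : -β < n / q)
    {F : Eu n → ℝ≥0∞} {M : ℝ≥0∞} (hM : M ≠ ∞) {R : ℝ} (h1 : ∀ x, F x ≤ M)
    (h2 : ∀ x, x ∉ Metric.ball (0 : Eu n) R → F x = 0) : ∫⁻ x, (‖x‖ₑ ^ β * F x) ^ q < ∞ := by
  calc _ ≤ ∫⁻ x in Metric.ball (0 : Eu n) R, M ^ q * ‖x‖ₑ ^ (β * q) := by
        rw [← lintegral_indicator Metric.isOpen_ball.measurableSet]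
        refine lintegral_mono fun x => ?_
        by_cases hx : x ∈ Metric.ball (0 : Eu n) R
        · rw [indicator_of_mem hx, ENNReal.mul_rpow_of_nonneg _ _ hq.le, ← ENNReal.rpow_mul, mul_comm]
          gcongr
          exact h1 x
        · rw [h2 x hx]; simp [hq]
    _ < ∞ := by
        rw [lintegral_const_mul' _ _ (ENNReal.rpow_ne_top_of_nonneg hq.le hM)]
        refine ENNReal.mul_lt_top (ENNReal.rpow_lt_top_of_nonneg hq.le hM) (fin_ball hn ?_)
        rw [lt_div_iff₀ hq] at h
        linarith

lemma bdd_supp {n : ℕ} {G : Type*} [NormedAddCommGroup G] {f : Eu n → G} (hf : Continuous f)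
    (hs : HasCompactSupport f) : ∃ (M : ℝ≥0∞) (R : ℝ), M ≠ ∞ ∧ (∀ x, ‖f x‖ₑ ≤ M) ∧
      ∀ x, x ∉ Metric.ball (0 : Eu n) R → ‖f x‖ₑ = 0 := by
  obtain ⟨M, hM⟩ := hf.bounded_above_of_compact_support hs
  obtain ⟨R, hR⟩ := hs.isCompact.isBounded.subset_ball 0
  refine ⟨ENNReal.ofReal M, R, ENNReal.ofReal_ne_top, fun x => ?_, fun x hx => ?_⟩
  · rw [← ofReal_norm]; exact ENNReal.ofReal_le_ofReal (hM x)
  · have : f x = 0 := image_eq_zero_of_notMem_tsupport fun h => hx (hR h)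
    simp [this]

lemma Iq_fin {n : ℕ} (hn : 1 ≤ n) {β q : ℝ} (hq : 0 < q) (h : -β < n / q) {f : Eu n → ℝ}
    (hf : Continuous f) (hs : HasCompactSupport f) : Iq β q f < ∞ := by
  obtain ⟨M, R, h1, h2, h3⟩ := bdd_supp hf hs
  exact cont_fin hn hq h h1 h2 h3

lemma Ip_fin {n : ℕ} (hn : 1 ≤ n) {β q : ℝ} (hq : 0 < q) (h : -β < n / q) {f : Eu n → ℝ}
    (hf : ContDiff ℝ 1 f) (hs : HasCompactSupport f) : Ip β q f < ∞ := by
  obtain ⟨M, R, h1, h2, h3⟩ := bdd_supp (hf.continuous_fderiv (by norm_num)) (hs.fderiv (𝕜 := ℝ))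
  exact cont_fin hn hq h h1 h2 h3

lemma power {n : ℕ} {s : ℝ} (hs : 1 ≤ s) {f : Eu n → ℝ} (hf : ContDiff ℝ 1 f)
    (hc : HasCompactSupport f) : ∃ g : Eu n → ℝ, ContDiff ℝ 1 g ∧ HasCompactSupport g ∧
      (∀ x, ‖g x‖ₑ = ‖f x‖ₑ ^ s) ∧
      ∀ x, ‖fderiv ℝ g x‖ₑ ≤ ENNReal.ofReal s * (‖f x‖ₑ ^ (s - 1) * ‖fderiv ℝ f x‖ₑ) := by
  rcases eq_or_lt_of_le hs with h | h
  · subst h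
    exact ⟨f, hf, hc, by simp, by simp⟩
  · refine ⟨fun x => ‖f x‖ ^ s, hf.norm_rpow h, ?_, ?_, ?_⟩
    · refine hc.comp_left (g := fun y => ‖y‖ ^ s) ?_
      rw [norm_zero, Real.zero_rpow (zero_lt_one.trans h).ne']
    · intro x
      rw [Real.enorm_eq_ofReal (by positivity), ← ENNReal.ofReal_rpow_of_nonneg (norm_nonneg _)
        (by linarith), ofReal_norm]
    · intro x
      have hs0 : (0:ℝ) ≤ s := by linarith
      have := enorm_fderiv_norm_rpow_le (hf.differentiable (by norm_num)) (x := x)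
        (p := ⟨s, hs0⟩) (by exact_mod_cast h)
      refine this.trans (le_of_eq ?_)
      rw [mul_assoc]
      congr 1
      · rw [ENNReal.ofReal]; congr 1
        ext; rw [Real.coe_toNNReal _ hs0]; rfl

lemma holder3 {n : ℕ} {F G H : Eu n → ℝ≥0∞} (hF : AEMeasurable F) (hG : AEMeasurable G)
    (hH : AEMeasurable H) {a b c : ℝ} (ha : 0 ≤ a) (hb : 0 ≤ b) (hc : 0 ≤ c) (h : a + b + c = 1) :
    ∫⁻ x, F x ^ a * G x ^ b * H x ^ c ≤ (∫⁻ x, F x) ^ a * (∫⁻ x, G x) ^ b * (∫⁻ x, H x) ^ c := by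
  have := ENNReal.lintegral_prod_norm_pow_le (μ := (volume : Measure (Eu n))) (Finset.univ : Finset (Fin 3))
    (f := ![F, G, H]) (by intro i _; fin_cases i <;> assumption) (p := ![a, b, c])
    (by simpa [Fin.sum_univ_three] using h) (by intro i _; fin_cases i <;> assumption)
  simpa [Fin.prod_univ_three] using this

lemma arith {n p q r α β γ a Δ τ : ℝ} (hn : 0 < n) (ha : 0 < a)
    (hbal : γ + n / r = a * (α - 1 + n / p) + (1 - a) * (β + n / q))
    (hΔ : Δ = -γ + a * α + (1 - a) * β) (hτ : τ = 1 - (1 - Δ / a) / n) :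
    1 / r = a * τ - a + a * (1 / p) + (1 - a) * (1 / q) := by
  have h1 : n * (a * τ) = n * a - a + Δ := by
    rw [hτ]; field_simp; ring
  have h2 : n * (1 / r) = n * (a * τ - a + a * (1 / p) + (1 - a) * (1 / q)) := by
    have e1 : n / r = n * (1 / r) := by ring
    have e2 : n / p = n * (1 / p) := by ring
    have e3 : n / q = n * (1 / q) := by ring
    rw [e1, e2, e3] at hbal
    linear_combination hbal - h1 - hΔ
  exact mul_left_cancel₀ hn.ne' h2

lemma tau_bd {n a Δ τ : ℝ} (hn : 0 < n) (ha : 0 < a) (h0 : 0 ≤ Δ) (h1 : Δ ≤ a)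
    (hτ : τ = 1 - (1 - Δ / a) / n) : 1 - 1 / n ≤ τ ∧ τ ≤ 1 := by
  have e1 : 0 ≤ Δ / a := by positivity
  have e2 : Δ / a ≤ 1 := (div_le_one ha).2 h1
  rw [hτ]
  constructor
  · gcongr; linarith
  · have : 0 ≤ (1 - Δ / a) / n := div_nonneg (by linarith) hn.le
    linarith

lemma base {n : ℕ} (hn : 1 ≤ n) {p q r α β γ a s δ : ℝ}
    (hp : 1 ≤ p) (hq : 1 ≤ q) (hr : 0 < r) (ha0 : 0 < a)
    (hbal : γ + (n : ℝ) / r = a * (α - 1 + (n : ℝ) / p) + (1 - a) * (β + (n : ℝ) / q))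
    (hΔ0 : 0 ≤ -γ + a * α + (1 - a) * β) (hΔa : -γ + a * α + (1 - a) * β ≤ a)
    (hs : s = 1 + q * (1 - 1 / p)) (has : a * s < 1) (hδ : δ = α + (s - 1) * β)
    (CH : ℝ≥0∞) (hCH : CH ≠ ∞) : ∃ C : ℝ≥0∞, C ≠ ∞ ∧ ∀ h : Eu n → ℝ, ContDiff ℝ 1 h →
      HasCompactSupport h →
      ∫⁻ x, ‖x‖ₑ ^ (δ - 1) * ‖h x‖ₑ ^ s ≤
        CH * ∫⁻ x, ‖x‖ₑ ^ δ * (‖h x‖ₑ ^ (s - 1) * ‖fderiv ℝ h x‖ₑ) →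
      Iq γ r h ^ (1 / r) ≤ C * Ip α p h ^ (a / p) * Iq β q h ^ ((1 - a) / q) := by
  have hn0 : (0:ℝ) < n := by exact_mod_cast hn
  set Δ := -γ + a * α + (1 - a) * β with hΔ
  set τ := 1 - (1 - Δ / a) / n with hτ
  have hR := arith hn0 ha0 hbal hΔ hτ
  obtain ⟨ht0, ht1⟩ := tau_bd hn0 ha0 hΔ0 hΔa hτ
  obtain ⟨C, hC, hsob⟩ := sob hn δ ht0 ht1
  have hp0 : 0 < p := by linarith
  have hq0 : 0 < q := by linarith
  have hp1 : 1 / p ≤ 1 := by rw [div_le_one hp0]; exact hp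
  have hs1 : 1 ≤ s := by
    rw [hs]; have := mul_nonneg hq0.le (sub_nonneg.2 hp1); linarith
  have hsq : (s - 1) * (1 / q) = 1 - 1 / p := by rw [hs]; field_simp; ring
  have hR2 : 1 / r = a * τ + (1 - a * s) * (1 / q) := by
    rw [hR]; linear_combination a * hsq
  have hκ : 1 - a * r * τ = (1 - a * s) * (r / q) := by
    have : r * (1 / r) = 1 := by field_simp
    rw [hR2] at this
    linear_combination -this
  have hk0 : 0 ≤ (1 - a * s) * (r / q) := mul_nonneg (by linarith) (by positivity)
  set D := C * (ENNReal.ofReal s + CH) with hD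
  have hDt : D ≠ ∞ := ENNReal.mul_ne_top hC (ENNReal.add_ne_top.2 ⟨ENNReal.ofReal_ne_top, hCH⟩)
  refine ⟨D ^ a, ENNReal.rpow_ne_top_of_nonneg ha0.le hDt, fun h hh hhs hH => ?_⟩
  obtain ⟨g, hg, hgs, hg1, hg2⟩ := power hs1 hh hhs
  have m1 : Measurable (fun x => ‖h x‖ₑ) := hh.continuous.enorm.measurable
  have m2 : Measurable (fun x => ‖fderiv ℝ h x‖ₑ) :=
    (hh.continuous_fderiv (by norm_num)).enorm.measurable
  have m3 : Measurable (fun x => ‖g x‖ₑ) := hg.continuous.enorm.measurable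
  set P := ∫⁻ x, ‖x‖ₑ ^ δ * (‖h x‖ₑ ^ (s - 1) * ‖fderiv ℝ h x‖ₑ) with hP
  have hP1 : P ≤ Ip α p h ^ (1 / p) * Iq β q h ^ ((s - 1) * (1 / q)) := by
    have := ENNReal.lintegral_mul_norm_pow_le (μ := (volume : Measure (Eu n)))
      (f := fun x => (‖x‖ₑ ^ α * ‖fderiv ℝ h x‖ₑ) ^ p) (g := fun x => (‖x‖ₑ ^ β * ‖h x‖ₑ) ^ q)
      (by fun_prop) (by fun_prop) (p := 1 / p) (q := (s - 1) * (1 / q)) (by positivity)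
      (by rw [hsq]; linarith) (by rw [hsq]; ring)
    refine le_trans (le_of_eq ?_) this
    refine lintegral_congr_ae ?_
    filter_upwards [ae_ne hn] with x hx
    rw [← ENNReal.rpow_mul, ← ENNReal.rpow_mul, mul_one_div_cancel hp0.ne', ENNReal.rpow_one,
      show q * ((s - 1) * (1 / q)) = s - 1 by field_simp,
      ENNReal.mul_rpow_of_nonneg _ _ (by linarith), ← ENNReal.rpow_mul, hδ, wadd hx]
    rw [mul_comm (s-1) β]
    ring
  have hT : ∫⁻ x, (‖x‖ₑ ^ δ * ‖fderiv ℝ g x‖ₑ + ‖x‖ₑ ^ (δ - 1) * ‖g x‖ₑ) ≤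
      (ENNReal.ofReal s + CH) * P := by
    rw [lintegral_add_right _ (by fun_prop), add_mul]
    gcongr
    · rw [← lintegral_const_mul' _ _ ENNReal.ofReal_ne_top]
      refine lintegral_mono fun x => ?_
      calc _ ≤ ‖x‖ₑ ^ δ * (ENNReal.ofReal s * (‖h x‖ₑ ^ (s - 1) * ‖fderiv ℝ h x‖ₑ)) := by
            gcongr; exact hg2 x
        _ = _ := by ring
    · simp only [hg1]; exact hH
  have hB := (hsob g hg).holder (H := fun x => (‖x‖ₑ ^ β * ‖h x‖ₑ) ^ q) (κ := a * r)
    (by fun_prop) (by fun_prop) (by positivity) (by linarith)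
  rw [hκ] at hB
  have hI : Iq γ r h ≤ (D * P) ^ (a * r) * Iq β q h ^ ((1 - a * s) * (r / q)) := by
    refine le_trans (le_of_eq ?_) (hB.trans ?_)
    · refine lintegral_congr_ae ?_
      filter_upwards [ae_ne hn] with x hx
      have has0 : 0 ≤ 1 - a * s := by linarith
      have e1 : γ = a * (δ - 1 + n - n * τ) + (1 - a * s) * β := by
        have : n * τ = n - 1 + Δ / a := by rw [hτ]; field_simp; ring
        have h3 : a * (Δ / a) = Δ := by field_simp
        rw [this, hδ]
        linear_combination h3 + hΔ
      rw [hg1, ENNReal.mul_rpow_of_nonneg _ _ hr.le, ENNReal.mul_rpow_of_nonneg _ _ (by positivity),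
        ← ENNReal.rpow_mul (‖x‖ₑ ^ β * ‖h x‖ₑ), show q * ((1 - a * s) * (r / q)) = (1 - a * s) * r by
          field_simp, ENNReal.mul_rpow_of_nonneg _ _ (by positivity), ← ENNReal.rpow_mul,
          ← ENNReal.rpow_mul, ← ENNReal.rpow_mul, ← ENNReal.rpow_mul]
      have e2 : γ * r = (δ - 1 + n - n * τ) * (a * r) + β * ((1 - a * s) * r) := by
        linear_combination r * e1
      have e3 : r = s * (a * r) + (1 - a * s) * r := by ring
      rw [e2, wadd hx]
      nth_rewrite 3 [e3]
      rw [ENNReal.rpow_add_of_nonneg _ _ (by positivity) (by positivity)]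
      ring
    · rw [hD, mul_assoc]
      gcongr
      · rfl
  clear_value D
  calc Iq γ r h ^ (1 / r) ≤ ((D * P) ^ (a * r) * Iq β q h ^ ((1 - a * s) * (r / q))) ^ (1 / r) :=
        ENNReal.rpow_le_rpow hI (by positivity)
    _ = (D * P) ^ a * Iq β q h ^ ((1 - a * s) * (1 / q)) := by
        rw [ENNReal.mul_rpow_of_nonneg _ _ (by positivity), ← ENNReal.rpow_mul, ← ENNReal.rpow_mul]
        congr 2 <;> field_simp
    _ ≤ (D * (Ip α p h ^ (1 / p) * Iq β q h ^ ((s - 1) * (1 / q)))) ^ a *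
          Iq β q h ^ ((1 - a * s) * (1 / q)) := by gcongr
    _ = D ^ a * Ip α p h ^ (a / p) * (Iq β q h ^ ((s - 1) * (1 / q) * a) *
          Iq β q h ^ ((1 - a * s) * (1 / q))) := by
        rw [ENNReal.mul_rpow_of_nonneg _ _ ha0.le, ENNReal.mul_rpow_of_nonneg _ _ ha0.le,
          ← ENNReal.rpow_mul, ← ENNReal.rpow_mul, show 1 / p * a = a / p by ring]
        ring
    _ = _ := by
        rw [← ENNReal.rpow_add_of_nonneg]
        · congr 2; ring
        · rw [hsq]; exact mul_nonneg (by linarith) ha0.le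
        · exact mul_nonneg (by linarith) (by positivity)

/-- Case I' -/
lemma caseI' {n : ℕ} (hn : 1 ≤ n) {p q r α β γ a s δ : ℝ}
    (hp : 1 ≤ p) (hq : 1 ≤ q) (hr : 0 < r) (ha0 : 0 < a)
    (hbal : γ + (n : ℝ) / r = a * (α - 1 + (n : ℝ) / p) + (1 - a) * (β + (n : ℝ) / q))
    (hΔ0 : 0 ≤ -γ + a * α + (1 - a) * β) (hΔa : -γ + a * α + (1 - a) * β ≤ a)
    (hs : s = 1 + q * (1 - 1 / p)) (has : a * s < 1) (hδ : δ = α + (s - 1) * β)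
    (hD : 0 < δ - 1 + n) : ∃ C : ℝ≥0∞, C ≠ ∞ ∧ ∀ h : Eu n → ℝ, ContDiff ℝ 1 h →
      HasCompactSupport h →
      Iq γ r h ^ (1 / r) ≤ C * Ip α p h ^ (a / p) * Iq β q h ^ ((1 - a) / q) := by
  have hp0 : 0 < p := by linarith
  have hq0 : 0 < q := by linarith
  have hp1 : 1 / p ≤ 1 := by rw [div_le_one hp0]; exact hp
  have hs1 : 1 ≤ s := by
    rw [hs]; have := mul_nonneg hq0.le (sub_nonneg.2 hp1); linarith
  obtain ⟨C, hC, H⟩ := base hn hp hq hr ha0 hbal hΔ0 hΔa hs has hδ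
    (ENNReal.ofReal (1 / (δ - 1 + n)) * ENNReal.ofReal s)
    (ENNReal.mul_ne_top ENNReal.ofReal_ne_top ENNReal.ofReal_ne_top)
  refine ⟨C, hC, fun h hh hhs => H h hh hhs ?_⟩
  obtain ⟨g, hg, hgs, hg1, hg2⟩ := power hs1 hh hhs
  have := hardy hn hD hg hgs
  simp only [hg1, show δ - 1 + n - n = δ - 1 by ring, sub_add_cancel] at this
  refine this.trans ?_
  rw [mul_assoc]
  gcongr
  rw [← lintegral_const_mul' _ _ ENNReal.ofReal_ne_top]
  refine lintegral_mono fun x => ?_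
  calc _ ≤ ‖x‖ₑ ^ δ * (ENNReal.ofReal s * (‖h x‖ₑ ^ (s - 1) * ‖fderiv ℝ h x‖ₑ)) := by
        gcongr; exact hg2 x
    _ = _ := by ring

/-- Case I -/
lemma caseI {n : ℕ} (hn : 1 ≤ n) {p q r α β γ a s : ℝ}
    (hp : 1 ≤ p) (hq : 1 ≤ q) (hr : 0 < r) (ha0 : 0 < a) (ha1 : a ≤ 1)
    (hγ : -γ < (n : ℝ) / r)
    (hbal : γ + (n : ℝ) / r = a * (α - 1 + (n : ℝ) / p) + (1 - a) * (β + (n : ℝ) / q))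
    (hΔ0 : 0 ≤ -γ + a * α + (1 - a) * β) (hΔa : -γ + a * α + (1 - a) * β ≤ a)
    (hs : s = 1 + q * (1 - 1 / p)) (has : 1 ≤ a * s) :
    ∃ C : ℝ≥0∞, C ≠ ∞ ∧ ∀ h : Eu n → ℝ, ContDiff ℝ 1 h →
      HasCompactSupport h →
      Iq γ r h ^ (1 / r) ≤ C * Ip α p h ^ (a / p) * Iq β q h ^ ((1 - a) / q) := by
  have hn0 : (0:ℝ) < n := by exact_mod_cast hn
  set Δ := -γ + a * α + (1 - a) * β with hΔ
  set τ := 1 - (1 - Δ / a) / n with hτ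
  have hR := arith hn0 ha0 hbal hΔ hτ
  obtain ⟨ht0, ht1⟩ := tau_bd hn0 ha0 hΔ0 hΔa hτ
  have hp0 : 0 < p := by linarith
  have hq0 : 0 < q := by linarith
  have hsq : (s - 1) * (1 / q) = 1 - 1 / p := by rw [hs]; field_simp; ring
  have hR2 : 1 / r = a * τ + (1 - a * s) * (1 / q) := by
    rw [hR]; linear_combination a * hsq
  have hR3 : 1 / r ≤ a * τ := by
    rw [hR2]
    have : (1 - a * s) * (1 / q) ≤ 0 := mul_nonpos_of_nonpos_of_nonneg (by linarith) (by positivity)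
    linarith
  have hτ0 : 0 < τ := by
    have : 0 < a * τ := lt_of_lt_of_le (by positivity) hR3
    exact (mul_pos_iff_of_pos_left ha0).1 this
  set σ := r * τ with hσ
  have hσa : 1 / a ≤ σ := by
    rw [div_le_iff₀ hr] at hR3
    rw [div_le_iff₀ ha0, hσ]; linarith
  have ha1' : 1 ≤ 1 / a := by rw [le_div_iff₀ ha0]; linarith
  have hσ1 : 1 ≤ σ := by linarith
  set θ := 1 / a - 1 with hθ
  set δ := Δ / a + σ * γ with hδ
  have hnt : n * τ = n - 1 + Δ / a := by rw [hτ]; field_simp; ring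
  have he : δ - 1 + n - n * τ = γ * σ := by rw [hδ, hnt]; ring
  have hpos : 0 < δ - 1 + n := by
    have : δ - 1 + n = τ * (r * γ + n) := by rw [hσ] at he; linear_combination he
    rw [this]
    rw [lt_div_iff₀ hr] at hγ
    exact mul_pos hτ0 (by linarith)
  obtain ⟨C, hC, hsob⟩ := sob hn δ ht0 ht1
  set D := C * ((1 + ENNReal.ofReal (1 / (δ - 1 + n))) * ENNReal.ofReal σ) with hD
  have hDt : D ≠ ∞ := ENNReal.mul_ne_top hC (ENNReal.mul_ne_top
    (ENNReal.add_ne_top.2 ⟨by simp, ENNReal.ofReal_ne_top⟩) ENNReal.ofReal_ne_top)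
  refine ⟨D ^ a, ENNReal.rpow_ne_top_of_nonneg ha0.le hDt, fun h hh hhs => ?_⟩
  obtain ⟨g, hg, hgs, hg1, hg2⟩ := power hσ1 hh hhs
  have m1 : Measurable (fun x => ‖h x‖ₑ) := hh.continuous.enorm.measurable
  have m2 : Measurable (fun x => ‖fderiv ℝ h x‖ₑ) :=
    (hh.continuous_fderiv (by norm_num)).enorm.measurable
  have m3 : Measurable (fun x => ‖g x‖ₑ) := hg.continuous.enorm.measurable
  set P := ∫⁻ x, ‖x‖ₑ ^ δ * (‖h x‖ₑ ^ (σ - 1) * ‖fderiv ℝ h x‖ₑ) with hP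
  have hIr : Iq γ r h ≠ ∞ := (Iq_fin hn hr hγ hh.continuous hhs).ne
  by_cases hI0 : Iq γ r h = 0
  · rw [hI0, ENNReal.zero_rpow_of_pos (by positivity)]; exact zero_le
  have hrτ : 0 ≤ τ - 1 / (a * r) := by
    have : 1 / (a * r) = (1 / r) / a := by field_simp
    rw [this, sub_nonneg, div_le_iff₀ ha0]; linarith
  have hsum : 1 / p + θ * (1 / q) + (τ - 1 / (a * r)) = 1 := by
    have e1 : 1 / (a * r) = (1 / a) * (1 / r) := by field_simp
    have e2 : (1 / a) * a = 1 := by field_simp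
    rw [e1, hR, hθ]
    linear_combination (-τ + 1 - 1 / p + 1/q) * e2
  have hP1 : P ≤ Ip α p h ^ (1 / p) * Iq β q h ^ (θ * (1 / q)) *
      Iq γ r h ^ (τ - 1 / (a * r)) := by
    have := holder3 (n := n)
      (F := fun x => (‖x‖ₑ ^ α * ‖fderiv ℝ h x‖ₑ) ^ p) (G := fun x => (‖x‖ₑ ^ β * ‖h x‖ₑ) ^ q)
      (H := fun x => (‖x‖ₑ ^ γ * ‖h x‖ₑ) ^ r)
      (by fun_prop) (by fun_prop) (by fun_prop) (a := 1 / p) (b := θ * (1 / q))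
      (c := τ - 1 / (a * r)) (by positivity)
      (mul_nonneg (by linarith) (by positivity)) hrτ hsum
    refine le_trans (le_of_eq ?_) this
    refine lintegral_congr_ae ?_
    filter_upwards [ae_ne hn] with x hx
    have e3 : r * (τ - 1 / (a * r)) = σ - 1 / a := by rw [hσ]; field_simp
    rw [← ENNReal.rpow_mul, ← ENNReal.rpow_mul, ← ENNReal.rpow_mul, mul_one_div_cancel hp0.ne',
      ENNReal.rpow_one, show q * (θ * (1 / q)) = θ by field_simp, e3,
      ENNReal.mul_rpow_of_nonneg _ _ (by linarith), ENNReal.mul_rpow_of_nonneg _ _ (by linarith),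
      ← ENNReal.rpow_mul, ← ENNReal.rpow_mul]
    have e4 : δ = α + (β * θ + γ * (σ - 1 / a)) := by
      have : Δ / a = (1 / a) * (-γ) + (1 / a) * a * α + (1 / a - (1 / a) * a) * β := by
        rw [hΔ]; ring
      have e2 : (1 / a) * a = 1 := by field_simp
      rw [e2] at this
      rw [hδ, this, hθ]; ring
    have e5 : σ - 1 = θ + (σ - 1 / a) := by rw [hθ]; ring
    rw [e4, wadd hx, wadd hx, e5, ENNReal.rpow_add_of_nonneg _ _ (by linarith) (by linarith)]
    ring
  have hT : ∫⁻ x, (‖x‖ₑ ^ δ * ‖fderiv ℝ g x‖ₑ + ‖x‖ₑ ^ (δ - 1) * ‖g x‖ₑ) ≤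
      ((1 + ENNReal.ofReal (1 / (δ - 1 + n))) * ENNReal.ofReal σ) * P := by
    have := hardy hn hpos hg hgs
    simp only [show δ - 1 + n - n = δ - 1 by ring, sub_add_cancel] at this
    rw [lintegral_add_right _ (by fun_prop)]
    calc _ ≤ (1 + ENNReal.ofReal (1 / (δ - 1 + n))) * ∫⁻ x, ‖x‖ₑ ^ δ * ‖fderiv ℝ g x‖ₑ := by
          rw [add_mul, one_mul]; gcongr
      _ ≤ (1 + ENNReal.ofReal (1 / (δ - 1 + n))) * (ENNReal.ofReal σ * P) := by
          gcongr
          rw [← lintegral_const_mul' _ _ ENNReal.ofReal_ne_top]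
          refine lintegral_mono fun x => ?_
          calc _ ≤ ‖x‖ₑ ^ δ * (ENNReal.ofReal σ * (‖h x‖ₑ ^ (σ - 1) * ‖fderiv ℝ h x‖ₑ)) := by
                gcongr; exact hg2 x
            _ = _ := by ring
      _ = _ := by ring
  have hB : Iq γ r h ^ τ ≤ D * P := by
    rcases hsob g hg with ⟨h1, -⟩ | ⟨-, h2⟩
    · linarith
    · have h3 : Iq γ r h ≤ (D * P) ^ (1 / τ) := by
        refine le_trans (le_of_eq ?_) (h2.trans ?_)
        · refine lintegral_congr_ae ?_
          filter_upwards [ae_ne hn] with x hx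
          rw [hg1, he, ENNReal.rpow_mul, ← ENNReal.mul_rpow_of_nonneg _ _ (by linarith),
            ← ENNReal.rpow_mul]
          congr 1
          rw [hσ]; field_simp
        · rw [hD, mul_assoc]; gcongr
      calc _ ≤ ((D * P) ^ (1 / τ)) ^ τ := ENNReal.rpow_le_rpow h3 hτ0.le
        _ = _ := by rw [← ENNReal.rpow_mul, one_div_mul_cancel hτ0.ne', ENNReal.rpow_one]
  have hZ0 : Iq γ r h ^ (τ - 1 / (a * r)) ≠ 0 := by
    simp [ENNReal.rpow_eq_zero_iff, hI0, hIr]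
  have hZt : Iq γ r h ^ (τ - 1 / (a * r)) ≠ ∞ := ENNReal.rpow_ne_top_of_nonneg hrτ hIr
  have hfin : Iq γ r h ^ (1 / (a * r)) ≤
      D * (Ip α p h ^ (1 / p) * Iq β q h ^ (θ * (1 / q))) := by
    refine (ENNReal.mul_le_mul_iff_left hZ0 hZt).1 ?_
    rw [← ENNReal.rpow_add _ _ hI0 hIr, add_sub_cancel, mul_assoc]
    exact hB.trans (mul_le_mul_right hP1 _)
  clear_value D
  calc Iq γ r h ^ (1 / r) = (Iq γ r h ^ (1 / (a * r))) ^ a := by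
        rw [← ENNReal.rpow_mul]; congr 1; field_simp
    _ ≤ (D * (Ip α p h ^ (1 / p) * Iq β q h ^ (θ * (1 / q)))) ^ a :=
        ENNReal.rpow_le_rpow hfin ha0.le
    _ = _ := by
        rw [ENNReal.mul_rpow_of_nonneg _ _ ha0.le, ENNReal.mul_rpow_of_nonneg _ _ ha0.le,
          ← ENNReal.rpow_mul, ← ENNReal.rpow_mul, show 1 / p * a = a / p by ring,
          show θ * (1 / q) * a = (1 - a) / q by rw [hθ]; field_simp, mul_assoc]

lemma young {r R : ℝ} (hr : 0 < r) (hR : r < R) (x y : ℝ≥0∞) :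
    x ^ r * y ≤ x ^ R + y ^ (R / (R - r)) := by
  have h0 : 0 < R - r := by linarith
  rcases le_total y (x ^ (R - r)) with h | h
  · refine le_trans ?_ le_self_add
    calc _ ≤ x ^ r * x ^ (R - r) := by gcongr
      _ = _ := by rw [← ENNReal.rpow_add_of_nonneg _ _ hr.le h0.le]; congr 1; ring
  · refine le_trans ?_ le_add_self
    have hx : x ≤ y ^ (1 / (R - r)) := by
      calc x = (x ^ (R - r)) ^ (1 / (R - r)) := by
            rw [← ENNReal.rpow_mul, mul_one_div_cancel h0.ne', ENNReal.rpow_one]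
        _ ≤ _ := ENNReal.rpow_le_rpow h (by positivity)
    calc _ ≤ (y ^ (1 / (R - r))) ^ r * y := by gcongr
      _ = y ^ (r / (R - r)) * y ^ (1:ℝ) := by
          rw [← ENNReal.rpow_mul, ENNReal.rpow_one]; congr 2; ring
      _ = _ := by
          rw [← ENNReal.rpow_add_of_nonneg _ _ (by positivity) (by norm_num)]
          congr 1; field_simp; ring

lemma le_one_add_pow {q : ℝ} (hq : 1 ≤ q) (x : ℝ≥0∞) : x ≤ 1 + x ^ q := by
  rcases le_total x 1 with h | h
  · exact h.trans le_self_add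
  · refine le_trans ?_ le_add_self
    calc x = x ^ (1:ℝ) := (ENNReal.rpow_one x).symm
      _ ≤ x ^ q := ENNReal.rpow_le_rpow_of_exponent_le h hq

lemma add_pow_le {p : ℝ} (hp : 0 ≤ p) (x y : ℝ≥0∞) : (x + y) ^ p ≤ 2 ^ p * (x ^ p + y ^ p) := by
  rcases le_total x y with h | h
  · calc _ ≤ (2 * y) ^ p := by
          refine ENNReal.rpow_le_rpow ?_ hp
          rw [two_mul]; gcongr
      _ = 2 ^ p * y ^ p := ENNReal.mul_rpow_of_nonneg _ _ hp
      _ ≤ _ := by gcongr; exact le_add_self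
  · calc _ ≤ (2 * x) ^ p := by
          refine ENNReal.rpow_le_rpow ?_ hp
          rw [two_mul]; gcongr
      _ = 2 ^ p * x ^ p := ENNReal.mul_rpow_of_nonneg _ _ hp
      _ ≤ _ := by gcongr; exact le_self_add

lemma vol_fin {n : ℕ} {R : ℝ} : volume (Metric.ball (0 : Eu n) R) < ∞ := measure_ball_lt_top

/-- gradient part of the local estimate -/
lemma gradBd {n : ℕ} (hn : 1 ≤ n) {p α : ℝ} (hp : 1 ≤ p) (hA : α - 1 + n / p ≤ 0)
    (hA' : p = 1 ∨ α - 1 + n / p < 0) : ∃ J : ℝ≥0∞, J ≠ ∞ ∧ ∀ f : Eu n → ℝ,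
      ContDiff ℝ 1 f → Ip α p f ≤ 1 →
      ∫⁻ x in Metric.ball 0 2, ‖x‖ₑ ^ (1 - (n:ℝ)) * ‖fderiv ℝ f x‖ₑ ≤ J := by
  have hp0 : 0 < p := by linarith
  by_cases h1 : p = 1
  · subst h1
    have h2 : 0 ≤ 1 - (n:ℝ) - α := by simp at hA; linarith
    refine ⟨2 ^ (1 - (n:ℝ) - α), ENNReal.rpow_ne_top_of_nonneg h2 (by simp), fun f hf hI => ?_⟩
    calc _ ≤ ∫⁻ x in Metric.ball 0 2, 2 ^ (1 - (n:ℝ) - α) * (‖x‖ₑ ^ α * ‖fderiv ℝ f x‖ₑ) ^ (1:ℝ) := by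
          refine setLIntegral_mono_ae' Metric.isOpen_ball.measurableSet ?_
          filter_upwards [ae_ne hn] with x hx hxb
          rw [ENNReal.rpow_one, show 1 - (n:ℝ) = (1 - (n:ℝ) - α) + α by ring, wadd hx, mul_assoc]
          simp only [add_sub_cancel_right]
          gcongr
          rw [← ofReal_norm]
          calc _ ≤ ENNReal.ofReal 2 := ENNReal.ofReal_le_ofReal (by
                rw [mem_ball_zero_iff] at hxb; exact hxb.le)
            _ = 2 := by simp
      _ ≤ ∫⁻ x, 2 ^ (1 - (n:ℝ) - α) * (‖x‖ₑ ^ α * ‖fderiv ℝ f x‖ₑ) ^ (1:ℝ) := setLIntegral_le_lintegral _ _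
      _ = 2 ^ (1 - (n:ℝ) - α) * Ip α 1 f :=
          lintegral_const_mul' _ _ (ENNReal.rpow_ne_top_of_nonneg h2 (by simp))
      _ ≤ 2 ^ (1 - (n:ℝ) - α) * 1 := by gcongr
      _ = _ := mul_one _
  · have hA2 : α - 1 + n / p < 0 := by tauto
    have hp1 : 1 < p := lt_of_le_of_ne hp (Ne.symm h1)
    set c := (1 - (n:ℝ) - α) * (p / (p - 1)) with hc
    have hc0 : -(n:ℝ) < c := by
      have h3 : 0 < p - 1 := by linarith
      have h4 : p * (α - 1 + n / p) < 0 := mul_neg_of_pos_of_neg hp0 hA2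
      have h5 : p * (α - 1 + n / p) = p * α - p + n := by field_simp
      rw [hc, ← mul_div_assoc, lt_div_iff₀ h3]
      nlinarith
    refine ⟨1 + ∫⁻ x : Eu n in Metric.ball 0 2, ‖x‖ₑ ^ c, ENNReal.add_ne_top.2 ⟨by simp,
      (fin_ball hn hc0).ne⟩, fun f hf hI => ?_⟩
    calc _ ≤ ∫⁻ x in Metric.ball 0 2, ((‖x‖ₑ ^ α * ‖fderiv ℝ f x‖ₑ) ^ p + ‖x‖ₑ ^ c) := by
          refine setLIntegral_mono_ae' Metric.isOpen_ball.measurableSet ?_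
          filter_upwards [ae_ne hn] with x hx hxb
          have := young one_pos hp1 (‖x‖ₑ ^ α * ‖fderiv ℝ f x‖ₑ) (‖x‖ₑ ^ (1 - (n:ℝ) - α))
          rw [ENNReal.rpow_one, ← ENNReal.rpow_mul] at this
          refine le_trans (le_of_eq ?_) this
          have e : ‖x‖ₑ ^ (1 - (n:ℝ)) = ‖x‖ₑ ^ α * ‖x‖ₑ ^ (1 - (n:ℝ) - α) := by
            rw [← wadd hx]; congr 1; ring
          rw [e]; ring
      _ = (∫⁻ x in Metric.ball 0 2, (‖x‖ₑ ^ α * ‖fderiv ℝ f x‖ₑ) ^ p)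
            + ∫⁻ x : Eu n in Metric.ball 0 2, ‖x‖ₑ ^ c := by
          rw [lintegral_add_right _ (by fun_prop)]
      _ ≤ _ := by
          gcongr
          exact (setLIntegral_le_lintegral _ _).trans hI

/-- zeroth order part of the local estimate -/
lemma zeroBd {n : ℕ} {q β : ℝ} (hq : 1 ≤ q) : ∃ J : ℝ≥0∞, J ≠ ∞ ∧ ∀ f : Eu n → ℝ,
      Iq β q f ≤ 1 →
      ∫⁻ x in Metric.ball 0 2 \ Metric.ball 0 1, ‖f x‖ₑ ≤ J := by
  have f1 : (4:ℝ≥0∞) ^ |-β| ≠ ∞ := ENNReal.rpow_ne_top_of_nonneg (abs_nonneg _) (by simp)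
  refine ⟨4 ^ |-β| * (volume (Metric.ball (0 : Eu n) 2) + 1), ENNReal.mul_ne_top f1
    (ENNReal.add_ne_top.2 ⟨vol_fin.ne, by simp⟩), fun f hI => ?_⟩
  have hm : MeasurableSet (Metric.ball (0 : Eu n) 2 \ Metric.ball 0 1) :=
    Metric.isOpen_ball.measurableSet.diff Metric.isOpen_ball.measurableSet
  calc _ ≤ ∫⁻ x in Metric.ball 0 2 \ Metric.ball 0 1,
        4 ^ |-β| * (1 + (‖x‖ₑ ^ β * ‖f x‖ₑ) ^ q) := by
        refine setLIntegral_mono_ae' hm (Filter.Eventually.of_forall fun x hx => ?_)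
        obtain ⟨a1, a2⟩ := hx
        rw [mem_ball_zero_iff] at a1 a2
        have hx0 : x ≠ 0 := by
          rintro rfl; simp at a2
        have b1 : ‖x‖ₑ ≤ 4 * 1 := by
          rw [← ofReal_norm, show (4:ℝ≥0∞) * 1 = ENNReal.ofReal 4 by simp]
          exact ENNReal.ofReal_le_ofReal (by linarith)
        have b2 : 1 ≤ 4 * ‖x‖ₑ := by
          have : (1:ℝ≥0∞) ≤ ‖x‖ₑ := by
            rw [← ofReal_norm, ← ENNReal.ofReal_one]
            exact ENNReal.ofReal_le_ofReal (by linarith)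
          exact this.trans (le_mul_of_one_le_left zero_le (by norm_num))
        have b3 := cmp (e0 hx0) one_ne_zero ENNReal.one_ne_top b1 b2 (-β)
        rw [ENNReal.one_rpow, mul_one] at b3
        have e : ‖x‖ₑ ^ (-β) * ‖x‖ₑ ^ β = 1 := by rw [← wadd hx0]; simp
        calc ‖f x‖ₑ = ‖x‖ₑ ^ (-β) * (‖x‖ₑ ^ β * ‖f x‖ₑ) := by rw [← mul_assoc, e, one_mul]
          _ ≤ _ := by
            gcongr
            exact le_one_add_pow hq _
    _ ≤ ∫⁻ x in Metric.ball 0 2, 4 ^ |-β| * (1 + (‖x‖ₑ ^ β * ‖f x‖ₑ) ^ q) :=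
        lintegral_mono_set sdiff_subset
    _ = 4 ^ |-β| * (volume (Metric.ball (0 : Eu n) 2) +
          ∫⁻ x in Metric.ball 0 2, (‖x‖ₑ ^ β * ‖f x‖ₑ) ^ q) := by
        rw [lintegral_const_mul' _ _ f1, lintegral_add_left measurable_const]
        simp
    _ ≤ _ := by
        gcongr
        exact (setLIntegral_le_lintegral _ _).trans hI

lemma localBd {n : ℕ} (hn : 1 ≤ n) {p q α β : ℝ} (hp : 1 ≤ p) (hq : 1 ≤ q)
    (hA : α - 1 + n / p ≤ 0) (hA' : p = 1 ∨ α - 1 + n / p < 0) :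
    ∃ J : ℝ≥0∞, J ≠ ∞ ∧ ∀ f : Eu n → ℝ, ContDiff ℝ 1 f → Ip α p f ≤ 1 → Iq β q f ≤ 1 →
      ∀ ρ : ℝ, 0 < ρ → ρ ≤ 1 →
      ∫⁻ x in Metric.closedBall 0 ρ, ‖f x‖ₑ ≤ ENNReal.ofReal ρ ^ (n:ℝ) * J := by
  obtain ⟨J1, hJ1, H1⟩ := gradBd hn hp hA hA'
  obtain ⟨J2, hJ2, H2⟩ := zeroBd (n := n) (β := β) hq
  let b : ContDiffBump (0 : Eu n) := ⟨1, 2, by norm_num, by norm_num⟩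
  have hbc : ContDiff ℝ 1 b := b.contDiff
  obtain ⟨M, hM⟩ := (hbc.continuous_fderiv (by norm_num)).bounded_above_of_compact_support
    (b.hasCompactSupport.fderiv (𝕜 := ℝ))
  refine ⟨J1 + ENNReal.ofReal M * J2, ENNReal.add_ne_top.2 ⟨hJ1,
    ENNReal.mul_ne_top ENNReal.ofReal_ne_top hJ2⟩, fun f hf hI1 hI2 ρ hρ hρ1 => ?_⟩
  have hn1 : (1:ℝ) ≤ n := by exact_mod_cast hn
  have h := avg hn hρ (u := fun x => b x * f x) (hbc.mul hf) b.hasCompactSupport.mul_right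
  have e1 : ∫⁻ x in Metric.closedBall 0 ρ, ‖b x * f x‖ₑ = ∫⁻ x in Metric.closedBall 0 ρ, ‖f x‖ₑ := by
    refine setLIntegral_congr_fun Metric.isClosed_closedBall.measurableSet fun x hx => ?_
    have : b x = 1 := b.one_of_mem_closedBall (Metric.closedBall_subset_closedBall hρ1 hx)
    simp [this]
  rw [e1] at h
  refine h.trans ?_
  gcongr
  have hm : MeasurableSet (Metric.ball (0 : Eu n) 2 \ Metric.ball 0 1) :=
    Metric.isOpen_ball.measurableSet.diff Metric.isOpen_ball.measurableSet
  calc _ ≤ ∫⁻ x, ((Metric.ball (0 : Eu n) 2).indicator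
            (fun x => ‖x‖ₑ ^ (1 - (n:ℝ)) * ‖fderiv ℝ f x‖ₑ) x
          + (Metric.ball (0 : Eu n) 2 \ Metric.ball 0 1).indicator
            (fun x => ENNReal.ofReal M * ‖f x‖ₑ) x) := by
        refine lintegral_mono_ae ?_
        have hsph : ∀ᵐ x : Eu n, x ∉ Metric.sphere (0 : Eu n) 2 := by
          have := Measure.addHaar_sphere_of_ne_zero (volume : Measure (Eu n)) (0 : Eu n) (r := 2)
            (by norm_num)
          exact measure_eq_zero_iff_ae_notMem.1 this
        filter_upwards [hsph] with x hx
        have hd : fderiv ℝ (fun x => b x * f x) x = b x • fderiv ℝ f x + f x • fderiv ℝ b x :=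
          fderiv_fun_mul (hbc.differentiable (by norm_num) x) (hf.differentiable (by norm_num) x)
        rw [hd]
        have z0 : ‖(0 : Eu n →L[ℝ] ℝ)‖ₑ = 0 := by rw [← ofReal_norm, norm_zero, ENNReal.ofReal_zero]
        by_cases hx2 : x ∈ Metric.ball (0 : Eu n) 2
        · rw [indicator_of_mem hx2]
          have hb1 : ‖b x‖ₑ ≤ 1 := by
            rw [Real.enorm_eq_ofReal b.nonneg, ENNReal.ofReal_le_one]
            exact b.le_one
          refine (mul_le_mul_right (enorm_add_le (b x • fderiv ℝ f x) _) _).trans ?_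
          rw [enorm_smul, enorm_smul, mul_add]
          refine add_le_add ?_ ?_
          · gcongr
            exact (mul_le_mul_left hb1 _).trans (one_mul _).le
          · by_cases hx1 : x ∈ Metric.ball (0 : Eu n) 1
            · have : fderiv ℝ b x = 0 := by
                have h3 : (b : Eu n → ℝ) =ᶠ[nhds x] fun _ => 1 := by
                  filter_upwards [Metric.isOpen_ball.mem_nhds hx1] with y hy
                  exact b.one_of_mem_closedBall (Metric.ball_subset_closedBall hy)
                rw [h3.fderiv_eq]; simp
              rw [this, z0, mul_zero, mul_zero]
              exact zero_le
            · rw [indicator_of_mem (show x ∈ _ \ _ from ⟨hx2, hx1⟩)]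
              rw [mem_ball_zero_iff, not_lt] at hx1
              have a1 : ‖x‖ₑ ^ (1 - (n:ℝ)) ≤ 1 := by
                have hx1' : 1 ≤ ‖x‖ₑ := by
                  rw [← ofReal_norm]; exact ENNReal.one_le_ofReal.2 hx1
                calc _ ≤ ‖x‖ₑ ^ (0:ℝ) := ENNReal.rpow_le_rpow_of_exponent_le hx1' (by linarith)
                  _ = 1 := ENNReal.rpow_zero
              have a2 : ‖fderiv ℝ b x‖ₑ ≤ ENNReal.ofReal M := by
                rw [← ofReal_norm]; exact ENNReal.ofReal_le_ofReal (hM x)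
              calc _ ≤ 1 * (‖f x‖ₑ * ENNReal.ofReal M) := by gcongr
                _ = _ := by ring
        · have hx3 : x ∉ tsupport b := by
            rw [b.tsupport_eq]
            intro h4
            have h5 : ‖x‖ ≤ 2 := by simpa using h4
            have h6 : ¬ ‖x‖ < 2 := by simpa using hx2
            have h7 : ¬ ‖x‖ = 2 := by simpa using hx
            exact h7 (le_antisymm h5 (not_lt.1 h6))
          have a1 : b x = 0 := image_eq_zero_of_notMem_tsupport hx3
          have a2 : fderiv ℝ b x = 0 := by
            by_contra h0
            exact hx3 (support_fderiv_subset ℝ h0)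
          rw [a1, a2, zero_smul, smul_zero, add_zero, z0, mul_zero]
          exact zero_le
    _ = (∫⁻ x in Metric.ball 0 2, ‖x‖ₑ ^ (1 - (n:ℝ)) * ‖fderiv ℝ f x‖ₑ) +
          ENNReal.ofReal M * ∫⁻ x in Metric.ball 0 2 \ Metric.ball 0 1, ‖f x‖ₑ := by
        have m1 : Measurable (fun x => ‖f x‖ₑ) := hf.continuous.enorm.measurable
        rw [lintegral_add_right, lintegral_indicator Metric.isOpen_ball.measurableSet,
          lintegral_indicator hm, lintegral_const_mul' _ _ ENNReal.ofReal_ne_top]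
        exact Measurable.indicator (by fun_prop) hm
    _ ≤ _ := by
        gcongr
        · exact H1 f hf hI1
        · exact H2 f hI2

/-- consequence: a pointwise bound at the origin -/
lemma zero_val {n : ℕ} {f : Eu n → ℝ} (hf : Continuous f) {J : ℝ≥0∞} {c : ℝ}
    (h : ∀ ρ : ℝ, 0 < ρ → ρ ≤ 1 →
      ∫⁻ x in Metric.closedBall 0 ρ, ‖f x‖ₑ ≤ ENNReal.ofReal ρ ^ (n:ℝ) * J)
    (hJ : J < ENNReal.ofReal c * volume (Metric.ball (0 : Eu n) 1)) : |f 0| ≤ c := by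
  by_contra! hc
  have h1 : ∀ᶠ x in nhds (0 : Eu n), c < |f x| := hf.abs.continuousAt.eventually_const_lt hc
  obtain ⟨ε, hε, h2⟩ := Metric.eventually_nhds_iff_ball.1 h1
  set ρ := min (ε / 2) 1 with hρ
  have hρ0 : 0 < ρ := by positivity
  have hρe : ρ < ε := lt_of_le_of_lt (min_le_left _ _) (by linarith)
  have h3 := h ρ hρ0 (min_le_right _ _)
  have h4 : ENNReal.ofReal c * volume (Metric.closedBall (0 : Eu n) ρ) ≤
      ∫⁻ x in Metric.closedBall 0 ρ, ‖f x‖ₑ := by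
    rw [← setLIntegral_const]
    refine setLIntegral_mono_ae' Metric.isClosed_closedBall.measurableSet
      (Filter.Eventually.of_forall fun x hx => ?_)
    rw [← ofReal_norm, Real.norm_eq_abs]
    exact ENNReal.ofReal_le_ofReal (h2 x (Metric.closedBall_subset_ball hρe hx)).le
  rw [Measure.addHaar_closedBall _ _ hρ0.le, finrank_euclideanSpace_fin] at h4
  have h5 := h4.trans h3
  have e : ENNReal.ofReal (ρ ^ n) = ENNReal.ofReal ρ ^ (n:ℝ) := by
    rw [ENNReal.ofReal_rpow_of_pos hρ0, Real.rpow_natCast]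
  have g0 : ENNReal.ofReal ρ ^ (n:ℝ) ≠ 0 := by
    rw [← e]; simpa using pow_pos hρ0 n
  have gt : ENNReal.ofReal ρ ^ (n:ℝ) ≠ ∞ := by rw [← e]; exact ENNReal.ofReal_ne_top
  rw [e, mul_left_comm, ENNReal.mul_le_mul_iff_right g0 gt] at h5
  exact absurd hJ (not_lt.2 h5)

lemma jap_le {n : ℕ} (c : ℝ) (hc : 0 ≤ c) (x : Eu n) : (1 + ‖x‖ ^ 2) ^ (-c / 2) ≤ 1 :=
  Real.rpow_le_one_of_one_le_of_nonpos (by nlinarith [sq_nonneg ‖x‖]) (by linarith)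

lemma jap_le' {n : ℕ} (c : ℝ) (hc : 0 ≤ c) (x : Eu n) (hx : 1 ≤ ‖x‖) :
    (1 + ‖x‖ ^ 2) ^ (-c / 2) ≤ ‖x‖ ^ (-c) := by
  have h : ‖x‖ ^ (-c) = (‖x‖ ^ 2) ^ (-c / 2) := by
    rw [← Real.rpow_natCast, ← Real.rpow_mul (norm_nonneg x)]; congr 1; push_cast; ring
  rw [h]
  refine Real.rpow_le_rpow_of_nonpos (by positivity) (by linarith) (by linarith)

lemma kappa {n : ℕ} {B : ℝ} (hB : 0 < B) : ∃ κ : Eu n → ℝ, ContDiff ℝ 1 κ ∧ (∀ x, 0 < κ x) ∧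
    κ 0 = 1 ∧ (∀ x, κ x ≤ 1) ∧ (∀ x, ‖x‖ ≤ 1 → 2 ^ (-B / 2) ≤ κ x) ∧
    (∀ x, 1 ≤ ‖x‖ → 2 ^ (-B / 2) * ‖x‖ ^ (-B) ≤ κ x) ∧
    (∀ x, 1 ≤ ‖x‖ → κ x ≤ ‖x‖ ^ (-B)) ∧ (∀ x, ‖fderiv ℝ κ x‖ ≤ B) ∧
    (∀ x, 1 ≤ ‖x‖ → ‖fderiv ℝ κ x‖ ≤ B * ‖x‖ ^ (-(B + 1))) := by
  have hpos : ∀ x : Eu n, 0 < 1 + ‖x‖ ^ 2 := fun x => by positivity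
  have hd : ∀ x : Eu n, ‖fderiv ℝ (fun x : Eu n => (1 + ‖x‖ ^ 2) ^ (-B / 2)) x‖ ≤
      B * (1 + ‖x‖ ^ 2) ^ (-(B + 1) / 2) := by
    intro x
    have h1 : HasFDerivAt (fun x : Eu n => 1 + ‖x‖ ^ 2) (2 • (innerSL ℝ x)) x := by
      have := (hasStrictFDerivAt_norm_sq x).hasFDerivAt
      exact this.const_add 1
    have h2 := h1.rpow_const (p := -B / 2) (Or.inl (hpos x).ne')
    rw [h2.fderiv, norm_smul]
    have h3 : ‖(2 • (innerSL ℝ x) : Eu n →L[ℝ] ℝ)‖ ≤ 2 * ‖x‖ := by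
      rw [two_smul, two_mul]
      refine (norm_add_le _ _).trans ?_
      rw [innerSL_apply_norm]
    have h4 : ‖x‖ ≤ (1 + ‖x‖ ^ 2) ^ ((1:ℝ) / 2) := by
      rw [← Real.sqrt_eq_rpow]
      exact Real.le_sqrt_of_sq_le (by linarith)
    have h5 : (1 + ‖x‖ ^ 2) ^ (-(B + 1) / 2) =
        (1 + ‖x‖ ^ 2) ^ (-B / 2 - 1) * (1 + ‖x‖ ^ 2) ^ ((1:ℝ) / 2) := by
      rw [← Real.rpow_add (hpos x)]; congr 1; ring
    have h6 : 0 < (1 + ‖x‖ ^ 2) ^ (-B / 2 - 1) := Real.rpow_pos_of_pos (hpos x) _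
    rw [norm_mul, Real.norm_eq_abs, Real.norm_eq_abs, abs_of_pos h6,
      show |(-B / 2)| = B / 2 by rw [abs_of_neg (by linarith)]; ring, h5]
    calc _ ≤ B / 2 * (1 + ‖x‖ ^ 2) ^ (-B / 2 - 1) * (2 * (1 + ‖x‖ ^ 2) ^ ((1:ℝ) / 2)) := by
          gcongr; exact h3.trans (by linarith)
      _ = _ := by ring
  refine ⟨fun x => (1 + ‖x‖ ^ 2) ^ (-B / 2), ?_, fun x => Real.rpow_pos_of_pos (hpos x) _, by simp,
    jap_le B hB.le, ?_, ?_, jap_le' B hB.le, ?_, ?_⟩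
  · exact ContDiff.rpow_const_of_ne (contDiff_const.add (contDiff_norm_sq ℝ)) fun x => (hpos x).ne'
  · intro x hx
    refine Real.rpow_le_rpow_of_nonpos (hpos x) ?_ (by linarith)
    nlinarith [norm_nonneg x]
  · intro x hx
    have h : ‖x‖ ^ (-B) = (‖x‖ ^ 2) ^ (-B / 2) := by
      rw [← Real.rpow_natCast, ← Real.rpow_mul (norm_nonneg x)]; congr 1; push_cast; ring
    rw [h, ← Real.mul_rpow (by norm_num) (by positivity)]
    refine Real.rpow_le_rpow_of_nonpos (hpos x) ?_ (by linarith)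
    nlinarith [norm_nonneg x]
  · intro x
    exact (hd x).trans (mul_le_of_le_one_right hB.le (jap_le _ (by linarith) x))
  · intro x hx
    exact (hd x).trans (mul_le_mul_of_nonneg_left (jap_le' _ (by linarith) x hx) hB.le)

lemma dec_fin {n : ℕ} (hn : 1 ≤ n) {α p c : ℝ} (hp : 0 < p) (h : -α < n / p)
    (h' : α - c + n / p < 0) {M : ℝ≥0∞} (hM : M ≠ ∞) {F : Eu n → ℝ≥0∞} (h1 : ∀ x, F x ≤ M)
    (h2 : ∀ x : Eu n, 1 ≤ ‖x‖ → F x ≤ M * ‖x‖ₑ ^ (-c)) : ∫⁻ x, (‖x‖ₑ ^ α * F x) ^ p < ∞ := by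
  have hMp : M ^ p ≠ ∞ := ENNReal.rpow_ne_top_of_nonneg hp.le hM
  rw [← lintegral_add_compl _ (Metric.isOpen_ball (x := (0 : Eu n)) (ε := 1)).measurableSet]
  refine ENNReal.add_lt_top.2 ⟨?_, ?_⟩
  · calc _ ≤ ∫⁻ x in Metric.ball (0 : Eu n) 1, M ^ p * ‖x‖ₑ ^ (α * p) := by
          refine lintegral_mono fun x => ?_
          rw [ENNReal.mul_rpow_of_nonneg _ _ hp.le, ← ENNReal.rpow_mul, mul_comm]
          gcongr
          exact h1 x
      _ < ∞ := by
          rw [lintegral_const_mul' _ _ hMp]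
          refine ENNReal.mul_lt_top hMp.lt_top (fin_ball hn ?_)
          rw [lt_div_iff₀ hp] at h
          linarith
  · calc _ ≤ ∫⁻ x in (Metric.ball (0 : Eu n) 1)ᶜ, M ^ p * ‖x‖ₑ ^ ((α - c) * p) := by
          refine setLIntegral_mono' Metric.isOpen_ball.measurableSet.compl fun x hx => ?_
          have hx1 : 1 ≤ ‖x‖ := by simpa using hx
          have hx0 : x ≠ 0 := by rintro rfl; simp at hx1; linarith
          calc _ ≤ (‖x‖ₑ ^ α * (M * ‖x‖ₑ ^ (-c))) ^ p := by gcongr; exact h2 x hx1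
            _ = (M * ‖x‖ₑ ^ (α - c)) ^ p := by
                rw [sub_eq_add_neg, ENNReal.rpow_add _ _ (e0 hx0) enorm_ne_top]; congr 1; ring
            _ = _ := by rw [ENNReal.mul_rpow_of_nonneg _ _ hp.le, ← ENNReal.rpow_mul]
      _ < ∞ := by
          rw [lintegral_const_mul' _ _ hMp]
          refine ENNReal.mul_lt_top hMp.lt_top (fin_ext hn ?_)
          have := mul_neg_of_neg_of_pos h' hp
          have e : (n:ℝ) / p * p = n := by field_simp
          nlinarith

lemma trunc {n : ℕ} : ∃ M : ℝ, 0 ≤ M ∧ ∀ f k : Eu n → ℝ, ContDiff ℝ 1 f → HasCompactSupport f →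
    ContDiff ℝ 1 k → (∀ x, 0 < k x) → ∃ h : Eu n → ℝ, ContDiff ℝ 1 h ∧ HasCompactSupport h ∧
      (∀ x, |h x| ≤ |f x|) ∧ (∀ x, |f x| ≤ |h x| + 2 * k x) ∧
      (∀ x, ‖fderiv ℝ h x‖ ≤ (1 + 2 * M) * ‖fderiv ℝ f x‖ + 4 * M * ‖fderiv ℝ k x‖) ∧
      ∀ x, h x ≠ 0 → k x < |f x| := by
  let b : ContDiffBump (0 : ℝ) := ⟨1, 2, by norm_num, by norm_num⟩
  have hbc : ContDiff ℝ 1 (b : ℝ → ℝ) := b.contDiff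
  obtain ⟨M, hM⟩ := (hbc.continuous_deriv le_rfl).bounded_above_of_compact_support
    (b.hasCompactSupport.deriv)
  have hM0 : 0 ≤ M := (norm_nonneg _).trans (hM 0)
  refine ⟨M, hM0, fun f k hf hfc hk hk0 => ⟨fun x => f x * (1 - b (f x / k x)), ?_, ?_, ?_, ?_, ?_, ?_⟩⟩
  · have : ContDiff ℝ 1 fun x => f x / k x := hf.div hk fun x => (hk0 x).ne'
    exact hf.mul (contDiff_const.sub (hbc.comp this))
  · exact hfc.mul_right
  · intro x
    rw [abs_mul]
    refine mul_le_of_le_one_right (abs_nonneg _) ?_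
    rw [abs_of_nonneg (by linarith [b.le_one (x := f x / k x)])]
    linarith [b.nonneg (x := f x / k x)]
  · intro x
    by_cases h2 : |f x| ≤ 2 * k x
    · have := abs_nonneg (f x * (1 - b (f x / k x))); linarith
    · have h3 : b (f x / k x) = 0 := by
        refine b.zero_of_le_dist ?_
        simp only [dist_zero_right, Real.norm_eq_abs, abs_div, abs_of_pos (hk0 x)]
        rw [le_div_iff₀ (hk0 x)]
        exact (not_le.1 h2).le
      simp only [h3]
      have := hk0 x
      simp; linarith
  · intro x
    have d1 := ((hf.differentiable one_ne_zero) x).hasFDerivAt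
    have d2 := ((hk.differentiable one_ne_zero) x).hasFDerivAt
    have d3 : DifferentiableAt ℝ (fun x => f x / k x) x :=
      (hf.div hk fun x => (hk0 x).ne').differentiable one_ne_zero x
    set u' := fderiv ℝ (fun x => f x / k x) x with hu'
    have d4 : fderiv ℝ f x = (f x / k x) • fderiv ℝ k x + k x • u' := by
      have e1 : f = fun y => (f y / k y) * k y := by
        funext y; rw [div_mul_cancel₀ _ (hk0 y).ne']
      have e2 := d3.hasFDerivAt.mul d2
      have e3 : HasFDerivAt f _ x := HasFDerivAt.congr_of_eventuallyEq e2
        (Filter.Eventually.of_forall fun y => congrFun e1 y)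
      exact e3.fderiv
    have d5 : HasFDerivAt (fun y => 1 - b (f y / k y)) (-(deriv b (f x / k x) • u')) x := by
      have := ((hbc.differentiable one_ne_zero) (f x / k x)).hasDerivAt.comp_hasFDerivAt x
        d3.hasFDerivAt
      simpa using this.const_sub 1
    have d6 := d1.mul d5
    have d7 : fderiv ℝ (fun x => f x * (1 - b (f x / k x))) x =
        f x • (-(deriv b (f x / k x) • u')) + (1 - b (f x / k x)) • fderiv ℝ f x := d6.fderiv
    rw [d7]
    set t := f x / k x with ht
    have e4 : f x • (-(deriv b t • u')) =
        (-(t * deriv b t)) • fderiv ℝ f x + (t ^ 2 * deriv b t) • fderiv ℝ k x := by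
      rw [d4]
      have : f x = t * k x := by rw [ht, div_mul_cancel₀ _ (hk0 x).ne']
      rw [this]
      module
    have hb1 : |1 - b t| ≤ 1 := by
      rw [abs_of_nonneg (by linarith [b.le_one (x := t)])]; linarith [b.nonneg (x := t)]
    have ht2 : |t * deriv b t| ≤ 2 * M ∧ |t ^ 2 * deriv b t| ≤ 4 * M := by
      by_cases h2 : |t| ≤ 2
      · have := hM t
        rw [Real.norm_eq_abs] at this
        rw [abs_mul, abs_mul, abs_pow]
        exact ⟨by gcongr, by
          have : |t| ^ 2 ≤ 4 := by nlinarith [abs_nonneg t]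
          gcongr⟩
      · have : deriv b t = 0 := by
          by_contra h0
          have := support_deriv_subset h0
          rw [b.tsupport_eq] at this
          exact h2 (by simpa using this)
        rw [this]; simp [hM0]
    rw [e4]
    calc _ ≤ ‖(-(t * deriv b t)) • fderiv ℝ f x‖ + ‖(t ^ 2 * deriv b t) • fderiv ℝ k x‖ +
          ‖(1 - b t) • fderiv ℝ f x‖ := (norm_add_le _ _).trans (by gcongr; exact norm_add_le _ _)
      _ ≤ 2 * M * ‖fderiv ℝ f x‖ + 4 * M * ‖fderiv ℝ k x‖ + 1 * ‖fderiv ℝ f x‖ := by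
          rw [norm_smul, norm_smul, norm_smul, norm_neg]
          gcongr
          · exact ht2.1
          · exact ht2.2
          · exact hb1
      _ = _ := by ring
  · intro x hx
    by_contra! h2
    refine hx ?_
    have : b (f x / k x) = 1 := by
      refine b.one_of_mem_closedBall ?_
      simp only [Metric.mem_closedBall, dist_zero_right, Real.norm_eq_abs, abs_div,
        abs_of_pos (hk0 x)]
      rw [div_le_iff₀ (hk0 x)]
      linarith
    simp [this]

lemma split_bd {n : ℕ} {α p : ℝ} (hp : 0 < p) {F G H : Eu n → ℝ≥0∞} {c1 c2 : ℝ≥0∞}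
    (hc1 : c1 ≠ ∞) (hc2 : c2 ≠ ∞) (hG : Measurable G) (h : ∀ x, F x ≤ c1 * G x + c2 * H x) :
    ∫⁻ x, (‖x‖ₑ ^ α * F x) ^ p ≤
      2 ^ p * (c1 ^ p * (∫⁻ x, (‖x‖ₑ ^ α * G x) ^ p) + c2 ^ p * ∫⁻ x, (‖x‖ₑ ^ α * H x) ^ p) := by
  have f1 := ENNReal.rpow_ne_top_of_nonneg hp.le hc1
  have f2 := ENNReal.rpow_ne_top_of_nonneg hp.le hc2
  have f3 : (2:ℝ≥0∞) ^ p ≠ ∞ := ENNReal.rpow_ne_top_of_nonneg hp.le (by simp)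
  rw [← lintegral_const_mul' _ _ f1, ← lintegral_const_mul' _ _ f2, ← lintegral_add_left,
    ← lintegral_const_mul' _ _ f3]
  · refine lintegral_mono fun x => ?_
    calc _ ≤ (c1 * (‖x‖ₑ ^ α * G x) + c2 * (‖x‖ₑ ^ α * H x)) ^ p := by
          refine ENNReal.rpow_le_rpow ?_ hp.le
          refine (mul_le_mul_right (h x) _).trans (le_of_eq ?_)
          ring
      _ ≤ _ := add_pow_le hp.le _ _
      _ = _ := by rw [ENNReal.mul_rpow_of_nonneg c1 _ hp.le, ENNReal.mul_rpow_of_nonneg c2 _ hp.le]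
  · fun_prop

lemma fin_away {n : ℕ} (hn : 1 ≤ n) {h : Eu n → ℝ} (hc : Continuous h) (hs : HasCompactSupport h)
    (h0 : ∀ᶠ x in nhds (0 : Eu n), h x = 0) (d : ℝ) : ∫⁻ x, ‖x‖ₑ ^ d * ‖h x‖ₑ ≠ ∞ := by
  obtain ⟨ρ, hρ, h1⟩ := Metric.eventually_nhds_iff_ball.1 h0
  have hn0 : (0:ℝ) < n := by exact_mod_cast hn
  have f0 := Iq_fin hn (β := d + |d|) (q := 1) one_pos (by
    have := neg_abs_le d
    rw [div_one]; linarith) hc hs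
  have hρ' : ENNReal.ofReal ρ ≠ 0 := by simpa using hρ
  have f1 : (ENNReal.ofReal ρ) ^ (-|d|) ≠ ∞ :=
    ENNReal.rpow_ne_top_of_ne_zero hρ' ENNReal.ofReal_ne_top
  refine ne_of_lt (lt_of_le_of_lt ?_ (ENNReal.mul_lt_top f1.lt_top f0))
  rw [Iq, ← lintegral_const_mul' _ _ f1]
  refine lintegral_mono fun x => ?_
  by_cases hx : x ∈ Metric.ball (0 : Eu n) ρ
  · simp [h1 x hx]
  · rw [mem_ball_zero_iff, not_lt] at hx
    have hx0 : x ≠ 0 := by rintro rfl; simp at hx; linarith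
    have hx' : ENNReal.ofReal ρ ≤ ‖x‖ₑ := by
      rw [← ofReal_norm]; exact ENNReal.ofReal_le_ofReal hx
    rw [ENNReal.rpow_one, ← mul_assoc]
    gcongr
    calc ‖x‖ₑ ^ d = ‖x‖ₑ ^ (-|d|) * ‖x‖ₑ ^ (d + |d|) := by
          rw [← ENNReal.rpow_add _ _ (e0 hx0) enorm_ne_top]; congr 1; ring
      _ ≤ _ := by
          gcongr ?_ * _
          rw [ENNReal.rpow_neg, ENNReal.rpow_neg]
          gcongr

lemma supp_bd {n : ℕ} {q β B c Λ : ℝ} (hq : 1 ≤ q) (hB : B = β + n / q) (hc : 0 < c) (hΛ : 1 ≤ Λ)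
    {J : ℝ≥0∞} {f h : Eu n → ℝ} (hh : Continuous h)
    (hI : Iq β q f ≤ 1)
    (hJ : ∀ ρ : ℝ, 0 < ρ → ρ ≤ 1 →
      ∫⁻ x in Metric.closedBall 0 ρ, ‖f x‖ₑ ≤ ENNReal.ofReal ρ ^ (n:ℝ) * J)
    (h1 : ∀ x, h x ≠ 0 → ‖x‖ ≤ 1 → Λ * c ≤ |f x|)
    (h2 : ∀ x, h x ≠ 0 → 1 ≤ ‖x‖ → Λ * (c * ‖x‖ ^ (-B)) ≤ |f x|) (j : ℤ) :
    ENNReal.ofReal Λ * volume ({x | h x ≠ 0} ∩ K n j) ≤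
      (ENNReal.ofReal c⁻¹ ^ q * 4 ^ (n:ℝ) + ENNReal.ofReal c⁻¹ * J * 2 ^ (n:ℝ)) *
        rho j ^ (n:ℝ) := by
  have hm : MeasurableSet ({x | h x ≠ 0} ∩ K n j) :=
    (isOpen_ne_fun hh continuous_const).measurableSet.inter (measK j)
  have hq0 : 0 < q := by linarith
  have hS : ENNReal.ofReal Λ * volume ({x | h x ≠ 0} ∩ K n j) =
      ∫⁻ x in {x | h x ≠ 0} ∩ K n j, ENNReal.ofReal Λ := by
    rw [setLIntegral_const]
  rw [hS, add_mul]
  rcases le_or_gt 0 j with hj | hj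
  · refine le_trans ?_ le_self_add
    have f1 : ENNReal.ofReal c⁻¹ ^ q * 4 ^ (n:ℝ) * rho j ^ (n:ℝ) ≠ ∞ := by
      refine ENNReal.mul_ne_top (ENNReal.mul_ne_top ?_ ?_) ?_
      · exact ENNReal.rpow_ne_top_of_nonneg hq0.le ENNReal.ofReal_ne_top
      · exact ENNReal.rpow_ne_top_of_nonneg (by positivity) (by simp)
      · exact ENNReal.rpow_ne_top_of_nonneg (by positivity) (rhot j)
    calc _ ≤ ∫⁻ x in {x | h x ≠ 0} ∩ K n j, ENNReal.ofReal c⁻¹ ^ q * 4 ^ (n:ℝ) * rho j ^ (n:ℝ) *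
          (‖x‖ₑ ^ β * ‖f x‖ₑ) ^ q := by
          refine setLIntegral_mono' hm fun x hx => ?_
          have hx1 : 1 ≤ ‖x‖ := le_trans (one_le_zpow₀ (by norm_num) hj) hx.2.1
          have hx0 : 0 < ‖x‖ := by linarith
          have hxn : x ≠ 0 := norm_pos_iff.1 hx0
          have a1 := h2 x hx.1 hx1
          have a2 : Λ ≤ c⁻¹ * (‖x‖ ^ B * |f x|) := by
            rw [Real.rpow_neg hx0.le] at a1
            have hxB := Real.rpow_pos_of_pos hx0 B
            calc Λ = c⁻¹ * (‖x‖ ^ B * (Λ * (c * (‖x‖ ^ B)⁻¹))) := by field_simp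
              _ ≤ _ := by gcongr
          have a3 : ENNReal.ofReal Λ ≤ ENNReal.ofReal c⁻¹ * (‖x‖ₑ ^ B * ‖f x‖ₑ) := by
            rw [← ofReal_norm x, ENNReal.ofReal_rpow_of_pos hx0, Real.enorm_eq_ofReal_abs,
              ← ENNReal.ofReal_mul (by positivity), ← ENNReal.ofReal_mul (by positivity)]
            exact ENNReal.ofReal_le_ofReal a2
          have a4 : ENNReal.ofReal Λ ≤ ENNReal.ofReal Λ ^ q := by
            calc _ = ENNReal.ofReal Λ ^ (1:ℝ) := (ENNReal.rpow_one _).symm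
              _ ≤ _ := ENNReal.rpow_le_rpow_of_exponent_le (ENNReal.one_le_ofReal.2 hΛ) hq
          have a5 : (‖x‖ₑ ^ ((n:ℝ) / q)) ^ q ≤ 4 ^ (n:ℝ) * rho j ^ (n:ℝ) := by
            rw [← ENNReal.rpow_mul, div_mul_cancel₀ _ hq0.ne',
              ← ENNReal.mul_rpow_of_nonneg _ _ (by positivity)]
            exact ENNReal.rpow_le_rpow (Kt_b1 (K_sub j hx.2)) (by positivity)
          calc _ ≤ (ENNReal.ofReal c⁻¹ * (‖x‖ₑ ^ B * ‖f x‖ₑ)) ^ q :=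
                a4.trans (ENNReal.rpow_le_rpow a3 hq0.le)
            _ = (ENNReal.ofReal c⁻¹ * (‖x‖ₑ ^ ((n:ℝ) / q) * (‖x‖ₑ ^ β * ‖f x‖ₑ))) ^ q := by
                rw [hB, ENNReal.rpow_add _ _ (e0 hxn) enorm_ne_top]; congr 1; ring
            _ = ENNReal.ofReal c⁻¹ ^ q * (‖x‖ₑ ^ ((n:ℝ) / q)) ^ q * (‖x‖ₑ ^ β * ‖f x‖ₑ) ^ q := by
                rw [ENNReal.mul_rpow_of_nonneg _ _ hq0.le, ENNReal.mul_rpow_of_nonneg _ _ hq0.le,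
                  mul_assoc]
            _ ≤ _ := by
                rw [mul_assoc (ENNReal.ofReal c⁻¹ ^ q) (4 ^ (n:ℝ))]
                gcongr
      _ ≤ ENNReal.ofReal c⁻¹ ^ q * 4 ^ (n:ℝ) * rho j ^ (n:ℝ) * Iq β q f := by
          rw [lintegral_const_mul' _ _ f1]
          gcongr
          exact setLIntegral_le_lintegral _ _
      _ ≤ _ := mul_le_of_le_one_right zero_le hI
  · refine le_trans ?_ le_add_self
    have hsub : {x | h x ≠ 0} ∩ K n j ⊆ Metric.closedBall 0 ((2:ℝ) ^ (j + 1)) := by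
      intro x hx
      simpa using hx.2.2.le
    have hj1 : (2:ℝ) ^ (j + 1) ≤ 1 := zpow_le_one_of_nonpos₀ (by norm_num) (by omega)
    calc _ ≤ ∫⁻ x in {x | h x ≠ 0} ∩ K n j, ENNReal.ofReal c⁻¹ * ‖f x‖ₑ := by
          refine setLIntegral_mono' hm fun x hx => ?_
          have hx1 : ‖x‖ ≤ 1 := hx.2.2.le.trans hj1
          have a1 := h1 x hx.1 hx1
          rw [Real.enorm_eq_ofReal_abs, ← ENNReal.ofReal_mul (by positivity)]
          refine ENNReal.ofReal_le_ofReal ?_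
          calc Λ = c⁻¹ * (Λ * c) := by field_simp
            _ ≤ _ := by gcongr
      _ ≤ ENNReal.ofReal c⁻¹ * ∫⁻ x in Metric.closedBall 0 ((2:ℝ) ^ (j + 1)), ‖f x‖ₑ := by
          rw [lintegral_const_mul' _ _ ENNReal.ofReal_ne_top]
          gcongr
      _ ≤ ENNReal.ofReal c⁻¹ * (ENNReal.ofReal ((2:ℝ) ^ (j + 1)) ^ (n:ℝ) * J) := by
          gcongr
          exact hJ _ (by positivity) hj1
      _ = _ := by
          rw [zpow_add_one₀ (by norm_num), ENNReal.ofReal_mul (by positivity),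
            ENNReal.mul_rpow_of_nonneg _ _ (by positivity)]
          simp only [rho, ENNReal.ofReal_ofNat]
          ring

lemma caseII {n : ℕ} (hn : 1 ≤ n) {p q r α β γ a s δ : ℝ}
    (hp : 1 ≤ p) (hq : 1 ≤ q) (hr : 0 < r) (ha0 : 0 < a)
    (hγ : -γ < (n : ℝ) / r) (hα : -α < (n : ℝ) / p) (hβ : -β < (n : ℝ) / q)
    (hbal : γ + (n : ℝ) / r = a * (α - 1 + (n : ℝ) / p) + (1 - a) * (β + (n : ℝ) / q))
    (hΔ0 : 0 ≤ -γ + a * α + (1 - a) * β) (hΔa : -γ + a * α + (1 - a) * β ≤ a)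
    (hs : s = 1 + q * (1 - 1 / p)) (has : a * s < 1) (hδ : δ = α + (s - 1) * β)
    (hAB : α - 1 + (n:ℝ) / p < β + n / q)
    (hA : α - 1 + (n:ℝ) / p ≤ 0) (hA' : p = 1 ∨ α - 1 + (n:ℝ) / p < 0) :
    ∃ C : ℝ≥0∞, C ≠ ∞ ∧ ∀ f : Eu n → ℝ, ContDiff ℝ 1 f →
      HasCompactSupport f → Ip α p f ≤ 1 → Iq β q f ≤ 1 → Iq γ r f ≤ C := by
  have hp0 : 0 < p := by linarith
  have hq0 : 0 < q := by linarith
  have hs1 : 1 ≤ s := by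
    have : 1 / p ≤ 1 := by rw [div_le_one hp0]; exact hp
    nlinarith
  have hs0 : 0 < s := by linarith
  have ha1 : a < 1 := by nlinarith
  obtain ⟨B, hB⟩ : ∃ B, B = β + (n:ℝ) / q := ⟨_, rfl⟩
  have hB0 : 0 < B := by linarith
  have hGB : γ + (n:ℝ) / r < B := by rw [hbal, ← hB]; rw [← hB] at hAB; nlinarith
  obtain ⟨κ, κc, κpos, κ0, κ1, κ2, κ3, κ4, κ5, κ6⟩ := kappa (n := n) hB0
  obtain ⟨M, hM0, HT⟩ := trunc (n := n)
  obtain ⟨ε, hε, HH⟩ := hardy2 hn δ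
  obtain ⟨J, hJ, HJ⟩ := localBd hn hp hq (β := β) hA hA'
  obtain ⟨C, hC, HC⟩ := base hn hp hq hr ha0 hbal hΔ0 hΔa hs has hδ (ENNReal.ofReal s)
    ENNReal.ofReal_ne_top
  have hc : (0:ℝ) < 2 ^ (-B / 2) := by positivity
  obtain ⟨c, hcdef⟩ : ∃ c : ℝ, c = 2 ^ (-B / 2) := ⟨_, rfl⟩
  rw [← hcdef] at hc κ2 κ3
  -- finiteness for κ
  have en : ∀ x : Eu n, 1 ≤ ‖x‖ → ∀ d : ℝ, ENNReal.ofReal (‖x‖ ^ d) = ‖x‖ₑ ^ d := by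
    intro x hx d
    rw [← ofReal_norm x, ENNReal.ofReal_rpow_of_pos (by linarith)]
  have F1 : Ip α p κ < ∞ := by
    refine dec_fin hn (c := B + 1) hp0 hα (by linarith) (M := ENNReal.ofReal B)
      ENNReal.ofReal_ne_top (fun x => ?_) (fun x hx => ?_)
    · rw [← ofReal_norm]; exact ENNReal.ofReal_le_ofReal (κ5 x)
    · rw [← ofReal_norm, ← en x hx, ← ENNReal.ofReal_mul hB0.le]
      exact ENNReal.ofReal_le_ofReal (κ6 x hx)
  have F2 : Iq γ r κ < ∞ := by
    refine dec_fin hn (c := B) hr hγ (by linarith) (M := 1) (by simp) (fun x => ?_) (fun x hx => ?_)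
    · rw [Real.enorm_eq_ofReal (κpos x).le]; exact ENNReal.ofReal_le_one.2 (κ1 x)
    · rw [Real.enorm_eq_ofReal (κpos x).le, one_mul, ← en x hx]
      exact ENNReal.ofReal_le_ofReal (κ4 x hx)
  -- choice of Λ
  set Cs : ℝ≥0∞ := ENNReal.ofReal c⁻¹ ^ q * 4 ^ (n:ℝ) + ENNReal.ofReal c⁻¹ * J * 2 ^ (n:ℝ) with hCs
  have hCsf : Cs ≠ ∞ := by
    refine ENNReal.add_ne_top.2 ⟨ENNReal.mul_ne_top ?_ ?_, ENNReal.mul_ne_top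
      (ENNReal.mul_ne_top ENNReal.ofReal_ne_top hJ) ?_⟩
    · exact ENNReal.rpow_ne_top_of_nonneg hq0.le ENNReal.ofReal_ne_top
    · exact ENNReal.rpow_ne_top_of_nonneg (by positivity) (by simp)
    · exact ENNReal.rpow_ne_top_of_nonneg (by positivity) (by simp)
  obtain ⟨N1, hN1⟩ := ENNReal.exists_nat_mul_gt hε hCsf
  have hV : volume (Metric.ball (0 : Eu n) 1) ≠ 0 := (Metric.measure_ball_pos _ _ one_pos).ne'
  obtain ⟨N2, hN2⟩ := ENNReal.exists_nat_mul_gt hV hJ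
  obtain ⟨Λ, hΛ⟩ : ∃ Λ : ℝ, Λ = N1 + 2 * N2 + 1 := ⟨_, rfl⟩
  have hΛ1 : 1 ≤ Λ := by rw [hΛ]; linarith [(Nat.cast_nonneg N1 : (0:ℝ) ≤ N1), (Nat.cast_nonneg N2 : (0:ℝ) ≤ N2)]
  have hΛ0 : 0 < Λ := by linarith
  have hΛa : Cs ≤ ENNReal.ofReal Λ * ε := by
    refine hN1.le.trans ?_
    gcongr
    rw [← ENNReal.ofReal_natCast]
    refine ENNReal.ofReal_le_ofReal ?_
    rw [hΛ]; linarith [(Nat.cast_nonneg N2 : (0:ℝ) ≤ N2)]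
  have hΛb : J < ENNReal.ofReal (Λ / 2) * volume (Metric.ball (0 : Eu n) 1) := by
    refine hN2.trans_le ?_
    gcongr
    rw [← ENNReal.ofReal_natCast]
    refine ENNReal.ofReal_le_ofReal ?_
    rw [hΛ]; linarith [(Nat.cast_nonneg N1 : (0:ℝ) ≤ N1)]
  -- constants
  set P : ℝ≥0∞ := 2 ^ p * (ENNReal.ofReal (1 + 2 * M) ^ p * 1 +
    ENNReal.ofReal (4 * M * Λ) ^ p * Ip α p κ) with hP
  have hPf : P ≠ ∞ := by
    refine ENNReal.mul_ne_top (ENNReal.rpow_ne_top_of_nonneg hp0.le (by simp))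
      (ENNReal.add_ne_top.2 ⟨?_, ?_⟩)
    · rw [mul_one]; exact ENNReal.rpow_ne_top_of_nonneg hp0.le ENNReal.ofReal_ne_top
    · exact ENNReal.mul_ne_top (ENNReal.rpow_ne_top_of_nonneg hp0.le ENNReal.ofReal_ne_top) F1.ne
  set Q : ℝ≥0∞ := (C * P ^ (a / p)) ^ r with hQ
  have hQf : Q ≠ ∞ := ENNReal.rpow_ne_top_of_nonneg hr.le (ENNReal.mul_ne_top hC
    (ENNReal.rpow_ne_top_of_nonneg (by positivity) hPf))
  refine ⟨2 ^ r * (1 ^ r * Q + ENNReal.ofReal (2 * Λ) ^ r * Iq γ r κ), ?_, ?_⟩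
  · refine ENNReal.mul_ne_top (ENNReal.rpow_ne_top_of_nonneg hr.le (by simp))
      (ENNReal.add_ne_top.2 ⟨?_, ?_⟩)
    · rw [ENNReal.one_rpow, one_mul]; exact hQf
    · exact ENNReal.mul_ne_top (ENNReal.rpow_ne_top_of_nonneg hr.le ENNReal.ofReal_ne_top) F2.ne
  intro f hf hfc hI1 hI2
  have kc : ContDiff ℝ 1 (fun x => Λ * κ x) := contDiff_const.mul κc
  have kpos : ∀ x, 0 < Λ * κ x := fun x => mul_pos hΛ0 (κpos x)
  have kd : ∀ x, ‖fderiv ℝ (fun x => Λ * κ x) x‖ = Λ * ‖fderiv ℝ κ x‖ := by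
    intro x
    rw [fderiv_const_mul (κc.differentiable one_ne_zero x), norm_smul, Real.norm_of_nonneg hΛ0.le]
  obtain ⟨h, hhc, hhs, hh1, hh2, hh3, hh4⟩ := HT f _ hf hfc kc kpos
  have hloc := HJ f hf hI1 hI2
  -- h vanishes near 0
  have hnear : ∀ᶠ x in nhds (0 : Eu n), h x = 0 := by
    have z := zero_val hf.continuous hloc hΛb
    have z1 : |f 0| < Λ * κ 0 := by rw [κ0]; linarith
    have z2 : ∀ᶠ x in nhds (0 : Eu n), |f x| < Λ * κ x :=
      hf.continuous.abs.continuousAt.eventually_lt kc.continuous.continuousAt z1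
    filter_upwards [z2] with x hx
    by_contra h0
    exact absurd (hh4 x h0) (not_lt.2 hx.le)
  -- support fraction
  have hsup : ∀ j, volume ({x | h x ≠ 0} ∩ K n j) ≤ ε * rho j ^ (n:ℝ) := by
    intro j
    have s1 := supp_bd hq hB hc hΛ1 hhc.continuous hI2 hloc
      (fun x hx hx1 => (mul_le_mul_of_nonneg_left (κ2 x hx1) hΛ0.le).trans (hh4 x hx).le)
      (fun x hx hx1 => (mul_le_mul_of_nonneg_left (κ3 x hx1) hΛ0.le).trans (hh4 x hx).le) j
    have s2 : ENNReal.ofReal Λ * volume ({x | h x ≠ 0} ∩ K n j) ≤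
        ENNReal.ofReal Λ * (ε * rho j ^ (n:ℝ)) := by
      refine s1.trans ?_
      rw [← mul_assoc]
      gcongr
    rwa [ENNReal.mul_le_mul_iff_right (by simpa using hΛ0) ENNReal.ofReal_ne_top] at s2
  obtain ⟨g, hg1, hg2, hg3, hg4⟩ := power hs1 hhc hhs
  have gz : ∀ x, g x = 0 ↔ h x = 0 := by
    intro x
    have := hg3 x
    rw [← enorm_eq_zero, this, ENNReal.rpow_eq_zero_iff_of_pos hs0, enorm_eq_zero]
  have hardyg := HH g hg1 (fin_away hn hg1.continuous hg2
    (hnear.mono fun x hx => (gz x).2 hx) _) (by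
      intro j
      have e : {x | g x ≠ 0} = {x | h x ≠ 0} := by
        ext x; exact not_congr (gz x)
      rw [e]; exact hsup j)
  have hHardy : ∫⁻ x, ‖x‖ₑ ^ (δ - 1) * ‖h x‖ₑ ^ s ≤
        ENNReal.ofReal s * ∫⁻ x, ‖x‖ₑ ^ δ * (‖h x‖ₑ ^ (s - 1) * ‖fderiv ℝ h x‖ₑ) := by
    calc _ = ∫⁻ x, ‖x‖ₑ ^ (δ - 1) * ‖g x‖ₑ := by simp only [hg3]
      _ ≤ _ := hardyg
      _ ≤ ∫⁻ x, ENNReal.ofReal s * (‖x‖ₑ ^ δ * (‖h x‖ₑ ^ (s - 1) * ‖fderiv ℝ h x‖ₑ)) := by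
          refine lintegral_mono fun x => ?_
          refine (mul_le_mul_right (hg4 x) _).trans (le_of_eq ?_)
          ring
      _ = _ := lintegral_const_mul' _ _ ENNReal.ofReal_ne_top
  have hfin := HC h hhc hhs hHardy
  have hPh : Ip α p h ≤ P := by
    refine (split_bd hp0 (c1 := ENNReal.ofReal (1 + 2 * M)) (c2 := ENNReal.ofReal (4 * M * Λ))
      (G := fun x => ‖fderiv ℝ f x‖ₑ) (H := fun x => ‖fderiv ℝ κ x‖ₑ)
      ENNReal.ofReal_ne_top ENNReal.ofReal_ne_top
      (hf.continuous_fderiv one_ne_zero).enorm.measurable (fun x => ?_)).trans ?_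
    · rw [← ofReal_norm, ← ofReal_norm, ← ofReal_norm, ← ENNReal.ofReal_mul (by positivity),
        ← ENNReal.ofReal_mul (by positivity), ← ENNReal.ofReal_add (by positivity) (by positivity)]
      refine ENNReal.ofReal_le_ofReal ((hh3 x).trans (le_of_eq ?_))
      rw [kd]; ring
    · rw [hP]
      gcongr
      · exact hI1
      · exact le_rfl
  have hQh : Iq β q h ≤ 1 := by
    refine le_trans ?_ hI2
    refine lintegral_mono fun x => ?_
    have : ‖h x‖ₑ ≤ ‖f x‖ₑ := by
      rw [Real.enorm_eq_ofReal_abs, Real.enorm_eq_ofReal_abs]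
      exact ENNReal.ofReal_le_ofReal (hh1 x)
    gcongr
  have hrh : Iq γ r h ≤ Q := by
    calc Iq γ r h = (Iq γ r h ^ (1 / r)) ^ r := by
          rw [← ENNReal.rpow_mul, one_div_mul_cancel hr.ne', ENNReal.rpow_one]
      _ ≤ (C * P ^ (a / p) * 1 ^ ((1 - a) / q)) ^ r := by
          refine ENNReal.rpow_le_rpow (hfin.trans ?_) hr.le
          have : 0 ≤ (1 - a) / q := div_nonneg (by linarith) hq0.le
          gcongr
      _ = Q := by rw [ENNReal.one_rpow, mul_one]
  refine (split_bd hr (c1 := 1) (c2 := ENNReal.ofReal (2 * Λ))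
      (G := fun x => ‖h x‖ₑ) (H := fun x => ‖κ x‖ₑ)
      (by simp) ENNReal.ofReal_ne_top hhc.continuous.enorm.measurable (fun x => ?_)).trans ?_
  · rw [Real.enorm_eq_ofReal_abs, Real.enorm_eq_ofReal_abs, Real.enorm_eq_ofReal (κpos x).le,
      one_mul, ← ENNReal.ofReal_mul (by positivity),
      ← ENNReal.ofReal_add (by positivity) (mul_nonneg (by positivity) (κpos x).le)]
    refine ENNReal.ofReal_le_ofReal ((hh2 x).trans (le_of_eq ?_))
    ring
  · gcongr
    · exact hrh
    · exact le_rfl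

/-- normalized inequality -/
def Norm (n : ℕ) (p q r α β γ : ℝ) : Prop :=
  ∃ C : ℝ≥0∞, C ≠ ∞ ∧ ∀ f : Eu n → ℝ, ContDiff ℝ 1 f →
      HasCompactSupport f → Ip α p f ≤ 1 → Iq β q f ≤ 1 → Iq γ r f ≤ C

/-- product inequality -/
def PIneq (n : ℕ) (p q r α β γ a : ℝ) : Prop :=
  ∃ C : ℝ≥0∞, C ≠ ∞ ∧ ∀ h : Eu n → ℝ, ContDiff ℝ 1 h → HasCompactSupport h →
      Iq γ r h ^ (1 / r) ≤ C * Ip α p h ^ (a / p) * Iq β q h ^ ((1 - a) / q)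

lemma PIneq.norm {n : ℕ} {p q r α β γ a : ℝ} (hp : 1 ≤ p) (hq : 1 ≤ q) (hr : 0 < r) (ha0 : 0 < a)
    (ha1 : a ≤ 1) (h : PIneq n p q r α β γ a) : Norm n p q r α β γ := by
  obtain ⟨C, hC, H⟩ := h
  have hp0 : 0 < p := by linarith
  have hq0 : 0 < q := by linarith
  refine ⟨C ^ r, ENNReal.rpow_ne_top_of_nonneg hr.le hC, fun f hf hfc h1 h2 => ?_⟩
  have h3 : 0 ≤ (1 - a) / q := div_nonneg (by linarith) hq0.le
  calc Iq γ r f = (Iq γ r f ^ (1 / r)) ^ r := by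
          rw [← ENNReal.rpow_mul, one_div_mul_cancel hr.ne', ENNReal.rpow_one]
    _ ≤ (C * 1 ^ (a / p) * 1 ^ ((1 - a) / q)) ^ r := by
        refine ENNReal.rpow_le_rpow ((H f hf hfc).trans ?_) hr.le
        gcongr
    _ = _ := by rw [ENNReal.one_rpow, ENNReal.one_rpow, mul_one, mul_one]

lemma small {n : ℕ} (hn : 1 ≤ n) {p q r α β γ a : ℝ}
    (hp : 1 ≤ p) (hq : 1 ≤ q) (hr : 0 < r) (ha0 : 0 < a) (ha1 : a ≤ 1)
    (hγ : -γ < (n : ℝ) / r) (hα : -α < (n : ℝ) / p) (hβ : -β < (n : ℝ) / q)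
    (hbal : γ + (n : ℝ) / r = a * (α - 1 + (n : ℝ) / p) + (1 - a) * (β + (n : ℝ) / q))
    (hΔ0 : 0 ≤ -γ + a * α + (1 - a) * β) (hΔa : -γ + a * α + (1 - a) * β ≤ a) :
    PIneq n p q r α β γ a ∨ (Norm n p q r α β γ ∧ α - 1 + (n:ℝ) / p ≠ β + n / q) := by
  obtain ⟨s, hs⟩ : ∃ s, s = 1 + q * (1 - 1 / p) := ⟨_, rfl⟩
  obtain ⟨δ, hδ⟩ : ∃ δ, δ = α + (s - 1) * β := ⟨_, rfl⟩
  rcases le_or_gt 1 (a * s) with has | has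
  · left; exact caseI hn hp hq hr ha0 ha1 hγ hbal hΔ0 hΔa hs has
  rcases lt_or_ge 0 (δ - 1 + n) with hD | hD
  · left; exact caseI' hn hp hq hr ha0 hbal hΔ0 hΔa hs has hδ hD
  right
  have hp0 : 0 < p := by linarith
  have hq0 : 0 < q := by linarith
  have hB : 0 < β + n / q := by linarith
  have e1 : δ - 1 + n = (α - 1 + n / p) + q * (1 - 1 / p) * (β + n / q) := by
    rw [hδ, hs]; field_simp; ring
  have hp1 : 0 ≤ 1 - 1 / p := by rw [sub_nonneg, div_le_one hp0]; exact hp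
  have hA : α - 1 + (n:ℝ) / p ≤ 0 := by
    have : 0 ≤ q * (1 - 1 / p) * (β + n / q) := by positivity
    linarith
  have hA' : p = 1 ∨ α - 1 + (n:ℝ) / p < 0 := by
    rcases eq_or_lt_of_le hp with h | h
    · left; exact h.symm
    · right
      have : 0 < 1 - 1 / p := by rw [sub_pos, div_lt_one hp0]; exact h
      have : 0 < q * (1 - 1 / p) * (β + n / q) := by positivity
      linarith
  have hAB : α - 1 + (n:ℝ) / p < β + n / q := by linarith
  exact ⟨caseII hn hp hq hr ha0 hγ hα hβ hbal hΔ0 hΔa hs has hδ hAB hA hA', hAB.ne⟩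

lemma half {n : ℕ} {p q r α β γ r' γ' : ℝ} (hr : 0 < r) (hrr : r < r') {S : Set (Eu n)} (hn : 1 ≤ n)
    (hS : MeasurableSet S) (h : Norm n p q r' α β γ')
    (hfin : ∫⁻ x in S, ‖x‖ₑ ^ ((γ - γ') * r * (r' / (r' - r))) < ∞) :
    ∃ C : ℝ≥0∞, C ≠ ∞ ∧ ∀ f : Eu n → ℝ, ContDiff ℝ 1 f → HasCompactSupport f →
      Ip α p f ≤ 1 → Iq β q f ≤ 1 → ∫⁻ x in S, (‖x‖ₑ ^ γ * ‖f x‖ₑ) ^ r ≤ C := by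
  obtain ⟨C, hC, H⟩ := h
  refine ⟨C + ∫⁻ x in S, ‖x‖ₑ ^ ((γ - γ') * r * (r' / (r' - r))),
    ENNReal.add_ne_top.2 ⟨hC, hfin.ne⟩, fun f hf hfc h1 h2 => ?_⟩
  calc _ ≤ ∫⁻ x in S, ((‖x‖ₑ ^ γ' * ‖f x‖ₑ) ^ r' + ‖x‖ₑ ^ ((γ - γ') * r * (r' / (r' - r)))) := by
        refine setLIntegral_mono_ae' hS ?_
        filter_upwards [ae_ne hn] with x hx _
        calc _ = ((‖x‖ₑ ^ γ' * ‖f x‖ₑ) ^ r * ‖x‖ₑ ^ ((γ - γ') * r)) := by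
              rw [ENNReal.rpow_mul, ← ENNReal.mul_rpow_of_nonneg _ _ hr.le]
              congr 1
              rw [show γ = γ' + (γ - γ') by ring, ENNReal.rpow_add _ _ (e0 hx) enorm_ne_top]
              ring_nf
          _ ≤ _ := young hr hrr _ _
          _ = _ := by rw [← ENNReal.rpow_mul]
    _ = (∫⁻ x in S, (‖x‖ₑ ^ γ' * ‖f x‖ₑ) ^ r') + _ := by
        rw [lintegral_add_right]
        fun_prop
    _ ≤ _ := by
        gcongr
        exact (setLIntegral_le_lintegral _ _).trans (H f hf hfc h1 h2)

lemma caseIII {n : ℕ} (hn : 1 ≤ n) {p q r α β γ a : ℝ}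
    (hp : 1 ≤ p) (hq : 1 ≤ q) (hr : 0 < r) (ha0 : 0 < a) (ha1 : a < 1)
    (hγ : -γ < (n : ℝ) / r) (hα : -α < (n : ℝ) / p) (hβ : -β < (n : ℝ) / q)
    (hbal : γ + (n : ℝ) / r = a * (α - 1 + (n : ℝ) / p) + (1 - a) * (β + (n : ℝ) / q))
    (hΔa : a < -γ + a * α + (1 - a) * β)
    (hAB : α - 1 + (n:ℝ) / p ≠ β + n / q) : Norm n p q r α β γ := by
  have hp0 : 0 < p := by linarith
  have hq0 : 0 < q := by linarith
  have hn0 : (0:ℝ) < n := by exact_mod_cast hn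
  obtain ⟨A, hA⟩ : ∃ A, A = α - 1 + (n:ℝ) / p := ⟨_, rfl⟩
  obtain ⟨B, hB⟩ : ∃ B, B = β + (n:ℝ) / q := ⟨_, rfl⟩
  rw [← hA, ← hB] at hbal hAB
  have hr1 : a * (1 / p) + (1 - a) * (1 / q) < 1 / r := by
    have e : (n:ℝ) * (1 / r) = n * (a * (1 / p) + (1 - a) * (1 / q)) +
      (-γ + a * α + (1 - a) * β - a) := by
      rw [hA, hB] at hbal
      simp only [mul_add, mul_comm (n:ℝ)] at *
      simp only [div_eq_mul_inv, one_mul] at *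
      linear_combination hbal
    nlinarith
  have ev : ∀ᶠ t in nhds a, 0 < t ∧ t < 1 ∧ t * (1 / p) + (1 - t) * (1 / q) < 1 / r ∧
      0 < t * A + (1 - t) * B := by
    refine (eventually_gt_nhds ha0).and ((eventually_lt_nhds ha1).and (Filter.Eventually.and ?_ ?_))
    · have c1 : Continuous fun t : ℝ => t * (1 / p) + (1 - t) * (1 / q) := by fun_prop
      exact (c1.tendsto a).eventually_lt_const hr1
    · have c1 : Continuous fun t : ℝ => t * A + (1 - t) * B := by fun_prop
      exact (c1.tendsto a).eventually_const_lt (by linarith)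
  obtain ⟨η, hη, H⟩ := Metric.eventually_nhds_iff.1 ev
  -- the key construction
  have key : ∀ t : ℝ, dist t a < η → ∃ r' γ', r < r' ∧ γ' + n / r' = t * A + (1 - t) * B ∧
      Norm n p q r' α β γ' := by
    intro t ht
    obtain ⟨t0, t1, t2, t3⟩ := H ht
    obtain ⟨θ, hθ⟩ : ∃ θ, θ = t * (1 / p) + (1 - t) * (1 / q) := ⟨_, rfl⟩
    have hθ0 : 0 < θ := by
      rw [hθ]
      have : 0 < 1 - t := by linarith
      positivity
    rw [← hθ] at t2
    have hr' : (n:ℝ) / (1 / θ) = n * θ := by field_simp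
    have hθn : (n:ℝ) * θ = t * (n / p) + (1 - t) * (n / q) := by rw [hθ]; ring
    have e1 : t * A + (1 - t) * B - n * θ + n / (1 / θ) = t * A + (1 - t) * B := by
      rw [hr']; ring
    have e2 : -(t * A + (1 - t) * B - n * θ) + t * α + (1 - t) * β = t := by
      rw [hθn, hA, hB]; ring
    refine ⟨1 / θ, t * A + (1 - t) * B - n * θ, ?_, e1, ?_⟩
    · rw [lt_one_div hr hθ0]; exact t2
    · rcases small hn hp hq (r := 1 / θ) (γ := t * A + (1 - t) * B - n * θ) (a := t) (by positivity)
        t0 t1.le (by rw [hr']; linarith) hα hβ (by rw [e1, hA, hB]) (by rw [e2]; exact t0.le)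
        (by rw [e2]) with h | h
      · exact h.norm hp hq (by positivity) t0 t1.le
      · exact h.1
  have key2 : ∃ r1 γ1 r2 γ2, r < r1 ∧ γ1 + n / r1 < γ + n / r ∧ Norm n p q r1 α β γ1 ∧
      r < r2 ∧ γ + n / r < γ2 + n / r2 ∧ Norm n p q r2 α β γ2 := by
    obtain ⟨r1, γ1, a1, b1, c1⟩ := key (a - η / 2) (by
      rw [Real.dist_eq, show a - η / 2 - a = -(η / 2) by ring, abs_neg, abs_of_pos (by linarith)]
      linarith)
    obtain ⟨r2, γ2, a2, b2, c2⟩ := key (a + η / 2) (by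
      rw [Real.dist_eq, show a + η / 2 - a = (η / 2) by ring, abs_of_pos (by linarith)]
      linarith)
    rcases lt_or_gt_of_ne hAB with h | h
    · exact ⟨r2, γ2, r1, γ1, a2, by rw [b2, hbal]; nlinarith, c2, a1, by rw [b1, hbal]; nlinarith, c1⟩
    · exact ⟨r1, γ1, r2, γ2, a1, by rw [b1, hbal]; nlinarith, c1, a2, by rw [b2, hbal]; nlinarith, c2⟩
  obtain ⟨r1, γ1, r2, γ2, a1, b1, c1, a2, b2, c2⟩ := key2
  have ex : ∀ r' γ', r < r' → (γ - γ') * r * (r' / (r' - r)) + n =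
      ((γ + n / r) - (γ' + n / r')) * (r * (r' / (r' - r))) := by
    intro r' γ' h
    have : r' - r ≠ 0 := by linarith
    have : 0 < r' := by linarith
    field_simp
    ring
  have po : ∀ r', r < r' → 0 < r * (r' / (r' - r)) := by
    intro r' h
    have : 0 < r' - r := by linarith
    have : 0 < r' := by linarith
    positivity
  have hm : MeasurableSet (Metric.ball (0 : Eu n) 1) := Metric.isOpen_ball.measurableSet
  obtain ⟨C1, hC1, H1⟩ := half (γ := γ) hr a1 hn hm c1 (fin_ball hn (by
    have := ex r1 γ1 a1
    have := po r1 a1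
    nlinarith))
  obtain ⟨C2, hC2, H2⟩ := half (γ := γ) hr a2 hn hm.compl c2 (fin_ext hn (by
    have := ex r2 γ2 a2
    have := po r2 a2
    nlinarith))
  refine ⟨C1 + C2, ENNReal.add_ne_top.2 ⟨hC1, hC2⟩, fun f hf hfc h1 h2 => ?_⟩
  rw [Iq, ← lintegral_add_compl _ hm]
  exact add_le_add (H1 f hf hfc h1 h2) (H2 f hf hfc h1 h2)

/-- exponential in the extended nonnegative reals -/
noncomputable def ee (t : ℝ) : ℝ≥0∞ := ENNReal.ofReal (Real.exp t)

lemma ee_add (s t : ℝ) : ee (s + t) = ee s * ee t := by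
  rw [ee, ee, ee, Real.exp_add, ENNReal.ofReal_mul (Real.exp_pos s).le]

lemma ee_rpow (t b : ℝ) : ee t ^ b = ee (t * b) := by
  rw [ee, ee, ENNReal.ofReal_rpow_of_pos (Real.exp_pos t), ← Real.exp_mul]

lemma ee_zero : ee 0 = 1 := by simp [ee]

lemma exists_ee {P : ℝ≥0∞} (h0 : P ≠ 0) (h1 : P ≠ ∞) : ∃ t, P = ee t := by
  refine ⟨Real.log P.toReal, ?_⟩
  rw [ee, Real.exp_log (ENNReal.toReal_pos h0 h1), ENNReal.ofReal_toReal h1]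

lemma scaleI {n : ℕ} {α p : ℝ} (hn : 1 ≤ n) (hp : 0 < p) (F : Eu n → ℝ≥0∞) (u v : ℝ) :
    ∫⁻ x, (‖x‖ₑ ^ α * (ee v * F (Real.exp u • x))) ^ p =
      ee (p * v - (α * p + n) * u) * ∫⁻ x, (‖x‖ₑ ^ α * F x) ^ p := by
  have hd := lintegral_dil (fun x : Eu n => (‖x‖ₑ ^ α * F x) ^ p) (Real.exp_pos u)
  change _ = ee u ^ (-(n:ℝ)) * _ at hd
  rw [ee_rpow] at hd
  rw [show p * v - (α * p + n) * u = (p * v - α * p * u) + u * (-(n:ℝ)) by ring, ee_add, mul_assoc,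
    ← hd,
    ← lintegral_const_mul' _ _ (show ee (p * v - α * p * u) ≠ ∞ from ENNReal.ofReal_ne_top)]
  refine lintegral_congr_ae ?_
  filter_upwards [ae_ne hn] with x hx
  have e1 : ‖Real.exp u • x‖ₑ = ee u * ‖x‖ₑ := by
    rw [enorm_smul, Real.enorm_eq_ofReal (Real.exp_pos u).le]; rfl
  have e2 : (ee u * ‖x‖ₑ) ^ α = ee (u * α) * ‖x‖ₑ ^ α := by
    rw [ENNReal.mul_rpow_of_ne_top (show ee u ≠ ∞ from ENNReal.ofReal_ne_top) enorm_ne_top, ee_rpow]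
  have e3 : ee (p * v - α * p * u) = (ee (v - α * u)) ^ p := by
    rw [ee_rpow]; congr 1; ring
  rw [e1, e2, e3, ← ENNReal.mul_rpow_of_nonneg _ _ hp.le]
  congr 1
  rw [show v = (v - α * u) + u * α by ring, ee_add, show v - α * u + u * α - α * u = v - α * u by ring]
  ring

lemma scale_prod {n : ℕ} (hn : 1 ≤ n) {p q r α β γ a : ℝ}
    (hp : 1 ≤ p) (hq : 1 ≤ q) (hr : 0 < r)
    (hα : -α < (n : ℝ) / p) (hβ : -β < (n : ℝ) / q)
    (hbal : γ + (n : ℝ) / r = a * (α - 1 + (n : ℝ) / p) + (1 - a) * (β + (n : ℝ) / q))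
    (hAB : α - 1 + (n:ℝ) / p ≠ β + n / q) (H : Norm n p q r α β γ) : PIneq n p q r α β γ a := by
  have hp0 : 0 < p := by linarith
  have hq0 : 0 < q := by linarith
  have hn0 : (0:ℝ) < n := by exact_mod_cast hn
  obtain ⟨C, hC, H⟩ := H
  refine ⟨C ^ (1 / r), ENNReal.rpow_ne_top_of_nonneg (by positivity) hC, fun f hf hfc => ?_⟩
  have hz : (∀ᵐ x, f x = 0) → Iq γ r f = 0 := by
    intro h
    rw [Iq, ← lintegral_zero (μ := (volume : Measure (Eu n)))]
    refine lintegral_congr_ae ?_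
    filter_upwards [h] with x hx
    simp [hx, hr]
  have hzero : (∀ᵐ x, f x = 0) →
      Iq γ r f ^ (1 / r) ≤ C ^ (1 / r) * Ip α p f ^ (a / p) * Iq β q f ^ ((1 - a) / q) := by
    intro h
    rw [hz h, ENNReal.zero_rpow_of_pos (by positivity)]
    exact zero_le
  have wne : ∀ x : Eu n, x ≠ 0 → ∀ d : ℝ, ‖x‖ₑ ^ d ≠ 0 := by
    intro x hx d h
    rcases ENNReal.rpow_eq_zero_iff.1 h with h | h
    · exact e0 hx h.1
    · exact enorm_ne_top h.1
  by_cases hQ : Iq β q f = 0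
  · refine hzero ?_
    rw [Iq, lintegral_eq_zero_iff (by have := hf.continuous; fun_prop)] at hQ
    filter_upwards [hQ, ae_ne hn] with x hx hx0
    have := (ENNReal.rpow_eq_zero_iff_of_pos hq0).1 hx
    simpa [wne x hx0 β] using this
  by_cases hP : Ip α p f = 0
  · refine hzero ?_
    have mf : Measurable fun x => ‖fderiv ℝ f x‖ₑ :=
      (hf.continuous_fderiv one_ne_zero).enorm.measurable
    rw [Ip, lintegral_eq_zero_iff (by fun_prop)] at hP
    have h1 := hardy hn hn0 hf hfc
    have h2 : ∫⁻ x, ‖x‖ₑ ^ ((n:ℝ) - n + 1) * ‖fderiv ℝ f x‖ₑ = 0 := by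
      rw [lintegral_eq_zero_iff (by fun_prop)]
      filter_upwards [hP, ae_ne hn] with x hx hx0
      have := (ENNReal.rpow_eq_zero_iff_of_pos hp0).1 hx
      rw [mul_eq_zero] at this
      have h3 := this.resolve_left (wne x hx0 α)
      simp only [h3, mul_zero, Pi.zero_apply]
    rw [h2, mul_zero] at h1
    have h3 := le_antisymm h1 zero_le
    rw [lintegral_eq_zero_iff (by have := hf.continuous; fun_prop)] at h3
    filter_upwards [h3] with x hx
    simpa using hx
  obtain ⟨x, hx⟩ := exists_ee hP (Ip_fin hn hp0 hα hf hfc).ne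
  obtain ⟨y, hy⟩ := exists_ee hQ (Iq_fin hn hq0 hβ hf.continuous hfc).ne
  obtain ⟨A, hA⟩ : ∃ A, A = α - 1 + (n:ℝ) / p := ⟨_, rfl⟩
  obtain ⟨B, hB⟩ : ∃ B, B = β + (n:ℝ) / q := ⟨_, rfl⟩
  obtain ⟨G, hG⟩ : ∃ G, G = γ + (n:ℝ) / r := ⟨_, rfl⟩
  rw [← hA, ← hB, ← hG] at hbal
  rw [← hA, ← hB] at hAB
  have hAB' : A - B ≠ 0 := sub_ne_zero.2 hAB
  obtain ⟨u, hu⟩ : ∃ u, u = (x / p - y / q) / (A - B) := ⟨_, rfl⟩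
  obtain ⟨v, hv⟩ : ∃ v, v = A * u - x / p := ⟨_, rfl⟩
  have hu' : (A - B) * u = x / p - y / q := by rw [hu]; field_simp
  have hv' : v = B * u - y / q := by rw [hv]; linarith
  set g : Eu n → ℝ := fun z => Real.exp v * f (Real.exp u • z) with hg
  have gc : ContDiff ℝ 1 g := contDiff_const.mul (hf.comp (contDiff_const_smul _))
  have gs : HasCompactSupport g :=
    (hfc.comp_homeomorph (Homeomorph.smulOfNeZero (Real.exp u) (Real.exp_pos u).ne')).mul_left
  have ge : ∀ z, ‖g z‖ₑ = ee v * ‖f (Real.exp u • z)‖ₑ := by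
    intro z
    rw [hg, enorm_mul, Real.enorm_eq_ofReal (Real.exp_pos v).le]; rfl
  have gd : ∀ z, ‖fderiv ℝ g z‖ₑ = ee (v + u) * ‖fderiv ℝ f (Real.exp u • z)‖ₑ := by
    intro z
    have e1 : fderiv ℝ g z = Real.exp v • (Real.exp u • fderiv ℝ f (Real.exp u • z)) := by
      have d0 : DifferentiableAt ℝ (fun z => f (Real.exp u • z)) z :=
        (hf.comp (contDiff_const_smul _)).differentiable one_ne_zero z
      rw [hg, fderiv_const_mul d0, fderiv_comp_smul]
    rw [e1, enorm_smul, enorm_smul, ee_add, Real.enorm_eq_ofReal (Real.exp_pos v).le,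
      Real.enorm_eq_ofReal (Real.exp_pos u).le, mul_assoc]
    rfl
  have I1 : Ip α p g = 1 := by
    have h1 : Ip α p g = ee (p * (v + u) - (α * p + n) * u) * Ip α p f := by
      rw [Ip, Ip, ← scaleI hn hp0]
      simp only [gd]
    rw [h1, hx, ← ee_add, ← ee_zero]
    congr 1
    rw [hv, hA]; field_simp; ring
  have I2 : Iq β q g = 1 := by
    have h1 : Iq β q g = ee (q * v - (β * q + n) * u) * Iq β q f := by
      rw [Iq, Iq, ← scaleI hn hq0]
      simp only [ge]
    rw [h1, hy, ← ee_add, ← ee_zero]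
    congr 1
    rw [hv', hB]; field_simp; ring
  have I3 : Iq γ r g = ee (r * v - (γ * r + n) * u) * Iq γ r f := by
    rw [Iq, Iq, ← scaleI hn hr]
    simp only [ge]
  have h4 := H g gc gs I1.le I2.le
  rw [I3] at h4
  have h5 : Iq γ r f ≤ C * ee (-(r * v - (γ * r + n) * u)) := by
    calc Iq γ r f = ee (-(r * v - (γ * r + n) * u)) * (ee (r * v - (γ * r + n) * u) * Iq γ r f) := by
          rw [← mul_assoc, ← ee_add, neg_add_cancel, ee_zero, one_mul]
      _ ≤ ee (-(r * v - (γ * r + n) * u)) * C := by gcongr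
      _ = _ := mul_comm _ _
  calc _ ≤ (C * ee (-(r * v - (γ * r + n) * u))) ^ (1 / r) := by gcongr
    _ = C ^ (1 / r) * (ee (x * (a / p)) * ee (y * ((1 - a) / q))) := by
        rw [ENNReal.mul_rpow_of_nonneg _ _ (by positivity), ee_rpow, ← ee_add]
        congr 2
        have e1 : -(r * v - (γ * r + n) * u) * (1 / r) = G * u - v := by
          rw [hG]; field_simp; ring
        rw [e1, hbal]
        have e2 : x * (a / p) = a * (x / p) := by ring
        have e3 : y * ((1 - a) / q) = (1 - a) * (y / q) := by ring
        rw [e2, e3]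
        linear_combination (-a) * hv - (1 - a) * hv'
    _ = _ := by rw [hx, hy, ee_rpow, ee_rpow, mul_assoc]

lemma main {n : ℕ} (hn : 1 ≤ n) {p q r α β γ a : ℝ}
    (hp : 1 ≤ p) (hq : 1 ≤ q) (hr : 0 < r) (ha0 : 0 < a) (ha1 : a ≤ 1)
    (hγ : -γ < (n : ℝ) / r) (hα : -α < (n : ℝ) / p) (hβ : -β < (n : ℝ) / q)
    (hbal : γ + (n : ℝ) / r = a * (α - 1 + (n : ℝ) / p) + (1 - a) * (β + (n : ℝ) / q))
    (hΔ0 : 0 ≤ -γ + a * α + (1 - a) * β)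
    (hΔa : 1 / r + γ / (n : ℝ) = 1 / p + (α - 1) / (n : ℝ) → -γ + a * α + (1 - a) * β ≤ a) :
    PIneq n p q r α β γ a := by
  have hn0 : (0:ℝ) < n := by exact_mod_cast hn
  rcases le_or_gt (-γ + a * α + (1 - a) * β) a with h | h
  · rcases small hn hp hq hr ha0 ha1 hγ hα hβ hbal hΔ0 h with h | h
    · exact h
    · exact scale_prod hn hp hq hr hα hβ hbal h.2 h.1
  · have hne : γ + (n:ℝ) / r ≠ α - 1 + (n:ℝ) / p := by
      intro e
      refine absurd (hΔa ?_) (not_le.2 h)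
      have hp0 : 0 < p := by linarith
      have e1 : 1 / r + γ / (n : ℝ) = (γ + (n:ℝ) / r) / n := by field_simp; ring
      have e2 : 1 / p + (α - 1) / (n : ℝ) = (α - 1 + (n:ℝ) / p) / n := by field_simp; ring
      rw [e1, e2, e]
    have hAB : α - 1 + (n:ℝ) / p ≠ β + n / q := by
      intro e
      apply hne
      rw [hbal, ← e]; ring
    have ha : a < 1 := by
      refine lt_of_le_of_ne ha1 fun e => hne ?_
      rw [hbal, e]; ring
    exact scale_prod hn hp hq hr hα hβ hbal hAB
      (caseIII hn hp hq hr ha0 ha hγ hα hβ hbal h hAB)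

lemma conv {n : ℕ} (hn : 1 ≤ n) {α p : ℝ} (hp : 0 < p) {F : Eu n → ℝ} (hF : ∀ x, 0 ≤ F x)
    (hm : Measurable F) :
    ∫ x, ‖x‖ ^ (α * p) * F x ^ p = (∫⁻ x, (‖x‖ₑ ^ α * ENNReal.ofReal (F x)) ^ p).toReal := by
  rw [integral_eq_lintegral_of_nonneg_ae
    (Filter.Eventually.of_forall fun x => mul_nonneg (Real.rpow_nonneg (norm_nonneg x) _)
      (Real.rpow_nonneg (hF x) _)) (by fun_prop)]
  congr 1
  refine lintegral_congr_ae ?_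
  filter_upwards [ae_ne hn] with x hx
  rw [ENNReal.mul_rpow_of_nonneg _ _ hp.le, ← ENNReal.rpow_mul,
    ENNReal.ofReal_mul (Real.rpow_nonneg (norm_nonneg x) _), ← ofReal_norm,
    ENNReal.ofReal_rpow_of_pos (norm_pos_iff.2 hx), ENNReal.ofReal_rpow_of_nonneg (hF x) hp.le]

end CKN

end CKNLemmas

/-- Caffarelli–Kohn–Nirenberg inequalities on ℝⁿ (sufficiency direction). -/

theorem stmt_4 (n : ℕ) (hn : 1 ≤ n) (p q r α β γ a : ℝ)
    (hp : 1 ≤ p) (hq : 1 ≤ q) (hr : 0 < r) (ha0 : 0 < a) (ha1 : a ≤ 1)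
    (hγ : -γ < (n : ℝ) / r) (hα : -α < (n : ℝ) / p) (hβ : -β < (n : ℝ) / q)
    (hbal : γ + (n : ℝ) / r =
      a * (α - 1 + (n : ℝ) / p) + (1 - a) * (β + (n : ℝ) / q))
    (hΔ0 : 0 ≤ -γ + a * α + (1 - a) * β)
    (hΔa : 1 / r + γ / (n : ℝ) = 1 / p + (α - 1) / (n : ℝ) →
      -γ + a * α + (1 - a) * β ≤ a) :
    ∃ c : ℝ, 0 < c ∧ ∀ f : EuclideanSpace ℝ (Fin n) → ℝ,
      ContDiff ℝ (⊤ : ℕ∞) f → HasCompactSupport f →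
      (∫ x, ‖x‖ ^ (γ * r) * |f x| ^ r) ^ (1 / r) ≤
        c * (∫ x, ‖x‖ ^ (α * p) * ‖gradient f x‖ ^ p) ^ (a / p) *
          (∫ x, ‖x‖ ^ (β * q) * |f x| ^ q) ^ ((1 - a) / q) := by
  have hp0 : 0 < p := by linarith
  have hq0 : 0 < q := by linarith
  obtain ⟨C, hC, H⟩ := CKN.main hn hp hq hr ha0 ha1 hγ hα hβ hbal hΔ0 hΔa
  refine ⟨C.toReal + 1, by positivity, fun f hf hfc => ?_⟩
  have hf1 : ContDiff ℝ 1 f := hf.of_le (by exact_mod_cast le_top)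
  have hfa : Measurable fun x => |f x| := hf1.continuous.abs.measurable
  have hgr : ∀ x, ‖gradient f x‖ = ‖fderiv ℝ f x‖ := fun x => by
    rw [gradient, LinearIsometryEquiv.norm_map]
  have hfd : Measurable fun x => ‖fderiv ℝ f x‖ :=
    (hf1.continuous_fderiv one_ne_zero).norm.measurable
  simp only [hgr]
  rw [CKN.conv hn hr (fun x => abs_nonneg _) hfa, CKN.conv hn hq0 (fun x => abs_nonneg _) hfa,
    CKN.conv hn hp0 (fun x => norm_nonneg _) hfd]
  simp only [← Real.enorm_eq_ofReal_abs, ofReal_norm]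
  change (CKN.Iq γ r f).toReal ^ (1 / r) ≤ _ * (CKN.Ip α p f).toReal ^ (a / p) *
    (CKN.Iq β q f).toReal ^ ((1 - a) / q)
  have h := H f hf1 hfc
  have f1 := (CKN.Ip_fin hn hp0 hα hf1 hfc).ne
  have f2 := (CKN.Iq_fin hn hq0 hβ hf1.continuous hfc).ne
  have ha' : 0 ≤ (1 - a) / q := div_nonneg (by linarith) hq0.le
  have f3 : C * CKN.Ip α p f ^ (a / p) * CKN.Iq β q f ^ ((1 - a) / q) ≠ ⊤ :=
    ENNReal.mul_ne_top (ENNReal.mul_ne_top hC (ENNReal.rpow_ne_top_of_nonneg (by positivity) f1))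
      (ENNReal.rpow_ne_top_of_nonneg ha' f2)
  have h2 := ENNReal.toReal_mono f3 h
  rw [ENNReal.toReal_mul, ENNReal.toReal_mul, ← ENNReal.toReal_rpow, ← ENNReal.toReal_rpow,
    ← ENNReal.toReal_rpow] at h2
  refine h2.trans ?_
  gcongr
  linarith
end
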